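/- Let φ be a meromorphic Jacobi form of weight k and index m with poles supported on S, all poles of order at most 2. Then: (1) h_{ℓ+2m} = h_ℓ for all ℓ ∈ ℤ, and for all τ ∈ ℍ and all z ∈ ℂ with z ≠ z_s for every s ∈ S one has φ(τ,z) = φ^F(τ,z) + ∑_{s ∈ S/ℤ²} ( D_s(τ)·A^s_m(τ,z) + E_s(τ)·B^s_m(τ,z) ); (2) the completed finite part φ̂^F(τ,z) := ∑_{ℓ=0}^{2m−1} ĥ_ℓ(τ)·θ_{m,ℓ}(τ,z), where ĥ_ℓ := h_ℓ − ∑_{s ∈ S/ℤ²} ( D_s·Θ^{s,*}_{m,ℓ} + m·E_s·ϑ^{s,*}_{m,ℓ} ), satisfies the weight-k index-m modular law for every element of SL(2,ℤ). -/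

import Mathlib

noncomputable section

open Complex Filter Topology MeasureTheory
open scoped Classical

/-- `ee x = e^{2πix}`. -/
def ee (x : ℂ) : ℂ := Complex.exp (2 * (Real.pi : ℂ) * Complex.I * x)

/-- The index-`m` elliptic transformation law on `ℍ × ℂ`. -/
def EllipticLaw (m : ℕ) (φ : ℂ → ℂ → ℂ) : Prop :=
  ∀ τ : ℂ, 0 < τ.im → ∀ z : ℂ, ∀ lam mu : ℤ,
    φ τ (z + (lam : ℂ) * τ + (mu : ℂ)) =
      ee (-(m : ℂ) * ((lam : ℂ) ^ 2 * τ + 2 * (lam : ℂ) * z)) * φ τ z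

/-- The weight-`k` index-`m` modular transformation law on `ℍ × ℂ`. -/
def ModularLaw (k : ℤ) (m : ℕ) (φ : ℂ → ℂ → ℂ) : Prop :=
  ∀ τ : ℂ, 0 < τ.im → ∀ z : ℂ, ∀ a b c d : ℤ, a * d - b * c = 1 →
    φ (((a : ℂ) * τ + (b : ℂ)) / ((c : ℂ) * τ + (d : ℂ))) (z / ((c : ℂ) * τ + (d : ℂ))) =
      ((c : ℂ) * τ + (d : ℂ)) ^ k *
        ee ((m : ℂ) * (c : ℂ) * z ^ 2 / ((c : ℂ) * τ + (d : ℂ))) * φ τ z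

/-- The theta function `θ_{m,ℓ}(τ,z) = ∑_{r ≡ ℓ (mod 2m)} q^{r²/4m} y^r`. -/
def jTheta (m : ℕ) (l : ℤ) (τ z : ℂ) : ℂ :=
  ∑' n : ℤ, ee (((l : ℂ) + 2 * (m : ℂ) * (n : ℂ)) ^ 2 / (4 * (m : ℂ)) * τ +
      ((l : ℂ) + 2 * (m : ℂ) * (n : ℂ)) * z)

/-- The point `z_s = ατ + β` for `s = (α,β) ∈ ℚ²`. -/
def zpt (s : ℚ × ℚ) (τ : ℂ) : ℂ := (s.1 : ℚ) * τ + (s.2 : ℚ)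

/-- A meromorphic Jacobi form of weight `k` and index `m` with poles supported on `S`. -/
structure MeroJacobiForm (k : ℤ) (m : ℕ) (S : Set (ℚ × ℚ)) where
  toFun : ℂ → ℂ → ℂ
  lattice_inv : ∀ s ∈ S, ∀ lam mu : ℤ, (s.1 + (lam : ℚ), s.2 + (mu : ℚ)) ∈ S
  sl_inv : ∀ s ∈ S, ∀ a b c d : ℤ, a * d - b * c = 1 →
      (s.1 * (a : ℚ) + s.2 * (c : ℚ), s.1 * (b : ℚ) + s.2 * (d : ℚ)) ∈ S
  finite_classes : Set.Finite {s : ℚ × ℚ | s ∈ S ∧ 0 ≤ s.1 ∧ s.1 < 1 ∧ 0 ≤ s.2 ∧ s.2 < 1}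
  elliptic : EllipticLaw m toFun
  modular : ModularLaw k m toFun
  holo : ∀ τ : ℂ, 0 < τ.im → ∀ z : ℂ, (∀ s ∈ S, z ≠ zpt s τ) →
      DifferentiableAt ℂ (fun p : ℂ × ℂ => toFun p.1 p.2) (τ, z)
  merom : ∀ τ : ℂ, 0 < τ.im → ∀ s ∈ S, ∃ (g : ℂ → ℂ) (nn : ℕ), AnalyticAt ℂ g (zpt s τ) ∧
      ∀ᶠ z in 𝓝[≠] (zpt s τ), toFun τ z = g z / (z - zpt s τ) ^ nn

/-- All poles of `Φ` have order at most 2. -/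
def HasAtMostDoublePoles {k : ℤ} {m : ℕ} {S : Set (ℚ × ℚ)} (Φ : MeroJacobiForm k m S) : Prop :=
  ∀ τ : ℂ, 0 < τ.im → ∀ s ∈ S, ∃ g : ℂ → ℂ, AnalyticAt ℂ g (zpt s τ) ∧
    ∀ᶠ z in 𝓝[≠] (zpt s τ), Φ.toFun τ z = g z / (z - zpt s τ) ^ 2

/-- `E s` and `D s` are the Laurent data of `φ` at `z_s`, i.e.
`e(mα z_s)·φ(τ, z_s+ε) = E_s(τ)/(2πiε)² + (D_s(τ) - 2mα·E_s(τ))/(2πiε) + O(1)` as `ε → 0`. -/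
def IsLaurentData (m : ℕ) (S : Set (ℚ × ℚ)) (φ : ℂ → ℂ → ℂ) (E D : ℚ × ℚ → ℂ → ℂ) : Prop :=
  ∀ s ∈ S, ∀ τ : ℂ, 0 < τ.im →
    Filter.Tendsto (fun ε : ℂ =>
        (2 * (Real.pi : ℂ) * Complex.I * ε) ^ 2 * ee ((m : ℂ) * (s.1 : ℚ) * zpt s τ) *
          φ τ (zpt s τ + ε))
      (𝓝[≠] (0 : ℂ)) (𝓝 (E s τ)) ∧
    Filter.Tendsto (fun ε : ℂ =>
        2 * (Real.pi : ℂ) * Complex.I * ε *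
          (ee ((m : ℂ) * (s.1 : ℚ) * zpt s τ) * φ τ (zpt s τ + ε) -
            E s τ / (2 * (Real.pi : ℂ) * Complex.I * ε) ^ 2))
      (𝓝[≠] (0 : ℂ)) (𝓝 (D s τ - 2 * (m : ℂ) * (s.1 : ℚ) * E s τ))

/-- All poles of `Φ` are simple (order at most 1). -/
def HasSimplePoles {k : ℤ} {m : ℕ} {S : Set (ℚ × ℚ)} (Φ : MeroJacobiForm k m S) : Prop :=
  ∀ τ : ℂ, 0 < τ.im → ∀ s ∈ S, ∃ g : ℂ → ℂ, AnalyticAt ℂ g (zpt s τ) ∧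
    ∀ᶠ z in 𝓝[≠] (zpt s τ), Φ.toFun τ z = g z / (z - zpt s τ)

/-- `h` is the family of canonical Fourier coefficients of `φ`:
`h_ℓ(τ) = q^{ℓ²/4m}·(1/2)·lim_{ε→0⁺} [∫₀¹ φ(τ, x+iε-ℓτ/2m) e(-ℓ(x+iε)) dx
  + ∫₀¹ φ(τ, x-iε-ℓτ/2m) e(-ℓ(x-iε)) dx]`. -/
def IsCanonCoeff (m : ℕ) (φ : ℂ → ℂ → ℂ) (h : ℤ → ℂ → ℂ) : Prop :=
  ∀ l : ℤ, ∀ τ : ℂ, 0 < τ.im →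
    Filter.Tendsto (fun ε : ℝ =>
        (1 / 2 : ℂ) *
          ((∫ x in (0:ℝ)..1,
              φ τ ((x : ℂ) + (ε : ℂ) * Complex.I - (l : ℂ) * τ / (2 * (m : ℂ))) *
                ee (-(l : ℂ) * ((x : ℂ) + (ε : ℂ) * Complex.I))) +
            ∫ x in (0:ℝ)..1,
              φ τ ((x : ℂ) - (ε : ℂ) * Complex.I - (l : ℂ) * τ / (2 * (m : ℂ))) *
                ee (-(l : ℂ) * ((x : ℂ) - (ε : ℂ) * Complex.I))))
      (𝓝[>] (0 : ℝ)) (𝓝 (ee (-(l : ℂ) ^ 2 * τ / (4 * (m : ℂ))) * h l τ))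

/-- `D s τ = 2πi·e(mα z_s)·Res_{z=z_s} φ(τ,z)`, characterized via the limit defining the
residue at a simple pole. -/
def IsResidueFactor (m : ℕ) (S : Set (ℚ × ℚ)) (φ : ℂ → ℂ → ℂ) (D : ℚ × ℚ → ℂ → ℂ) : Prop :=
  ∀ s ∈ S, ∀ τ : ℂ, 0 < τ.im →
    Filter.Tendsto (fun z : ℂ =>
        2 * (Real.pi : ℂ) * Complex.I * ee ((m : ℂ) * (s.1 : ℚ) * zpt s τ) *
          ((z - zpt s τ) * φ τ z))
      (𝓝[≠] (zpt s τ)) (𝓝 (D s τ))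

/-- The rational function `R_c`. -/
def Rc (c : ℝ) (y : ℂ) : ℂ :=
  if (⌈c⌉ : ℝ) = c then 1 / 2 * y ^ ⌈c⌉ * (y + 1) / (y - 1) else y ^ ⌈c⌉ / (y - 1)

/-- The index-`m` averaging operator `Av^{(m)}[F](τ,z) = ∑_{λ∈ℤ} q^{mλ²} y^{2mλ} F(q^λ y)`. -/
def Av (m : ℕ) (F : ℂ → ℂ) (τ z : ℂ) : ℂ :=
  ∑' lam : ℤ, ee ((m : ℂ) * (lam : ℂ) ^ 2 * τ + 2 * (m : ℂ) * (lam : ℂ) * z) *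
      F (ee ((lam : ℂ) * τ + z))

/-- The Appell–Lerch sum `A^s_m(τ,z) = e(-mα z_s)·Av^{(m)}[R_{-2mα}(y/y_s)]`. -/
def AppellA (m : ℕ) (s : ℚ × ℚ) (τ z : ℂ) : ℂ :=
  ee (-(m : ℂ) * (s.1 : ℚ) * zpt s τ) *
    Av m (fun w => Rc ((-(2 * (m : ℚ) * s.1) : ℚ) : ℝ) (w / ee (zpt s τ))) τ z

/-- The rational function `R_c^{(2)}(y) = y^{⌊c⌋+1}·(1/(y-1)² + (c-⌊c⌋)/(y-1))`. -/
def Rc2 (c : ℝ) (y : ℂ) : ℂ :=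
  y ^ (⌊c⌋ + 1) * (1 / (y - 1) ^ 2 + ((c : ℂ) - (⌊c⌋ : ℂ)) / (y - 1))

/-- The second Appell–Lerch sum `B^s_m(τ,z) = e(-mα z_s)·Av^{(m)}[R^{(2)}_{-2mα}(y/y_s)]`. -/
def AppellB (m : ℕ) (s : ℚ × ℚ) (τ z : ℂ) : ℂ :=
  ee (-(m : ℂ) * (s.1 : ℚ) * zpt s τ) *
    Av m (fun w => Rc2 ((-(2 * (m : ℚ) * s.1) : ℚ) : ℝ) (w / ee (zpt s τ))) τ z

/-- The finite part `φ^F(τ,z) = ∑_{ℓ=0}^{2m-1} h_ℓ(τ)·θ_{m,ℓ}(τ,z)`. -/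
def finitePart (m : ℕ) (h : ℤ → ℂ → ℂ) (τ z : ℂ) : ℂ :=
  ∑ l ∈ Finset.range (2 * m), h (l : ℤ) τ * jTheta m (l : ℤ) τ z

/-- `T` is a set of representatives for `S/ℤ²`. -/
def IsRepSet (S : Set (ℚ × ℚ)) (T : Finset (ℚ × ℚ)) : Prop :=
  (↑T : Set (ℚ × ℚ)) ⊆ S ∧
    ∀ s ∈ S, ∃! t : ℚ × ℚ, t ∈ T ∧ ∃ lam mu : ℤ, s.1 = t.1 + (lam : ℚ) ∧ s.2 = t.2 + (mu : ℚ)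

/-- The complementary error function. -/
def erfc (x : ℝ) : ℝ := 2 / Real.sqrt Real.pi * ∫ t in Set.Ioi x, Real.exp (-t ^ 2)

/-- The element `λ = n + α + ℓ/2m` of `ℤ + α + ℓ/2m`. -/
def lamVal (m : ℕ) (s : ℚ × ℚ) (l : ℤ) (n : ℤ) : ℝ :=
  (n : ℝ) + (s.1 : ℝ) + (l : ℝ) / (2 * (m : ℝ))

/-- The Eichler integral `Θ^{s,*}_{m,ℓ}(τ)` of the weight-3/2 unary theta series. -/
def ThStar (m : ℕ) (s : ℚ × ℚ) (l : ℤ) (τ : ℂ) : ℂ :=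
  ee ((m : ℂ) * (s.1 : ℚ) * (s.2 : ℚ)) / 2 *
    ∑' n : ℤ, (Real.sign (lamVal m s l n) : ℂ) *
      ee (-(2 * (m : ℂ) * (s.2 : ℚ) * (lamVal m s l n : ℝ))) *
      (erfc (2 * |lamVal m s l n| * Real.sqrt (Real.pi * (m : ℝ) * τ.im)) : ℂ) *
      ee (-(m : ℂ) * (lamVal m s l n : ℝ) ^ 2 * τ)

/-- The weight-1/2 unary theta series `ϑ^s_{m,ℓ}(τ)`. -/
def thS (m : ℕ) (s : ℚ × ℚ) (l : ℤ) (τ : ℂ) : ℂ :=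
  ee (-(m : ℂ) * (s.1 : ℚ) * (s.2 : ℚ)) *
    ∑' n : ℤ, ee (2 * (m : ℂ) * (s.2 : ℚ) * (lamVal m s l n : ℝ)) *
      ee ((m : ℂ) * (lamVal m s l n : ℝ) ^ 2 * τ)

/-- The Eichler integral `ϑ^{s,*}_{m,ℓ}(τ)` of the weight-1/2 unary theta series. -/
def thSstar (m : ℕ) (s : ℚ × ℚ) (l : ℤ) (τ : ℂ) : ℂ :=
  (starRingEnd ℂ) (thS m s l τ) / ((2 * Real.pi * Real.sqrt ((m : ℝ) * τ.im) : ℝ) : ℂ) -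
    ee ((m : ℂ) * (s.1 : ℚ) * (s.2 : ℚ)) *
      ∑' n : ℤ, (|lamVal m s l n| : ℝ) *
        ee (-(2 * (m : ℂ) * (s.2 : ℚ) * (lamVal m s l n : ℝ))) *
        (erfc (2 * |lamVal m s l n| * Real.sqrt (Real.pi * (m : ℝ) * τ.im)) : ℂ) *
        ee (-(m : ℂ) * (lamVal m s l n : ℝ) ^ 2 * τ)

lemma ee_add (x y : ℂ) : ee (x + y) = ee x * ee y := by
  simp only [ee, ← Complex.exp_add]; congr 1; ring

lemma ee_zero : ee 0 = 1 := by simp [ee]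

lemma ee_ne_zero (x : ℂ) : ee x ≠ 0 := Complex.exp_ne_zero _

lemma ee_int (n : ℤ) : ee (n : ℂ) = 1 := by
  unfold ee
  rw [Complex.exp_eq_one_iff]
  exact ⟨n, by ring⟩

lemma ee_add_int (x : ℂ) (n : ℤ) : ee (x + n) = ee x := by
  rw [ee_add, ee_int, mul_one]

lemma ee_neg (x : ℂ) : ee (-x) = (ee x)⁻¹ := by
  simp only [ee, ← Complex.exp_neg]; congr 1; ring

lemma ee_sub (x y : ℂ) : ee (x - y) = ee x / ee y := by
  rw [sub_eq_add_neg, ee_add, ee_neg, div_eq_mul_inv]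

lemma ee_zpow (x : ℂ) (n : ℤ) : ee x ^ n = ee (n * x) := by
  simp only [ee, ← Complex.exp_int_mul]; congr 1; ring

lemma norm_ee (x : ℂ) : ‖ee x‖ = Real.exp (-(2 * Real.pi * x.im)) := by
  unfold ee
  rw [Complex.norm_exp]
  congr 1
  simp

lemma differentiable_ee : Differentiable ℂ ee := by
  unfold ee; fun_prop

lemma continuous_ee : Continuous ee := differentiable_ee.continuous

lemma ee_ne_one_of_im {x : ℂ} (h : x.im ≠ 0) : ee x ≠ 1 := by
  intro h1
  have := norm_ee x
  rw [h1, norm_one] at this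
  have h2 := (Real.exp_eq_one_iff _).1 this.symm
  have := Real.pi_pos
  apply h
  have h3 : 2 * Real.pi * x.im = 0 := by linarith
  rcases mul_eq_zero.1 h3 with h4 | h4
  · linarith
  · exact h4

lemma ee_eq_one_iff (x : ℂ) : ee x = 1 ↔ ∃ n : ℤ, x = n := by
  constructor
  · intro h
    unfold ee at h
    obtain ⟨n, hn⟩ := Complex.exp_eq_one_iff.1 h
    refine ⟨n, ?_⟩
    have h2 : (2 * (Real.pi : ℂ) * Complex.I) ≠ 0 := Complex.two_pi_I_ne_zero
    apply mul_left_cancel₀ h2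
    rw [hn]; ring
  · rintro ⟨n, rfl⟩; exact ee_int n

lemma continuous_line (w : ℂ) : Continuous (fun x : ℝ => (x : ℂ) + w) := by fun_prop

/-- Independence of the base point for line integrals of entire periodic functions. -/
lemma line_indep (g : ℂ → ℂ) (hg : Differentiable ℂ g) (hp : ∀ z, g (z + 1) = g z) (w : ℂ) :
    ∫ x in (0:ℝ)..1, g (x + w) = ∫ x in (0:ℝ)..1, g x := by
  have hper : ∀ y : ℝ, Function.Periodic (fun x : ℝ => g (x + y * I)) 1 := by
    intro y x
    have := hp (x + y * I)
    simp only
    rw [← this]; congr 1; push_cast; ring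
  have h1 : ∫ x in (0:ℝ)..1, g (x + w) = ∫ x in (0:ℝ)..1, g (x + w.im * I) := by
    have h2 : ∀ x : ℝ, g (x + w) = (fun x : ℝ => g (x + w.im * I)) (x + w.re) := by
      intro x; simp only; congr 1
      conv_lhs => rw [← Complex.re_add_im w]
      push_cast; ring
    simp_rw [h2]
    rw [intervalIntegral.integral_comp_add_right (fun x : ℝ => g (x + w.im * I))]
    have := (hper w.im).intervalIntegral_add_eq (0 + w.re) 0
    simpa [add_comm] using this
  rw [h1]
  have h3 := Complex.integral_boundary_rect_eq_zero_of_differentiableOn g 0 (1 + w.im * I)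
    hg.differentiableOn
  simp at h3
  have h4 : ∀ y : ℝ, g (1 + y * I) = g (y * I) := by
    intro y; rw [add_comm, hp]
  simp_rw [h4] at h3
  simp at h3
  rw [sub_eq_zero] at h3
  exact h3.symm

/-- Entire periodic functions with vanishing Fourier coefficients vanish. -/
lemma zero_of_coeffs (g : ℂ → ℂ) (hg : Differentiable ℂ g) (hp : ∀ z, g (z + 1) = g z)
    (h0 : ∀ l : ℤ, ∫ x in (0:ℝ)..1, g x * ee (-(l : ℂ) * x) = 0) (z : ℂ) : g z = 0 := by
  have hper : Function.Periodic (fun x : ℝ => g (x + z)) 1 := by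
    intro x
    simp only
    rw [← hp (x + z)]; congr 1; push_cast; ring
  haveI : Fact (0 < (1:ℝ)) := ⟨one_pos⟩
  have hcont : Continuous (fun x : ℝ => g (x + z)) := hg.continuous.comp (continuous_line z)
  let F : C(AddCircle (1:ℝ), ℂ) := ⟨hper.lift, by
    exact continuous_coinduced_dom.mpr (by exact hcont)⟩
  have hF : ∀ x : ℝ, F (x : AddCircle (1:ℝ)) = g (x + z) := fun x => rfl
  have hc : ∀ l : ℤ, fourierCoeff F l = 0 := by
    intro l
    rw [fourierCoeff_eq_intervalIntegral _ _ 0]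
    have h1 : ∀ x : ℝ, fourier (-l) (x : AddCircle (1:ℝ)) • F (x : AddCircle (1:ℝ))
        = ee (l * z) * (fun w => g w * ee (-(l:ℂ) * w)) (x + z) := by
      intro x
      rw [hF, fourier_coe_apply]
      have : ee (-(l:ℂ) * (x + z)) = ee (-(l:ℂ) * x) * ee (-(l * z)) := by
        rw [← ee_add]; congr 1; ring
      simp only [this]
      have h3 : ee (l * z) * ee (-(l*z)) = 1 := by rw [← ee_add]; simp [ee_zero]
      have h4 : Complex.exp (2 * Real.pi * I * ((-l : ℤ) : ℂ) * x / ((1:ℝ):ℂ)) = ee (-(l:ℂ) * x) := by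
        unfold ee; congr 1; push_cast; ring
      rw [h4, smul_eq_mul]
      linear_combination (-(g (x + z) * ee (-(l:ℂ) * x))) * h3
    simp_rw [h1]
    have h5 := line_indep (fun w => g w * ee (-(l:ℂ) * w))
      (hg.mul (differentiable_ee.comp (by fun_prop)))
      (by
        intro w; simp only [hp]
        congr 1
        rw [show -(l:ℂ) * (w + 1) = -(l:ℂ) * w + ((-l : ℤ) : ℂ) by push_cast; ring, ee_add_int]) z
    simp only [zero_add]
    rw [intervalIntegral.integral_const_mul, h5, h0]
    simp
  have h2 := has_pointwise_sum_fourier_series_of_summable (f := F)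
    (by rw [show fourierCoeff F = fun _ => 0 from funext hc]; exact summable_zero) ((0:ℝ) : AddCircle (1:ℝ))
  simp_rw [hc] at h2
  simp only [zero_smul] at h2
  have := h2.unique hasSum_zero
  rw [hF] at this
  simpa using this

/-- integrand of the canonical Fourier coefficient -/
def CanonI (m : ℕ) (τ : ℂ) (F : ℂ → ℂ) (l : ℤ) (e : ℂ) (x : ℝ) : ℂ :=
  F ((x : ℂ) + e - (l : ℂ) * τ / (2 * (m : ℂ))) * ee (-(l : ℂ) * ((x : ℂ) + e))

def Canon (m : ℕ) (τ : ℂ) (F : ℂ → ℂ) (c : ℤ → ℂ) : Prop :=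
  ∀ l : ℤ, (∀ᶠ ε : ℝ in 𝓝[>] (0:ℝ),
      IntervalIntegrable (CanonI m τ F l (ε * I)) volume 0 1 ∧
      IntervalIntegrable (CanonI m τ F l (-(ε * I))) volume 0 1) ∧
    Tendsto (fun ε : ℝ => (1 / 2 : ℂ) * ((∫ x in (0:ℝ)..1, CanonI m τ F l (ε * I) x) +
      ∫ x in (0:ℝ)..1, CanonI m τ F l (-(ε * I)) x)) (𝓝[>] (0:ℝ))
      (𝓝 (ee (-(l : ℂ) ^ 2 * τ / (4 * (m : ℂ))) * c l))

lemma Canon.add {m : ℕ} {τ : ℂ} {F G : ℂ → ℂ} {c d : ℤ → ℂ} (hF : Canon m τ F c)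
    (hG : Canon m τ G d) : Canon m τ (fun z => F z + G z) (fun l => c l + d l) := by
  intro l
  obtain ⟨hF1, hF2⟩ := hF l
  obtain ⟨hG1, hG2⟩ := hG l
  have key : ∀ e, CanonI m τ (fun z => F z + G z) l e =
      fun x => CanonI m τ F l e x + CanonI m τ G l e x := by
    intro e; funext x; simp only [CanonI]; ring
  refine ⟨?_, ?_⟩
  · filter_upwards [hF1, hG1] with ε h1 h2
    rw [key, key]
    exact ⟨h1.1.add h2.1, h1.2.add h2.2⟩
  · rw [mul_add]
    refine (hF2.add hG2).congr' ?_
    filter_upwards [hF1, hG1] with ε h1 h2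
    rw [key, key, intervalIntegral.integral_add h1.1 h2.1, intervalIntegral.integral_add h1.2 h2.2]
    ring

lemma Canon.const_mul {m : ℕ} {τ : ℂ} {F : ℂ → ℂ} {c : ℤ → ℂ} (a : ℂ) (hF : Canon m τ F c) :
    Canon m τ (fun z => a * F z) (fun l => a * c l) := by
  intro l
  obtain ⟨hF1, hF2⟩ := hF l
  have key : ∀ e, CanonI m τ (fun z => a * F z) l e = fun x => a * CanonI m τ F l e x := by
    intro e; funext x; simp only [CanonI]; ring
  refine ⟨?_, ?_⟩
  · filter_upwards [hF1] with ε h1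
    rw [key, key]
    exact ⟨h1.1.const_mul a, h1.2.const_mul a⟩
  · have := hF2.const_mul a
    rw [show ee (-(l : ℂ) ^ 2 * τ / (4 * (m : ℂ))) * (a * c l) =
      a * (ee (-(l : ℂ) ^ 2 * τ / (4 * (m : ℂ))) * c l) by ring]
    refine this.congr ?_
    intro ε
    rw [key, key, intervalIntegral.integral_const_mul, intervalIntegral.integral_const_mul]
    ring

lemma Canon.zero (m : ℕ) (τ : ℂ) : Canon m τ (fun _ => 0) (fun _ => 0) := by
  intro l
  have key : ∀ e, CanonI m τ (fun _ => 0) l e = fun _ => 0 := by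
    intro e; funext x; simp [CanonI]
  simp [key]

lemma Canon.sum {ι : Type*} {m : ℕ} {τ : ℂ} (s : Finset ι) {F : ι → ℂ → ℂ} {c : ι → ℤ → ℂ}
    (h : ∀ i ∈ s, Canon m τ (F i) (c i)) :
    Canon m τ (fun z => ∑ i ∈ s, F i z) (fun l => ∑ i ∈ s, c i l) := by
  induction s using Finset.induction_on with
  | empty => simpa using Canon.zero m τ
  | insert a s ha ih =>
    simp_rw [Finset.sum_insert ha]
    exact (h a (Finset.mem_insert_self _ _)).add
      (ih fun i hi => h i (Finset.mem_insert_of_mem hi))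

/-- index `m` elliptic law for fixed `τ`. -/
def Ell (m : ℕ) (τ : ℂ) (F : ℂ → ℂ) : Prop := ∀ z : ℂ, ∀ lam mu : ℤ,
    F (z + (lam : ℂ) * τ + (mu : ℂ)) =
      ee (-(m : ℂ) * ((lam : ℂ) ^ 2 * τ + 2 * (lam : ℂ) * z)) * F z

lemma Ell.per {m : ℕ} {τ : ℂ} {F : ℂ → ℂ} (h : Ell m τ F) (z : ℂ) : F (z + 1) = F z := by
  have := h z 0 1
  simpa [ee_zero] using this

lemma Canon.periodic {m : ℕ} (hm : 0 < m) {τ : ℂ} {F : ℂ → ℂ} {c : ℤ → ℂ} (hE : Ell m τ F)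
    (hF : Canon m τ F c) (l : ℤ) : c (l + 2 * (m : ℤ)) = c l := by
  have hm' : (m : ℂ) ≠ 0 := by exact_mod_cast hm.ne'
  set K := ee (-(m:ℂ) * τ - l * τ) with hK
  have key : ∀ e, CanonI m τ F (l + 2 * (m:ℤ)) e =
      fun x => K * CanonI m τ F l e x := by
    intro e; funext x
    simp only [CanonI]
    have h1 := hE ((x:ℂ) + e - (l:ℂ) * τ / (2 * (m:ℂ))) (-1) 0
    have h2 : ((x:ℂ) + e - ((l + 2 * (m:ℤ) : ℤ):ℂ) * τ / (2 * (m:ℂ))) =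
      ((x:ℂ) + e - (l:ℂ) * τ / (2 * (m:ℂ))) + ((-1:ℤ):ℂ) * τ + ((0:ℤ):ℂ) := by
      push_cast; field_simp; ring
    rw [h2, h1, hK]
    have h3 : ee (-(m : ℂ) * (((-1:ℤ) : ℂ) ^ 2 * τ + 2 * ((-1:ℤ) : ℂ) * ((x:ℂ) + e - (l:ℂ) * τ / (2 * (m:ℂ))))) *
      ee (-((l + 2 * (m:ℤ) : ℤ):ℂ) * ((x:ℂ) + e)) =
      ee (-(m:ℂ) * τ - l * τ) * ee (-(l:ℂ) * ((x:ℂ) + e)) := by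
      rw [← ee_add, ← ee_add]; congr 1; push_cast; field_simp; ring
    linear_combination F ((x:ℂ) + e - (l:ℂ) * τ / (2 * (m:ℂ))) * h3
  have h1 := (hF (l + 2 * (m:ℤ))).2
  have h2 := ((hF l).2).const_mul K
  have h3 : (fun ε : ℝ => (1 / 2 : ℂ) * ((∫ x in (0:ℝ)..1, CanonI m τ F (l + 2 * (m:ℤ)) (ε * I) x) +
      ∫ x in (0:ℝ)..1, CanonI m τ F (l + 2 * (m:ℤ)) (-(ε * I)) x)) = fun ε : ℝ =>
      K * ((1 / 2 : ℂ) * ((∫ x in (0:ℝ)..1, CanonI m τ F l (ε * I) x) +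
      ∫ x in (0:ℝ)..1, CanonI m τ F l (-(ε * I)) x)) := by
    funext ε
    rw [key, key, intervalIntegral.integral_const_mul, intervalIntegral.integral_const_mul]
    ring
  rw [h3] at h1
  have h4 := tendsto_nhds_unique h1 h2
  have h5 : ee (-((l + 2 * (m:ℤ) : ℤ) : ℂ) ^ 2 * τ / (4 * (m : ℂ))) =
      K * ee (-(l : ℂ) ^ 2 * τ / (4 * (m : ℂ))) := by
    rw [hK, ← ee_add]; congr 1; push_cast; field_simp; ring
  rw [h5, mul_assoc] at h4
  exact mul_left_cancel₀ (ee_ne_zero _) (mul_left_cancel₀ (ee_ne_zero _) h4)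

/-- removable singularities -/
lemma extend_entire (H : ℂ → ℂ) (Z : Set ℂ) 
    (hZ : ∀ z, ∀ᶠ z' in 𝓝[≠] z, z' ∉ Z)
    (hd : ∀ z, z ∉ Z → DifferentiableAt ℂ H z)
    (hr : ∀ p ∈ Z, Tendsto (fun ε : ℂ => ε * H (p + ε)) (𝓝[≠] 0) (𝓝 0)) :
    ∃ G : ℂ → ℂ, Differentiable ℂ G ∧ ∀ z, z ∉ Z → G z = H z := by
  have hlim : ∀ z, z ∉ Z → limUnder (𝓝[≠] z) H = H z := fun z hz =>
    ((hd z hz).continuousAt.continuousWithinAt.tendsto).limUnder_eq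
  refine ⟨fun z => limUnder (𝓝[≠] z) H, ?_, hlim⟩
  intro z
  obtain ⟨U, hU, hUZ⟩ : ∃ U ∈ 𝓝 z, ∀ z' ∈ U, z' ≠ z → z' ∉ Z := by
    have := hZ z
    rw [eventually_nhdsWithin_iff] at this
    exact ⟨_, this, fun z' h1 h2 => h1 h2⟩
  by_cases hz : z ∈ Z
  · have hdU : DifferentiableOn ℂ H (U \ {z}) := fun z' hz' =>
      (hd z' (hUZ z' hz'.1 hz'.2)).differentiableWithinAt
    have ho : (fun z' => H z' - H z) =o[𝓝[≠] z] fun z' => (z' - z)⁻¹ := by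
      rw [Asymptotics.isLittleO_iff_tendsto']
      · have h1 : Tendsto (fun z' : ℂ => z' - z) (𝓝[≠] z) (𝓝[≠] 0) := by
          apply tendsto_nhdsWithin_of_tendsto_nhds_of_eventually_within
          · have : Tendsto (fun z' : ℂ => z' - z) (𝓝 z) (𝓝 (z - z)) :=
              (continuous_id.sub continuous_const).tendsto z
            rw [sub_self] at this
            exact this.mono_left nhdsWithin_le_nhds
          · filter_upwards [self_mem_nhdsWithin] with z' hz'
            exact sub_ne_zero.2 hz'
        have h2 := (hr z hz).comp h1
        have h3 : Tendsto (fun z' : ℂ => (z' - z) * H z) (𝓝[≠] z) (𝓝 0) := by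
          have := (h1.mono_right nhdsWithin_le_nhds).mul_const (H z)
          simpa using this
        have h4 := h2.sub h3
        rw [sub_zero] at h4
        refine h4.congr ?_
        intro z'
        simp only [Function.comp_apply, div_inv_eq_mul, add_sub_cancel]
        ring
      · filter_upwards [self_mem_nhdsWithin] with z' hz' h0
        exact absurd h0 (inv_ne_zero (sub_ne_zero.2 hz'))
    have h5 := Complex.differentiableOn_update_limUnder_of_isLittleO hU hdU ho
    have h6 := (h5 z (mem_of_mem_nhds hU)).differentiableAt hU
    refine h6.congr_of_eventuallyEq ?_
    filter_upwards [hU] with z' hz'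
    by_cases h7 : z' = z
    · subst h7; simp
    · rw [Function.update_of_ne h7]; exact hlim z' (hUZ z' hz' h7)
  · refine (hd z hz).congr_of_eventuallyEq ?_
    filter_upwards [hU] with z' hz'
    by_cases h7 : z' = z
    · subst h7; exact hlim _ hz
    · exact hlim z' (hUZ z' hz' h7)

lemma dense_compl_of_countable (Z : Set ℂ) (hZ : Z.Countable) : Dense Zᶜ :=
  hZ.dense_compl ℂ

/-- uniqueness -/
lemma uniq (m : ℕ) (τ : ℂ) (H : ℂ → ℂ) (Z : Set ℂ) (hc : Z.Countable)
    (hZ : ∀ z, ∀ᶠ z' in 𝓝[≠] z, z' ∉ Z)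
    (hd : ∀ z, z ∉ Z → DifferentiableAt ℂ H z)
    (hr : ∀ p ∈ Z, Tendsto (fun ε : ℂ => ε * H (p + ε)) (𝓝[≠] 0) (𝓝 0))
    (hp : ∀ z, H (z + 1) = H z)
    (h0 : Canon m τ H (fun _ => 0)) (z : ℂ) (hz : z ∉ Z) : H z = 0 := by
  obtain ⟨G, hG, hGH⟩ := extend_entire H Z hZ hd hr
  have hGp : ∀ z, G (z + 1) = G z := by
    have hc2 : (Z ∪ (fun z => z + 1) ⁻¹' Z).Countable :=
      hc.union (hc.preimage (add_left_injective (1:ℂ)))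
    have h1 : (fun z => G (z + 1)) = G := by
      apply Continuous.ext_on (dense_compl_of_countable _ hc2)
        (hG.continuous.comp (continuous_id.add continuous_const)) hG.continuous
      intro z hz
      simp only [Set.mem_compl_iff, Set.mem_union, not_or, Set.mem_preimage] at hz
      change G (z + 1) = G z
      rw [hGH z hz.1, hGH _ hz.2, hp]
    exact fun z => congrFun h1 z
  rw [← hGH z hz]
  apply zero_of_coeffs G hG hGp
  intro l
  have hI : ∀ e : ℂ, ∫ x in (0:ℝ)..1, CanonI m τ H l e x =
      ee (-(l:ℂ) * (l * τ / (2 * m))) * ∫ x in (0:ℝ)..1, G x * ee (-(l : ℂ) * x) := by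
    intro e
    have h5 := line_indep (fun w => G w * ee (-(l:ℂ) * w))
      (hG.mul (differentiable_ee.comp (by fun_prop)))
      (by
        intro w; simp only [hGp]
        congr 1
        rw [show -(l:ℂ) * (w + 1) = -(l:ℂ) * w + ((-l : ℤ) : ℂ) by push_cast; ring, ee_add_int])
      (e - l * τ / (2 * m))
    rw [← h5, ← intervalIntegral.integral_const_mul]
    apply intervalIntegral.integral_congr_ae
    have hcount : ((fun x : ℝ => (x:ℂ) + e - (l : ℂ) * τ / (2 * (m : ℂ))) ⁻¹' Z).Countable := by
      apply hc.preimage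
      intro x y hxy
      simp only [sub_left_inj, add_left_inj] at hxy
      exact_mod_cast hxy
    filter_upwards [hcount.ae_notMem volume] with x hx _
    simp only [Set.mem_preimage] at hx
    simp only [CanonI]
    rw [← hGH _ hx]
    have h6 : ee (-(l:ℂ) * ((x:ℂ) + e)) = ee (-(l:ℂ) * (l * τ / (2 * m))) *
        ee (-(l:ℂ) * ((x:ℂ) + (e - l * τ / (2 * m)))) := by
      rw [← ee_add]; congr 1; ring
    rw [h6, add_sub_assoc]; ring
  have h7 := (h0 l).2
  simp_rw [hI] at h7
  have h8 := tendsto_nhds_unique h7 tendsto_const_nhds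
  rw [mul_zero] at h8
  have h9 := ee_ne_zero (-(l:ℂ) * (l * τ / (2 * m)))
  have h10 : ee (-(l:ℂ) * (l * τ / (2 * m))) * ∫ x in (0:ℝ)..1, G x * ee (-(l : ℂ) * x) = 0 := by
    rw [h8]; ring
  exact (mul_eq_zero.1 h10).resolve_left h9

def AvT (m : ℕ) (f : ℂ → ℂ) (τ z : ℂ) : ℂ :=
  ∑' lam : ℤ, ee ((m : ℂ) * (lam : ℂ) ^ 2 * τ + 2 * (m : ℂ) * (lam : ℂ) * z) *
      f ((lam : ℂ) * τ + z)

/-- kernel data for a periodic function with poles on `u + ℤ`. -/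
structure KD (m : ℕ) (τ u : ℂ) (f : ℂ → ℂ) (e0 d0 : ℂ) (cp cm : ℤ → ℂ) : Prop where
  per : ∀ z, f (z + 1) = f z
  diff : ∀ z, (∀ n : ℤ, z ≠ u + n) → DifferentiableAt ℂ f z
  growth : ∀ δ > 0, ∃ C K : ℝ, ∀ z, (∀ n : ℤ, δ ≤ ‖z - u - n‖) →
    ‖f z‖ ≤ C * Real.exp (Real.pi * m * (z - u).im ^ 2 / τ.im + K * |(z - u).im|)
  laurent : Tendsto (fun ε : ℂ => 2 * (Real.pi : ℂ) * I * ε *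
    (f (u + ε) - e0 / (2 * (Real.pi : ℂ) * I * ε) ^ 2)) (𝓝[≠] 0) (𝓝 d0)
  coefp : ∀ r : ℤ, ∀ w : ℂ, u.im < w.im →
    ∫ x in (0:ℝ)..1, f (x + w) * ee (-(r : ℂ) * (x + w)) = cp r
  coefm : ∀ r : ℤ, ∀ w : ℂ, w.im < u.im →
    ∫ x in (0:ℝ)..1, f (x + w) * ee (-(r : ℂ) * (x + w)) = cm r

lemma per_int {f : ℂ → ℂ} (h : ∀ z, f (z + 1) = f z) (z : ℂ) (n : ℤ) : f (z + n) = f z := by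
  have : Function.Periodic f 1 := h
  simpa using this.int_mul n z

lemma AvT_ell (m : ℕ) (τ : ℂ) (f : ℂ → ℂ) (h : ∀ z, f (z + 1) = f z) : Ell m τ (AvT m f τ) := by
  intro z lam mu
  unfold AvT
  rw [← tsum_mul_left, ← (Equiv.addRight lam).tsum_eq (fun n : ℤ => 
    ee (-(m : ℂ) * ((lam : ℂ) ^ 2 * τ + 2 * (lam : ℂ) * z)) *
    (ee ((m : ℂ) * (n : ℂ) ^ 2 * τ + 2 * (m : ℂ) * (n : ℂ) * z) * f ((n : ℂ) * τ + z)))]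
  congr 1; funext n
  simp only [Equiv.coe_addRight, Int.cast_add]
  rw [← mul_assoc, ← ee_add]
  have h1 : (n:ℂ) * τ + (z + lam * τ + mu) = ((n:ℂ) + lam) * τ + z + mu := by ring
  rw [h1, per_int h]
  congr 1
  have h2 : (m : ℂ) * (n : ℂ) ^ 2 * τ + 2 * (m : ℂ) * (n : ℂ) * (z + lam * τ + mu) =
    (-(m : ℂ) * ((lam : ℂ) ^ 2 * τ + 2 * (lam : ℂ) * z) +
    ((m : ℂ) * ((n : ℂ) + lam) ^ 2 * τ + 2 * (m : ℂ) * ((n : ℂ) + lam) * z)) +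
      ((2 * m * n * mu : ℤ) : ℂ) := by push_cast; ring
  rw [h2, ee_add_int]

lemma summable_gauss {a : ℝ} (ha : 0 < a) (M : ℝ) :
    Summable (fun n : ℤ => Real.exp (-a * n ^ 2 + M * |(n:ℝ)|)) := by
  have h := summable_pow_mul_jacobiTheta₂_term_bound (M / (2 * Real.pi)) (T := a / Real.pi)
    (by positivity) 0
  refine h.congr ?_
  intro n
  have := Real.pi_pos
  simp only [pow_zero, one_mul]
  congr 1
  push_cast
  field_simp
  ring

lemma KD.bound {m : ℕ} (hm : 0 < m) {τ u : ℂ} (hτ : 0 < τ.im) {f : ℂ → ℂ} {e0 d0 : ℂ}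
    {cp cm : ℤ → ℂ} (h : KD m τ u f e0 d0 cp cm) (R δ : ℝ) (hδ : 0 < δ) :
    ∃ b : ℤ → ℝ, Summable b ∧ ∀ (lam : ℤ) (z : ℂ), ‖z‖ ≤ R →
      (∀ n : ℤ, δ ≤ ‖(lam : ℂ) * τ + z - u - n‖) →
      ‖ee ((m : ℂ) * (lam : ℂ) ^ 2 * τ + 2 * (m : ℂ) * (lam : ℂ) * z) *
        f ((lam : ℂ) * τ + z)‖ ≤ b lam := by
  obtain ⟨C, K, hC⟩ := h.growth δ hδ
  have hpi := Real.pi_pos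
  have hm' : (0:ℝ) < m := by exact_mod_cast hm
  set Y := |R| + |u.im| with hY
  set M := 4 * Real.pi * m * |R| + 2 * Real.pi * m * Y + |K| * τ.im
  set M' := Real.pi * m * Y ^ 2 / τ.im + |K| * Y
  refine ⟨fun n => (|C| * Real.exp M') * Real.exp (-(Real.pi * m * τ.im) * n ^ 2 + M * |(n:ℝ)|),
    (summable_gauss (by positivity) M).mul_left _, ?_⟩
  intro lam z hz hn
  rw [norm_mul, norm_ee]
  have h1 := hC _ hn
  have h2 : ‖f ((lam : ℂ) * τ + z)‖ ≤ |C| * Real.exp (Real.pi * m * ((lam : ℂ) * τ + z - u).im ^ 2 / τ.im + K * |((lam : ℂ) * τ + z - u).im|) :=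
    h1.trans (by gcongr; exact le_abs_self C)
  have him : ((lam : ℂ) * τ + z - u).im = lam * τ.im + (z.im - u.im) := by
    simp; ring
  have him2 : ((m : ℂ) * (lam : ℂ) ^ 2 * τ + 2 * (m : ℂ) * (lam : ℂ) * z).im = m * lam ^ 2 * τ.im + 2 * m * lam * z.im := by
    have : ((m : ℂ) * (lam : ℂ) ^ 2 * τ + 2 * (m : ℂ) * (lam : ℂ) * z) = 
      ((m * (lam:ℝ) ^ 2 : ℝ) : ℂ) * τ + ((2 * m * (lam:ℝ) : ℝ) : ℂ) * z := by push_cast; ring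
    rw [this, Complex.add_im, Complex.im_ofReal_mul, Complex.im_ofReal_mul]
  rw [him] at h2
  rw [him2]
  refine (mul_le_mul_of_nonneg_left h2 (Real.exp_nonneg _)).trans ?_
  set y := z.im - u.im with hy
  have hzR : |z.im| ≤ |R| := (Complex.abs_im_le_norm z).trans (hz.trans (le_abs_self R))
  have hyY : |y| ≤ Y := (abs_sub _ _).trans (by rw [hY]; gcongr)
  have e1 : Real.exp (-(2 * Real.pi * (m * lam ^ 2 * τ.im + 2 * m * lam * z.im))) *
      (|C| * Real.exp (Real.pi * m * (lam * τ.im + y) ^ 2 / τ.im + K * |lam * τ.im + y|)) =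
      |C| * Real.exp (-(2 * Real.pi * (m * lam ^ 2 * τ.im + 2 * m * lam * z.im)) + (Real.pi * m * (lam * τ.im + y) ^ 2 / τ.im + K * |lam * τ.im + y|)) := by
    rw [Real.exp_add (-(2 * Real.pi * (m * lam ^ 2 * τ.im + 2 * m * lam * z.im)))]; ring
  rw [e1]
  have e2 : |C| * Real.exp M' * Real.exp (-(Real.pi * m * τ.im) * lam ^ 2 + M * |(lam:ℝ)|) =
      |C| * Real.exp (M' + (-(Real.pi * m * τ.im) * lam ^ 2 + M * |(lam:ℝ)|)) := by
    rw [Real.exp_add M']; ring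
  beta_reduce
  rw [e2]
  refine mul_le_mul_of_nonneg_left (Real.exp_le_exp.2 ?_) (abs_nonneg C)
  have e3 : Real.pi * m * (lam * τ.im + y) ^ 2 / τ.im = Real.pi * m * (lam ^ 2 * τ.im + 2 * lam * y + y ^ 2 / τ.im) := by
    field_simp
    ring
  rw [e3]
  have f1 : K * |lam * τ.im + y| ≤ |K| * (|(lam:ℝ)| * τ.im + Y) := by
    calc K * |lam * τ.im + y| ≤ |K| * |lam * τ.im + y| := by gcongr; exact le_abs_self K
      _ ≤ |K| * (|(lam:ℝ)| * τ.im + Y) := by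
        gcongr
        refine (abs_add_le _ _).trans ?_
        rw [abs_mul, abs_of_pos hτ]
        gcongr
  have f2 : y ^ 2 ≤ Y ^ 2 := by
    rw [← sq_abs y]; gcongr
  have f3 : -(lam * z.im) ≤ |(lam:ℝ)| * |R| := by
    rw [← neg_mul]
    refine (le_abs_self _).trans ?_
    rw [abs_mul, abs_neg]; gcongr
  have f4 : lam * y ≤ |(lam:ℝ)| * Y := by
    refine (le_abs_self _).trans ?_
    rw [abs_mul]; gcongr
  have f5 : Real.pi * m * y ^ 2 / τ.im ≤ Real.pi * m * Y ^ 2 / τ.im := by gcongr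
  have g3 := mul_le_mul_of_nonneg_left f3 (show 0 ≤ 4 * Real.pi * m by positivity)
  have g4 := mul_le_mul_of_nonneg_left f4 (show 0 ≤ 2 * Real.pi * m by positivity)
  have e4 : Real.pi * m * (y ^ 2 / τ.im) = Real.pi * m * y ^ 2 / τ.im := by ring
  simp only [M, M']
  have p1 : Real.pi * m * (lam ^ 2 * τ.im + 2 * lam * y + y ^ 2 / τ.im) =
    Real.pi * m * lam ^ 2 * τ.im + 2 * Real.pi * m * (lam * y) + Real.pi * m * (y ^ 2 / τ.im) := by ring
  rw [p1, e4]
  have p2 : (4 * Real.pi * m * |R| + 2 * Real.pi * m * Y + |K| * τ.im) * |(lam:ℝ)| =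
    4 * Real.pi * m * (|(lam:ℝ)| * |R|) + 2 * Real.pi * m * (|(lam:ℝ)| * Y) + |K| * (|(lam:ℝ)| * τ.im) := by ring
  rw [p2]
  linarith [f1, g3, g4, f5]

/-- separation from the lattice -/
lemma lattice_sep {τ w : ℂ} (hτ : 0 < τ.im) (hw : ∀ lam n : ℤ, (lam : ℂ) * τ + w ≠ n) :
    ∃ δ > 0, ∀ lam n : ℤ, δ ≤ ‖(lam : ℂ) * τ + w - n‖ := by
  set a := w.im / τ.im with ha
  have ha' : w.im = a * τ.im := by rw [ha]; field_simp
  have hIm : ∀ lam n : ℤ, |lam + a| * τ.im ≤ ‖(lam : ℂ) * τ + w - n‖ := by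
    intro lam n
    refine le_trans (le_of_eq ?_) (Complex.abs_im_le_norm _)
    have : ((lam : ℂ) * τ + w - n).im = (lam + a) * τ.im := by
      simp [ha']; ring
    rw [this, abs_mul, abs_of_pos hτ]
  by_cases hr : a = round a
  · set x := w.re - round a * τ.re with hx
    have hwx : w = round a * τ + x := by
      apply Complex.ext
      · simp [hx]
      · simp [ha', ← hr]
    have hxr : x ≠ round x := by
      intro h1
      apply hw (-round a) (round x)
      rw [hwx]; push_cast
      rw [← Complex.ofReal_intCast (round x), ← h1]; ring
    refine ⟨min τ.im |x - round x|, lt_min hτ (abs_pos.2 (sub_ne_zero.2 hxr)), ?_⟩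
    intro lam n
    by_cases hl : lam + round a = 0
    · refine (min_le_right _ _).trans ((round_le x n).trans ?_)
      have : (lam : ℂ) * τ + w - n = ((x - n : ℝ) : ℂ) := by
        rw [hwx]
        have : (lam : ℂ) = -round a := by
          have : lam = -round a := by omega
          rw [this]; push_cast; rfl
        rw [this]; push_cast; ring
      rw [this, Complex.norm_real, Real.norm_eq_abs]
    · refine (min_le_left _ _).trans (le_trans ?_ (hIm lam n))
      have : (1:ℝ) ≤ |lam + a| := by
        rw [hr]
        have := Int.one_le_abs hl
        exact_mod_cast this
      nlinarith
  · refine ⟨|a - round a| * τ.im, mul_pos (abs_pos.2 (sub_ne_zero.2 hr)) hτ, ?_⟩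
    intro lam n
    refine le_trans ?_ (hIm lam n)
    refine mul_le_mul_of_nonneg_right ?_ hτ.le
    have := round_le a (-lam)
    push_cast at this
    rwa [sub_neg_eq_add, add_comm a] at this

lemma KD.summable {m : ℕ} (hm : 0 < m) {τ u : ℂ} (hτ : 0 < τ.im) {f : ℂ → ℂ} {e0 d0 : ℂ}
    {cp cm : ℤ → ℂ} (h : KD m τ u f e0 d0 cp cm) (z : ℂ)
    (hz : ∀ lam n : ℤ, (lam : ℂ) * τ + (z - u) ≠ n) :
    Summable fun lam : ℤ => ee ((m : ℂ) * (lam : ℂ) ^ 2 * τ + 2 * (m : ℂ) * (lam : ℂ) * z) *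
      f ((lam : ℂ) * τ + z) := by
  obtain ⟨δ, hδ, hs⟩ := lattice_sep hτ hz
  obtain ⟨b, hb, hbd⟩ := h.bound hm hτ ‖z‖ δ hδ
  refine Summable.of_norm_bounded hb fun lam => hbd lam z le_rfl fun n => ?_
  rw [add_sub_assoc]
  exact hs lam n

lemma KD.term_diff {m : ℕ} {τ u : ℂ} {f : ℂ → ℂ} {e0 d0 : ℂ}
    {cp cm : ℤ → ℂ} (h : KD m τ u f e0 d0 cp cm) (lam : ℤ) (z : ℂ)
    (hz : ∀ n : ℤ, (lam : ℂ) * τ + z - u ≠ n) :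
    DifferentiableAt ℂ (fun z => ee ((m : ℂ) * (lam : ℂ) ^ 2 * τ + 2 * (m : ℂ) * (lam : ℂ) * z) *
      f ((lam : ℂ) * τ + z)) z := by
  apply DifferentiableAt.mul
  · exact (differentiable_ee _).comp z (by fun_prop)
  · apply DifferentiableAt.comp z (h.diff _ ?_) (by fun_prop)
    intro n hn
    apply hz n
    rw [hn]; ring

lemma KD.diff_off {m : ℕ} (hm : 0 < m) {τ u : ℂ} (hτ : 0 < τ.im) {f : ℂ → ℂ} {e0 d0 : ℂ}
    {cp cm : ℤ → ℂ} (h : KD m τ u f e0 d0 cp cm) (z : ℂ)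
    (hz : ∀ lam n : ℤ, (lam : ℂ) * τ + (z - u) ≠ n) : DifferentiableAt ℂ (AvT m f τ) z := by
  obtain ⟨δ, hδ, hs⟩ := lattice_sep hτ hz
  obtain ⟨b, hb, hbd⟩ := h.bound hm hτ (‖z‖ + δ / 2) (δ / 2) (by positivity)
  have hsep : ∀ w ∈ Metric.ball z (δ / 2), ∀ lam n : ℤ, δ / 2 ≤ ‖(lam : ℂ) * τ + w - u - n‖ := by
    intro w hw lam n
    have h1 := hs lam n
    have h2 : (lam : ℂ) * τ + (z - u) - n = ((lam : ℂ) * τ + w - u - n) - (w - z) := by ring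
    rw [h2] at h1
    have h3 := norm_sub_le ((lam : ℂ) * τ + w - u - n) (w - z)
    rw [Metric.mem_ball, dist_eq_norm] at hw
    linarith
  have hD : DifferentiableOn ℂ (AvT m f τ) (Metric.ball z (δ / 2)) := by
    refine Complex.differentiableOn_tsum_of_summable_norm hb ?_ Metric.isOpen_ball ?_
    · intro lam w hw
      refine (h.term_diff lam w ?_).differentiableWithinAt
      intro n hn
      have := hsep w hw lam n
      rw [hn, sub_self, norm_zero] at this
      linarith
    · intro lam w hw
      refine hbd lam w ?_ (hsep w hw lam)
      rw [Metric.mem_ball, dist_eq_norm] at hw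
      have := norm_add_le z (w - z)
      rw [add_sub_cancel] at this
      linarith
  exact (hD z (Metric.mem_ball_self (by positivity))).differentiableAt
    (Metric.isOpen_ball.mem_nhds (Metric.mem_ball_self (by positivity)))

lemma lattice_ne_of_im {τ z : ℂ} (hz : ∀ n : ℤ, n * τ.im + z.im ≠ 0) (lam n : ℤ) :
    (lam : ℂ) * τ + z ≠ n := by
  intro h
  apply hz lam
  have := congrArg Complex.im h
  simpa using this

/-- Laurent expansion of the average at `u`. -/
lemma KD.laurent_av {m : ℕ} (hm : 0 < m) {τ u : ℂ} (hτ : 0 < τ.im) {f : ℂ → ℂ} {e0 d0 : ℂ}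
    {cp cm : ℤ → ℂ} (h : KD m τ u f e0 d0 cp cm) :
    Tendsto (fun ε : ℂ => 2 * (Real.pi : ℂ) * I * ε *
      (AvT m f τ (u + ε) - e0 / (2 * (Real.pi : ℂ) * I * ε) ^ 2)) (𝓝[≠] 0) (𝓝 d0) := by
  set r := min (τ.im / 2) (1 / 2) with hr
  have hr0 : 0 < r := lt_min (by positivity) (by norm_num)
  have hr1 : r ≤ τ.im / 2 := min_le_left _ _
  have hr2 : r ≤ 1 / 2 := min_le_right _ _
  obtain ⟨b, hb, hbd⟩ := h.bound hm hτ (‖u‖ + r) (τ.im / 2) (by positivity)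
  have hb0 : ∀ w ∈ Metric.ball u r, ∀ lam : ℤ, lam ≠ 0 → ∀ n : ℤ, τ.im / 2 ≤ ‖(lam : ℂ) * τ + w - u - n‖ := by
    intro w hw lam hl n
    rw [Metric.mem_ball, dist_eq_norm] at hw
    refine le_trans ?_ (Complex.abs_im_le_norm _)
    have h1 := (Complex.abs_im_le_norm (w - u))
    have h2 : ((lam : ℂ) * τ + w - u - n).im = lam * τ.im + (w - u).im := by simp; ring
    rw [h2]
    have h3 : (1:ℝ) ≤ |(lam:ℝ)| := by exact_mod_cast Int.one_le_abs hl
    have h4 : τ.im ≤ |lam * τ.im| := by rw [abs_mul, abs_of_pos hτ]; nlinarith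
    have h5 := abs_sub_abs_le_abs_sub (lam * τ.im) (-(w - u).im)
    rw [sub_neg_eq_add, abs_neg] at h5
    linarith
  set rest : ℂ → ℂ := fun w => ∑' lam : ℤ, if lam = 0 then 0 else
    ee ((m : ℂ) * (lam : ℂ) ^ 2 * τ + 2 * (m : ℂ) * (lam : ℂ) * w) * f ((lam : ℂ) * τ + w) with hrest
  have hD : DifferentiableOn ℂ rest (Metric.ball u r) := by
    refine Complex.differentiableOn_tsum_of_summable_norm hb.norm ?_ Metric.isOpen_ball ?_
    · intro lam w hw
      by_cases hl : lam = 0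
      · simp only [hl, if_true]
        exact differentiableWithinAt_const _
      simp only [hl, if_false]
      refine (h.term_diff lam w ?_).differentiableWithinAt
      intro n hn
      have := hb0 w hw lam hl n
      rw [hn, sub_self, norm_zero] at this
      linarith
    · intro lam w hw
      by_cases hl : lam = 0
      · simp [hl]
      simp only [hl, if_false]
      refine (hbd lam w ?_ (hb0 w hw lam hl)).trans (le_abs_self _)
      rw [Metric.mem_ball, dist_eq_norm] at hw
      have := norm_add_le u (w - u)
      rw [add_sub_cancel] at this
      linarith
  have hcont : ContinuousAt rest u := ((hD u (Metric.mem_ball_self hr0)).differentiableAt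
    (Metric.isOpen_ball.mem_nhds (Metric.mem_ball_self hr0))).continuousAt
  have hlim : Tendsto (fun ε : ℂ => 2 * (Real.pi : ℂ) * I * ε * rest (u + ε)) (𝓝[≠] 0) (𝓝 0) := by
    have h1 : ContinuousAt (fun ε : ℂ => 2 * (Real.pi : ℂ) * I * ε * rest (u + ε)) 0 := by
      apply ContinuousAt.mul (by fun_prop)
      apply ContinuousAt.comp (g := rest) _ (by fun_prop)
      simpa using hcont
    have := h1.tendsto
    simp only [mul_zero, zero_mul] at this
    exact this.mono_left nhdsWithin_le_nhds
  have hsum := h.laurent.add hlim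
  rw [add_zero] at hsum
  refine hsum.congr' ?_
  have hball : Metric.ball (0:ℂ) r ∈ 𝓝 (0:ℂ) := Metric.ball_mem_nhds _ hr0
  filter_upwards [self_mem_nhdsWithin, nhdsWithin_le_nhds hball] with ε hε hεr
  rw [Metric.mem_ball, dist_zero_right] at hεr
  have hmem : u + ε ∈ Metric.ball u r := by simpa using hεr
  have hs : Summable fun lam : ℤ => ee ((m : ℂ) * (lam : ℂ) ^ 2 * τ + 2 * (m : ℂ) * (lam : ℂ) * (u + ε)) *
      f ((lam : ℂ) * τ + (u + ε)) := by
    apply h.summable hm hτ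
    intro lam n hn
    by_cases hl : lam = 0
    · subst hl
      simp at hn
      have h3 : ‖(n:ℂ)‖ < 1 := by rw [← hn]; linarith
      rw [Complex.norm_intCast] at h3
      have h4 : n = 0 := by
        by_contra h5
        have := Int.one_le_abs h5
        have : (1:ℝ) ≤ |(n:ℝ)| := by exact_mod_cast this
        linarith
      rw [h4] at hn
      exact hε (by simpa using hn)
    · have := hb0 _ hmem lam hl n
      rw [show (lam : ℂ) * τ + (u + ε) - u - n = (lam : ℂ) * τ + (u + ε - u) - n by ring, hn, sub_self, norm_zero] at this
      linarith
  have h1 : AvT m f τ (u + ε) = f (u + ε) + rest (u + ε) := by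
    unfold AvT
    rw [hs.tsum_eq_add_tsum_ite 0]
    simp [hrest, ee_zero]
  rw [h1]; ring

lemma hasSum_congr_C {ι : Type*} {f g : ι → ℂ} {a : ℂ} (h : ∀ i, f i = g i) : HasSum f a ↔ HasSum g a := by
  rw [funext h]

/-- coefficient selected by the position of the line -/
def chat (m : ℕ) (τ u : ℂ) (cp cm : ℤ → ℂ) (r : ℤ) : ℂ :=
  if 0 < u.im / τ.im + r / (2 * m) then cm r else
    if u.im / τ.im + r / (2 * m) < 0 then cp r else (cp r + cm r) / 2

lemma gap (a : ℝ) : ∃ ε0 > 0, ∀ n : ℤ, a - n ≠ 0 → ε0 ≤ |a - n| := by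
  by_cases hr : a = round a
  · refine ⟨1, one_pos, fun n hn => ?_⟩
    rw [hr] at hn ⊢
    have h1 : round a - n ≠ 0 := by exact_mod_cast hn
    exact_mod_cast Int.one_le_abs h1
  · exact ⟨|a - round a|, abs_pos.2 (sub_ne_zero.2 hr), fun n _ => round_le a n⟩

lemma KD.line {m : ℕ} (hm : 0 < m) {τ u : ℂ} (hτ : 0 < τ.im) {f : ℂ → ℂ} {e0 d0 : ℂ}
    {cp cm : ℤ → ℂ} (h : KD m τ u f e0 d0 cp cm) (l : ℤ) (e : ℂ) (d : ℝ) (hd : 0 < d)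
    (hsep : ∀ n : ℤ, d ≤ |e.im - (u.im / τ.im + l / (2 * m) - n) * τ.im|) :
    IntervalIntegrable (CanonI m τ (AvT m f τ) l e) volume 0 1 ∧
    HasSum (fun n : ℤ => ee (-(l : ℂ) ^ 2 * τ / (4 * (m : ℂ))) *
      (ee (-((l - 2 * m * n : ℤ) : ℂ) ^ 2 / (4 * (m : ℂ)) * τ) *
        (if (u.im / τ.im + l / (2 * m) - n) * τ.im < e.im then cp (l - 2 * m * n)
          else cm (l - 2 * m * n)))) (∫ x in (0:ℝ)..1, CanonI m τ (AvT m f τ) l e x) := by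
  have hm' : (m : ℂ) ≠ 0 := by exact_mod_cast hm.ne'
  have hmR : (m : ℝ) ≠ 0 := by exact_mod_cast hm.ne'
  set zx : ℝ → ℂ := fun x => (x : ℂ) + e - (l : ℂ) * τ / (2 * (m : ℂ)) with hzx
  have hzxc : Continuous zx := by simp only [hzx]; fun_prop
  have hldiv : ((l : ℂ) * τ / (2 * (m : ℂ))).im = l / (2 * m) * τ.im := by
    rw [show (l : ℂ) * τ / (2 * (m : ℂ)) = ((l / (2 * m) : ℝ) : ℂ) * τ by push_cast; ring]
    rw [Complex.im_ofReal_mul]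
  have him : ∀ x (n : ℤ), ((n : ℂ) * τ + zx x - u).im =
      e.im - (u.im / τ.im + l / (2 * m) - n) * τ.im := by
    intro x n
    have : ((n : ℂ) * τ + zx x - u).im = n * τ.im + (e.im - l / (2 * m) * τ.im) - u.im := by
      simp only [hzx, Complex.sub_im, Complex.add_im, hldiv, Complex.ofReal_im]
      simp
    rw [this]; field_simp; ring
  have hsepz : ∀ x (n k : ℤ), d ≤ ‖(n : ℂ) * τ + zx x - u - k‖ := by
    intro x n k
    refine (hsep n).trans ?_
    rw [← him x n]
    refine le_trans (le_of_eq ?_) (Complex.abs_im_le_norm _)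
    simp
  have hne : ∀ x (n k : ℤ), (n : ℂ) * τ + (zx x - u) ≠ k := by
    intro x n k hk
    have := hsepz x n k
    rw [show (n : ℂ) * τ + zx x - u - k = (n : ℂ) * τ + (zx x - u) - k by ring, hk, sub_self, norm_zero] at this
    linarith
  have hcont : Continuous (CanonI m τ (AvT m f τ) l e) := by
    have h1 : Continuous (fun x => AvT m f τ (zx x)) := by
      rw [continuous_iff_continuousAt]
      intro x
      exact ContinuousAt.comp (g := AvT m f τ) (h.diff_off hm hτ (zx x) (hne x)).continuousAt hzxc.continuousAt
    have h2 : Continuous (fun x : ℝ => ee (-(l : ℂ) * ((x : ℂ) + e))) :=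
      continuous_ee.comp (by fun_prop)
    exact h1.mul h2
  refine ⟨hcont.intervalIntegrable 0 1, ?_⟩
  obtain ⟨b, hb, hbd⟩ := h.bound hm hτ (1 + ‖e - (l : ℂ) * τ / (2 * (m : ℂ))‖) d hd
  set F : ℤ → ℝ → ℂ := fun n x => (ee ((m : ℂ) * (n : ℂ) ^ 2 * τ + 2 * (m : ℂ) * (n : ℂ) * zx x) *
      f ((n : ℂ) * τ + zx x)) * ee (-(l : ℂ) * ((x : ℂ) + e)) with hF
  have hFc : ∀ n, Continuous (F n) := by
    intro n
    have h1 : Continuous (fun x => ee ((m : ℂ) * (n : ℂ) ^ 2 * τ + 2 * (m : ℂ) * (n : ℂ) * zx x) *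
      f ((n : ℂ) * τ + zx x)) := by
      rw [continuous_iff_continuousAt]
      intro x
      refine ContinuousAt.comp (g := fun z => ee ((m : ℂ) * (n : ℂ) ^ 2 * τ + 2 * (m : ℂ) * (n : ℂ) * z) *
        f ((n : ℂ) * τ + z)) (h.term_diff n (zx x) ?_).continuousAt hzxc.continuousAt
      intro k hk
      exact hne x n k (by rw [← hk]; ring)
    have h2 : Continuous (fun x : ℝ => ee (-(l : ℂ) * ((x : ℂ) + e))) :=
      continuous_ee.comp (by fun_prop)
    exact h1.mul h2
  have hsumm : Summable fun n => b n * Real.exp (2 * Real.pi * (l * e.im)) := hb.mul_right _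
  have hnrm : ∀ x : ℝ, ‖ee (-(l : ℂ) * ((x : ℂ) + e))‖ = Real.exp (2 * Real.pi * (l * e.im)) := by
    intro x
    rw [norm_ee]; congr 1
    have : (-(l : ℂ) * ((x : ℂ) + e)).im = -(l * e.im) := by simp
    rw [this]; ring
  have key := intervalIntegral.hasSum_integral_of_dominated_convergence (μ := volume) (a := 0) (b := 1)
    (F := F) (f := CanonI m τ (AvT m f τ) l e)
    (fun n _ => b n * Real.exp (2 * Real.pi * (l * e.im)))
    (fun n => (hFc n).aestronglyMeasurable)
    (fun n => by
      refine Filter.Eventually.of_forall fun x hx => ?_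
      rw [Set.uIoc_of_le zero_le_one] at hx
      simp only [hF]
      rw [norm_mul, hnrm]
      refine mul_le_mul_of_nonneg_right ?_ (Real.exp_nonneg _)
      refine hbd n (zx x) ?_ (hsepz x n)
      simp only [hzx]
      rw [add_sub_assoc]
      refine (norm_add_le _ _).trans ?_
      refine add_le_add ?_ le_rfl
      rw [Complex.norm_real, Real.norm_eq_abs, abs_of_pos hx.1]
      exact hx.2)
    (Filter.Eventually.of_forall fun x _ => hsumm)
    (by simp)
    (Filter.Eventually.of_forall fun x _ => by
      exact ((h.summable hm hτ (zx x) (hne x)).hasSum).mul_right _)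
  refine (hasSum_congr_C (fun n => ?_)).2 key
  set r : ℤ := l - 2 * m * n with hr
  set w : ℂ := (n : ℂ) * τ + (e - (l : ℂ) * τ / (2 * (m : ℂ))) with hw
  have hwim : w.im - u.im = e.im - (u.im / τ.im + l / (2 * m) - n) * τ.im := by
    rw [← him 0 n]
    simp only [hzx, hw]
    simp
  have hFr : ∀ x, F n x = ee (-(l : ℂ) ^ 2 * τ / (4 * (m : ℂ))) * ee (-(r : ℂ) ^ 2 / (4 * (m : ℂ)) * τ) *
      (f (x + w) * ee (-(r : ℂ) * (x + w))) := by
    intro x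
    simp only [hF]
    have h1 : (n : ℂ) * τ + zx x = x + w := by simp only [hzx, hw]; ring
    rw [h1]
    have h2 : ee ((m : ℂ) * (n : ℂ) ^ 2 * τ + 2 * (m : ℂ) * (n : ℂ) * zx x) * ee (-(l : ℂ) * ((x : ℂ) + e)) =
      ee (-(l : ℂ) ^ 2 * τ / (4 * (m : ℂ))) * ee (-(r : ℂ) ^ 2 / (4 * (m : ℂ)) * τ) * ee (-(r : ℂ) * (x + w)) := by
      rw [← ee_add, ← ee_add, ← ee_add]
      congr 1
      simp only [hzx, hw, hr]
      push_cast
      field_simp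
      ring
    linear_combination f (x + w) * h2
  have hsp := hsep n
  rw [← hwim] at hsp
  have : ∫ x in (0:ℝ)..1, F n x = ee (-(l : ℂ) ^ 2 * τ / (4 * (m : ℂ))) * ee (-(r : ℂ) ^ 2 / (4 * (m : ℂ)) * τ) *
      ∫ x in (0:ℝ)..1, (f (x + w) * ee (-(r : ℂ) * (x + w))) := by
    rw [← intervalIntegral.integral_const_mul]
    congr 1; funext x; exact hFr x
  rw [this, ← mul_assoc]
  congr 1
  split_ifs with hlt
  · rw [h.coefp r w (by linarith)]
  · rw [h.coefm r w]
    rcases lt_trichotomy (w.im - u.im) 0 with h3 | h3 | h3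
    · linarith
    · rw [h3, abs_zero] at hsp; linarith
    · exfalso; linarith

lemma KD.canon {m : ℕ} (hm : 0 < m) {τ u : ℂ} (hτ : 0 < τ.im) {f : ℂ → ℂ} {e0 d0 : ℂ}
    {cp cm : ℤ → ℂ} (h : KD m τ u f e0 d0 cp cm) :
    (∀ l : ℤ, Summable fun n : ℤ => ee (-((l - 2 * m * n : ℤ) : ℂ) ^ 2 / (4 * (m : ℂ)) * τ) *
      chat m τ u cp cm (l - 2 * m * n)) ∧
    Canon m τ (AvT m f τ) (fun l => ∑' n : ℤ,
      ee (-((l - 2 * m * n : ℤ) : ℂ) ^ 2 / (4 * (m : ℂ)) * τ) *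
      chat m τ u cp cm (l - 2 * m * n)) := by
  have hmR : (m : ℝ) ≠ 0 := by exact_mod_cast hm.ne'
  have main : ∀ l : ℤ, ∃ ε0 > 0, ∀ ε : ℝ, 0 < ε → ε < ε0 →
      (IntervalIntegrable (CanonI m τ (AvT m f τ) l (ε * I)) volume 0 1 ∧
      IntervalIntegrable (CanonI m τ (AvT m f τ) l (-(ε * I))) volume 0 1) ∧
      HasSum (fun n : ℤ => ee (-(l : ℂ) ^ 2 * τ / (4 * (m : ℂ))) *
        (ee (-((l - 2 * m * n : ℤ) : ℂ) ^ 2 / (4 * (m : ℂ)) * τ) * chat m τ u cp cm (l - 2 * m * n)))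
        ((1 / 2 : ℂ) * ((∫ x in (0:ℝ)..1, CanonI m τ (AvT m f τ) l (ε * I) x) +
      ∫ x in (0:ℝ)..1, CanonI m τ (AvT m f τ) l (-(ε * I)) x)) := by
    intro l
    obtain ⟨g, hg, hgap⟩ := gap (u.im / τ.im + l / (2 * m))
    refine ⟨g * τ.im / 2, by positivity, fun ε hε hε0 => ?_⟩
    have hA : ∀ n : ℤ, (u.im / τ.im + l / (2 * m) - n) * τ.im = 0 ∨
        2 * ε < |(u.im / τ.im + l / (2 * m) - n) * τ.im| := by
      intro n
      by_cases h0 : u.im / τ.im + l / (2 * m) - n = 0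
      · left; rw [h0, zero_mul]
      · right
        rw [abs_mul, abs_of_pos hτ]
        have := mul_le_mul_of_nonneg_right (hgap n h0) hτ.le
        linarith
    have s1 : ∀ n : ℤ, ε ≤ |(ε * I : ℂ).im - (u.im / τ.im + l / (2 * m) - n) * τ.im| := by
      intro n
      have : (ε * I : ℂ).im = ε := by simp
      rw [this]
      rcases hA n with h0 | h0
      · rw [h0, sub_zero]; exact le_abs_self _
      · have := abs_sub_abs_le_abs_sub ((u.im / τ.im + l / (2 * m) - n) * τ.im) ε
        rw [abs_sub_comm, abs_of_pos hε] at this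
        linarith
    have s2 : ∀ n : ℤ, ε ≤ |(-(ε * I) : ℂ).im - (u.im / τ.im + l / (2 * m) - n) * τ.im| := by
      intro n
      have : (-(ε * I) : ℂ).im = -ε := by simp
      rw [this]
      rcases hA n with h0 | h0
      · rw [h0, sub_zero, abs_neg]; exact le_abs_self _
      · have := abs_sub_abs_le_abs_sub ((u.im / τ.im + l / (2 * m) - n) * τ.im) (-ε)
        rw [abs_sub_comm, abs_neg, abs_of_pos hε] at this
        linarith
    obtain ⟨i1, k1⟩ := h.line hm hτ l (ε * I) ε hε s1
    obtain ⟨i2, k2⟩ := h.line hm hτ l (-(ε * I)) ε hε s2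
    refine ⟨⟨i1, i2⟩, ?_⟩
    refine (hasSum_congr_C (fun n => ?_)).2 ((k1.add k2).mul_left (1 / 2 : ℂ))
    have hη : u.im / τ.im + ((l - 2 * m * n : ℤ) : ℝ) / (2 * m) = u.im / τ.im + l / (2 * m) - n := by
      push_cast; field_simp; ring
    have j1 : (ε * I : ℂ).im = ε := by simp
    have j2 : (-(ε * I) : ℂ).im = -ε := by simp
    simp only [chat, hη, j1, j2]
    rcases hA n with h0 | h0
    · have : u.im / τ.im + l / (2 * m) - n = 0 := by
        rcases mul_eq_zero.1 h0 with h1 | h1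
        · exact h1
        · exact absurd h1 hτ.ne'
      rw [this]
      simp only [zero_mul, lt_irrefl, if_false, hε, if_true, not_lt.2 (neg_nonpos.2 hε.le)]
      ring
    · rcases lt_trichotomy (u.im / τ.im + l / (2 * m) - n) 0 with h3 | h3 | h3
      · have h4 := mul_neg_of_neg_of_pos h3 hτ
        rw [abs_of_neg h4] at h0
        rw [if_neg (not_lt.2 h3.le), if_pos h3, if_pos (by linarith), if_pos (by linarith)]
        ring
      · rw [h3, zero_mul, abs_zero] at h0; exfalso; linarith
      · have h4 := mul_pos h3 hτ
        rw [abs_of_pos h4] at h0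
        rw [if_pos h3, if_neg (by linarith), if_neg (by linarith)]
        ring
  have hsum : ∀ l : ℤ, Summable fun n : ℤ => ee (-((l - 2 * m * n : ℤ) : ℂ) ^ 2 / (4 * (m : ℂ)) * τ) *
      chat m τ u cp cm (l - 2 * m * n) := by
    intro l
    obtain ⟨ε0, hε0, hmain⟩ := main l
    have := (hmain (ε0 / 2) (by positivity) (by linarith)).2.summable
    exact (summable_mul_left_iff (ee_ne_zero _)).1 this
  refine ⟨hsum, fun l => ?_⟩
  obtain ⟨ε0, hε0, hmain⟩ := main l
  have hev : ∀ᶠ ε : ℝ in 𝓝[>] (0:ℝ), 0 < ε ∧ ε < ε0 := by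
    filter_upwards [Ioo_mem_nhdsGT hε0] with ε h1 using h1
  refine ⟨hev.mono fun ε h1 => (hmain ε h1.1 h1.2).1, ?_⟩
  refine tendsto_const_nhds.congr' ?_
  filter_upwards [hev] with ε h1
  rw [← tsum_mul_left]
  exact (hmain ε h1.1 h1.2).2.tsum_eq

/-- polar data: function with elliptic law, one pole class, known Laurent and canonical data -/
structure PD (m : ℕ) (τ u : ℂ) (X : ℂ → ℂ) (e0 d0 : ℂ) (c : ℤ → ℂ) : Prop where
  ell : Ell m τ X
  diff : ∀ z, (∀ lam n : ℤ, (lam : ℂ) * τ + (z - u) ≠ n) → DifferentiableAt ℂ X z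
  laurent : Tendsto (fun ε : ℂ => 2 * (Real.pi : ℂ) * I * ε *
      (X (u + ε) - e0 / (2 * (Real.pi : ℂ) * I * ε) ^ 2)) (𝓝[≠] 0) (𝓝 d0)
  canon : Canon m τ X c

lemma KD.pd {m : ℕ} (hm : 0 < m) {τ u : ℂ} (hτ : 0 < τ.im) {f : ℂ → ℂ} {e0 d0 : ℂ}
    {cp cm : ℤ → ℂ} (h : KD m τ u f e0 d0 cp cm) :
    PD m τ u (AvT m f τ) e0 d0 (fun l => ∑' n : ℤ,
      ee (-((l - 2 * m * n : ℤ) : ℂ) ^ 2 / (4 * (m : ℂ)) * τ) *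
      chat m τ u cp cm (l - 2 * m * n)) :=
  ⟨AvT_ell m τ f h.per, h.diff_off hm hτ, h.laurent_av hm hτ, (h.canon hm hτ).2⟩

lemma PD.const_mul {m : ℕ} {τ u : ℂ} {X : ℂ → ℂ} {e0 d0 : ℂ} {c : ℤ → ℂ} (a : ℂ)
    (h : PD m τ u X e0 d0 c) : PD m τ u (fun z => a * X z) (a * e0) (a * d0) (fun l => a * c l) := by
  refine ⟨?_, ?_, ?_, h.canon.const_mul a⟩
  · intro z lam mu
    simp only
    rw [h.ell z lam mu]; ring
  · intro z hz
    exact (h.diff z hz).const_mul a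
  · refine (h.laurent.const_mul a).congr fun ε => ?_
    ring

lemma coef_series (c : ℕ → ℂ) (e : ℕ → ℤ) (w : ℂ) (f : ℝ → ℂ) (r : ℤ)
    (hs : Summable fun k => ‖c k * ee (e k * w)‖)
    (hf : ∀ x : ℝ, HasSum (fun k => c k * ee (e k * (x + w))) (f x)) :
    HasSum (fun k => if e k = r then c k else 0) (∫ x in (0:ℝ)..1, f x * ee (-(r : ℂ) * (x + w))) := by
  have hnr : ∀ (n : ℤ) (x : ℝ), ‖ee (n * (x + w))‖ = ‖ee (n * w)‖ := by
    intro n x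
    rw [norm_ee, norm_ee]
    congr 3
    simp
  have key := intervalIntegral.hasSum_integral_of_dominated_convergence (μ := volume) (a := 0) (b := 1)
    (F := fun k (x : ℝ) => c k * ee (e k * (x + w)) * ee (-(r : ℂ) * (x + w)))
    (f := fun x => f x * ee (-(r : ℂ) * (x + w)))
    (fun k _ => ‖c k * ee (e k * w)‖ * ‖ee (((-r : ℤ) : ℂ) * w)‖)
    (fun n => by
      apply Continuous.aestronglyMeasurable
      apply Continuous.mul
      · exact continuous_const.mul (continuous_ee.comp (by fun_prop))
      · exact continuous_ee.comp (by fun_prop))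
    (fun n => by
      refine Filter.Eventually.of_forall fun x hx => ?_
      simp only [norm_mul]
      rw [hnr]
      have := hnr (-r) x
      push_cast at this ⊢
      rw [this])
    (Filter.Eventually.of_forall fun x _ => hs.mul_right _)
    (by simp)
    (Filter.Eventually.of_forall fun x _ => (hf x).mul_right _)
  refine (hasSum_congr_C fun k => ?_).2 key
  have h1 : ∀ x : ℝ, c k * ee (e k * (x + w)) * ee (-(r : ℂ) * (x + w)) =
      c k * ee (((e k - r : ℤ) : ℂ) * w) * ee (((e k - r : ℤ) : ℂ) * x) := by
    intro x
    rw [mul_assoc, mul_assoc, ← ee_add, ← ee_add]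
    congr 2; push_cast; ring
  simp_rw [h1]
  rw [intervalIntegral.integral_const_mul]
  split_ifs with h2
  · simp [h2, ee_zero]
  · have h3 : ((e k - r : ℤ) : ℂ) ≠ 0 := by exact_mod_cast sub_ne_zero.2 h2
    have h4 : (2 * (Real.pi : ℂ) * I * ((e k - r : ℤ) : ℂ)) ≠ 0 :=
      mul_ne_zero Complex.two_pi_I_ne_zero h3
    have h5 : ∫ x in (0:ℝ)..1, ee (((e k - r : ℤ) : ℂ) * x) = 0 := by
      unfold ee
      simp_rw [← mul_assoc]
      rw [integral_exp_mul_complex h4]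
      have := ee_int (e k - r)
      unfold ee at this
      rw [Complex.ofReal_one, mul_one, this]
      simp
    rw [h5, mul_zero]

lemma coef_series_eq (c : ℕ → ℂ) (e : ℕ → ℤ) (he : Function.Injective e) (w : ℂ) (f : ℝ → ℂ) (r : ℤ)
    (hs : Summable fun k => ‖c k * ee (e k * w)‖)
    (hf : ∀ x : ℝ, HasSum (fun k => c k * ee (e k * (x + w))) (f x)) :
    (∀ k, e k = r → (∫ x in (0:ℝ)..1, f x * ee (-(r : ℂ) * (x + w))) = c k) ∧
    ((∀ k, e k ≠ r) → (∫ x in (0:ℝ)..1, f x * ee (-(r : ℂ) * (x + w))) = 0) := by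
  have h := coef_series c e w f r hs hf
  constructor
  · intro k hk
    have h2 : HasSum (fun k => if e k = r then c k else 0) (if e k = r then c k else 0) := by
      apply hasSum_single
      intro j hj
      rw [if_neg]
      intro hj2
      exact hj (he (hj2.trans hk.symm))
    rw [if_pos hk] at h2
    exact h.unique h2
  · intro hk
    have : (fun k => if e k = r then c k else 0) = fun _ => 0 := by
      funext k; rw [if_neg (hk k)]
    rw [this] at h
    exact h.unique hasSum_zero

lemma ee_sep (δ : ℝ) (hδ : 0 < δ) : ∃ η > 0, ∀ x : ℂ, (∀ n : ℤ, δ ≤ ‖x - n‖) → η ≤ ‖ee x - 1‖ := by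
  have h1 : ContinuousAt Complex.log 1 := continuousAt_clog (by simp)
  rw [Metric.continuousAt_iff] at h1
  have hpi := Real.pi_pos
  obtain ⟨η, hη, h2⟩ := h1 (2 * Real.pi * δ) (by positivity)
  refine ⟨η, hη, fun x hx => ?_⟩
  by_contra hlt
  push Not at hlt
  have h3 := h2 (x := ee x) (by rwa [dist_eq_norm])
  rw [Complex.log_one, dist_zero_right] at h3
  have h4 : Complex.exp (Complex.log (ee x)) = Complex.exp (2 * (Real.pi : ℂ) * I * x) := by
    rw [Complex.exp_log (ee_ne_zero x)]; rfl
  obtain ⟨n, hn⟩ := Complex.exp_eq_exp_iff_exists_int.1 h4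
  have h5 : Complex.log (ee x) = (2 * (Real.pi : ℂ) * I) * (x - ((-n : ℤ) : ℂ)) := by
    rw [hn]; push_cast; ring
  rw [h5, norm_mul] at h3
  have h6 : ‖(2 * (Real.pi : ℂ) * I)‖ = 2 * Real.pi := by
    simp [abs_of_pos hpi]
  rw [h6] at h3
  have := hx (-n)
  have := lt_of_mul_lt_mul_left h3 (by positivity)
  linarith

lemma exp_lim : Tendsto (fun t : ℂ => (Complex.exp t - 1) / t) (𝓝[≠] 0) (𝓝 1) := by
  have h := Complex.hasDerivAt_exp 0
  rw [hasDerivAt_iff_tendsto_slope] at h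
  rw [Complex.exp_zero] at h
  refine h.congr fun t => ?_
  simp [slope_def_field]

lemma exp_lim_n (n : ℂ) : Tendsto (fun t : ℂ => (Complex.exp (n * t) - 1) / t) (𝓝[≠] 0) (𝓝 n) := by
  have h : HasDerivAt (fun t : ℂ => Complex.exp (n * t)) n 0 := by
    have h2 : HasDerivAt (fun t : ℂ => n * t) n 0 := by simpa using (hasDerivAt_id (0:ℂ)).const_mul n
    simpa using h2.cexp
  rw [hasDerivAt_iff_tendsto_slope] at h
  refine h.congr fun t => ?_
  simp [slope_def_field]

lemma exp_lim2 : Tendsto (fun t : ℂ => (Complex.exp t - 1 - t) / t ^ 2) (𝓝[≠] 0) (𝓝 (1 / 2)) := by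
  rw [tendsto_iff_norm_sub_tendsto_zero]
  have h0 : Tendsto (fun t : ℂ => ‖t‖) (𝓝[≠] 0) (𝓝 0) := by
    have := (continuous_norm (E := ℂ)).tendsto 0
    rw [norm_zero] at this
    exact this.mono_left nhdsWithin_le_nhds
  refine squeeze_zero' (Filter.Eventually.of_forall fun t => norm_nonneg _) ?_ h0
  filter_upwards [self_mem_nhdsWithin, nhdsWithin_le_nhds (Metric.ball_mem_nhds (0:ℂ) one_pos)] with t ht ht1
  have ht' : t ≠ 0 := ht
  rw [Metric.mem_ball, dist_zero_right] at ht1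
  have h1 := Complex.exp_bound ht1.le (n := 3) (by norm_num)
  simp [Finset.sum_range_succ, Nat.factorial] at h1
  have h2 : (Complex.exp t - 1 - t) / t ^ 2 - 1 / 2 = (Complex.exp t - (1 + t + t ^ 2 / 2)) / t ^ 2 := by
    field_simp
    ring
  rw [h2, norm_div, norm_pow]
  have h3 : 0 < ‖t‖ := norm_pos_iff.2 ht'
  rw [div_le_iff₀ (by positivity)]
  refine h1.trans ?_
  have : 0 < ‖t‖ ^ 3 := by positivity
  nlinarith

lemma laurent_kernel (n a0 a1 a2 : ℂ) : Tendsto (fun t : ℂ => t * (Complex.exp (n * t) *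
    (a0 + a1 / (Complex.exp t - 1) + a2 / (Complex.exp t - 1) ^ 2) - a2 / t ^ 2)) (𝓝[≠] 0)
    (𝓝 (a1 + (n - 1) * a2)) := by
  have hE : Tendsto (fun t : ℂ => Complex.exp (n * t)) (𝓝[≠] 0) (𝓝 1) := by
    have : Continuous (fun t : ℂ => Complex.exp (n * t)) := by fun_prop
    have := this.tendsto 0
    simp only [mul_zero, Complex.exp_zero] at this
    exact this.mono_left nhdsWithin_le_nhds
  have hT : Tendsto (fun t : ℂ => t) (𝓝[≠] 0) (𝓝 0) := tendsto_id.mono_left nhdsWithin_le_nhds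
  have hinv : Tendsto (fun t : ℂ => t / (Complex.exp t - 1)) (𝓝[≠] 0) (𝓝 1) := by
    have := exp_lim.inv₀ one_ne_zero
    simpa using this
  have h2 : Tendsto (fun t : ℂ => (Complex.exp (n * t) - ((Complex.exp t - 1) / t) ^ 2) / t) (𝓝[≠] 0)
      (𝓝 (n - 1 / 2 * (1 + 1))) := by
    have h3 := (exp_lim_n n).sub (exp_lim2.mul (exp_lim.add_const 1))
    refine h3.congr' ?_
    filter_upwards [self_mem_nhdsWithin] with t ht
    have ht' : t ≠ 0 := ht
    field_simp
    ring
  have h4 := (((hT.mul hE).mul_const a0).add ((hE.mul hinv).mul_const a1)).add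
    (((hinv.pow 2).mul h2).mul_const a2)
  have h5 : (0 * 1 * a0 + 1 * 1 * a1 + 1 ^ 2 * (n - 1 / 2 * (1 + 1)) * a2 : ℂ) = a1 + (n - 1) * a2 := by ring
  rw [h5] at h4
  refine h4.congr' ?_
  have hne : ∀ᶠ t : ℂ in 𝓝[≠] 0, t / (Complex.exp t - 1) ≠ 0 := hinv.eventually_ne one_ne_zero
  filter_upwards [self_mem_nhdsWithin, hne] with t ht hne
  have ht' : t ≠ 0 := ht
  have h6 : Complex.exp t - 1 ≠ 0 := by
    intro h; rw [h] at hne; simp at hne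
  field_simp
  ring

lemma tendsto_two_pi_I : Tendsto (fun ε : ℂ => 2 * (Real.pi : ℂ) * I * ε) (𝓝[≠] 0) (𝓝[≠] 0) := by
  apply tendsto_nhdsWithin_of_tendsto_nhds_of_eventually_within
  · have : Continuous (fun ε : ℂ => 2 * (Real.pi : ℂ) * I * ε) := by fun_prop
    have := this.tendsto 0
    rw [mul_zero] at this
    exact this.mono_left nhdsWithin_le_nhds
  · filter_upwards [self_mem_nhdsWithin] with ε hε
    exact mul_ne_zero Complex.two_pi_I_ne_zero hε

/-- rational kernel -/
def RK (n : ℤ) (a0 a1 a2 : ℂ) (y : ℂ) : ℂ := y ^ n * (a0 + a1 / (y - 1) + a2 / (y - 1) ^ 2)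

def RKp (n : ℤ) (a0 a1 a2 : ℂ) (r : ℤ) : ℂ :=
  if r < n then 0 else if r = n then a0 - a1 + a2 else -a1 + ((r - n : ℤ) + 1) * a2
def RKm (n : ℤ) (a0 a1 a2 : ℂ) (r : ℤ) : ℂ :=
  if n < r then 0 else if r = n then a0 else a1 + ((n - r : ℤ) - 1) * a2

lemma hasSum_p (a0 a1 a2 y : ℂ) (hy : ‖y‖ < 1) :
    Summable (fun k : ℕ => ‖(-a1 + ((k:ℂ) + 1) * a2 + if k = 0 then a0 else 0) * y ^ k‖) ∧
    HasSum (fun k : ℕ => (-a1 + ((k:ℂ) + 1) * a2 + if k = 0 then a0 else 0) * y ^ k)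
      (a0 + a1 / (y - 1) + a2 / (y - 1) ^ 2) := by
  have h1 := hasSum_geometric_of_norm_lt_one hy
  have h2 := hasSum_coe_mul_geometric_of_norm_lt_one hy
  have h3 : HasSum (fun k : ℕ => if k = 0 then a0 else 0) a0 := hasSum_ite_eq 0 a0
  have hne : y - 1 ≠ 0 := by
    intro h; rw [sub_eq_zero.1 h] at hy; simp at hy
  have hne' : 1 - y ≠ 0 := by
    intro h; apply hne; linear_combination -h
  have hS : HasSum (fun k : ℕ => (-a1 + ((k:ℂ) + 1) * a2 + if k = 0 then a0 else 0) * y ^ k)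
      (a0 + a1 / (y - 1) + a2 / (y - 1) ^ 2) := by
    have h4 := ((h1.mul_left (-a1 + a2)).add (h2.mul_left a2)).add h3
    have h5 : (-a1 + a2) * (1 - y)⁻¹ + a2 * (y / (1 - y) ^ 2) + a0 =
        a0 + a1 / (y - 1) + a2 / (y - 1) ^ 2 := by
      have e1 : a1 / (y - 1) = -(a1 / (1 - y)) := by rw [← neg_sub 1 y, div_neg]
      have e2 : (y - 1) ^ 2 = (1 - y) ^ 2 := by ring
      rw [e1, e2]
      field_simp
      ring
    rw [h5] at h4
    refine (hasSum_congr_C fun k => ?_).2 h4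
    by_cases hk : k = 0
    · subst hk; simp
    · simp only [hk, if_false]; ring
  exact ⟨hS.summable.norm, hS⟩

lemma hasSum_m (a0 a1 a2 y : ℂ) (hy : 1 < ‖y‖) :
    Summable (fun k : ℕ => ‖(a1 + ((k:ℂ) - 1) * a2 + if k = 0 then (a0 - a1 + a2) else 0) * y⁻¹ ^ k‖) ∧
    HasSum (fun k : ℕ => (a1 + ((k:ℂ) - 1) * a2 + if k = 0 then (a0 - a1 + a2) else 0) * y⁻¹ ^ k)
      (a0 + a1 / (y - 1) + a2 / (y - 1) ^ 2) := by
  have hy' : ‖y⁻¹‖ < 1 := by rw [norm_inv]; exact inv_lt_one_of_one_lt₀ hy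
  have h1 := hasSum_geometric_of_norm_lt_one hy'
  have h2 := hasSum_coe_mul_geometric_of_norm_lt_one hy'
  have h3 : HasSum (fun k : ℕ => if k = 0 then (a0 - a1 + a2) else 0) (a0 - a1 + a2) := hasSum_ite_eq 0 _
  have hy0 : y ≠ 0 := by
    intro h; rw [h] at hy; simp at hy; linarith
  have hne : y - 1 ≠ 0 := by
    intro h; rw [sub_eq_zero.1 h] at hy; simp at hy
  have hS : HasSum (fun k : ℕ => (a1 + ((k:ℂ) - 1) * a2 + if k = 0 then (a0 - a1 + a2) else 0) * y⁻¹ ^ k)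
      (a0 + a1 / (y - 1) + a2 / (y - 1) ^ 2) := by
    have h4 := ((h1.mul_left (a1 - a2)).add (h2.mul_left a2)).add h3
    have e3 : 1 - y⁻¹ = (y - 1) / y := by field_simp
    have h5 : (a1 - a2) * (1 - y⁻¹)⁻¹ + a2 * (y⁻¹ / (1 - y⁻¹) ^ 2) + (a0 - a1 + a2) =
        a0 + a1 / (y - 1) + a2 / (y - 1) ^ 2 := by
      rw [e3]
      field_simp
      ring
    rw [h5] at h4
    refine (hasSum_congr_C fun k => ?_).2 h4
    by_cases hk : k = 0
    · subst hk; simp; ring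
    · simp only [hk, if_false]; ring
  exact ⟨hS.summable.norm, hS⟩

lemma norm_ee_lt_one {x : ℂ} (h : 0 < x.im) : ‖ee x‖ < 1 := by
  rw [norm_ee, Real.exp_lt_one_iff]
  have := Real.pi_pos
  have : 0 < 2 * Real.pi * x.im := by positivity
  linarith

lemma one_lt_norm_ee {x : ℂ} (h : x.im < 0) : 1 < ‖ee x‖ := by
  rw [norm_ee, Real.one_lt_exp_iff]
  have := Real.pi_pos
  have : 0 < 2 * Real.pi * (-x.im) := by
    have : 0 < -x.im := by linarith
    positivity
  linarith

lemma KD_RK (m : ℕ) {τ : ℂ} (hτ : 0 < τ.im) (u : ℂ) (n : ℤ) (a0 a1 a2 : ℂ) :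
    KD m τ u (fun z => RK n a0 a1 a2 (ee (z - u))) a2 (a1 + (n - 1) * a2)
      (fun r => ee (-r * u) * RKp n a0 a1 a2 r) (fun r => ee (-r * u) * RKm n a0 a1 a2 r) := by
  have hsplit : ∀ (r : ℤ) (w : ℂ), ∫ x in (0:ℝ)..1, RK n a0 a1 a2 (ee (x + w - u)) * ee (-(r : ℂ) * (x + w)) =
      ee (-r * u) * ∫ x in (0:ℝ)..1, RK n a0 a1 a2 (ee (x + (w - u))) * ee (-(r : ℂ) * (x + (w - u))) := by
    intro r w
    rw [← intervalIntegral.integral_const_mul]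
    congr 1; funext x
    rw [show (x:ℂ) + w - u = x + (w - u) by ring,
      show -(r : ℂ) * (x + w) = -r * u + -r * (x + (w - u)) by ring, ee_add (-r * u)]
    ring
  refine ⟨?_, ?_, ?_, ?_, ?_, ?_⟩
  · intro z
    rw [show z + 1 - u = z - u + ((1:ℤ):ℂ) by push_cast; ring, ee_add_int]
  · intro z hz
    have h1 : ee (z - u) - 1 ≠ 0 := by
      intro h
      obtain ⟨k, hk⟩ := (ee_eq_one_iff _).1 (sub_eq_zero.1 h)
      exact hz k (by rw [← hk]; ring)
    have hd : DifferentiableAt ℂ (fun z => ee (z - u)) z :=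
      (differentiable_ee _).comp z (by fun_prop)
    simp only [RK]
    have hd1 : DifferentiableAt ℂ (fun z => ee (z - u) - 1) z := hd.sub_const 1
    refine DifferentiableAt.mul (hd.zpow (Or.inl (ee_ne_zero _))) ?_
    refine DifferentiableAt.add (DifferentiableAt.add (differentiableAt_const _) ?_) ?_
    · exact (differentiableAt_const _).div hd1 h1
    · exact (differentiableAt_const _).div (hd1.pow 2) (pow_ne_zero _ h1)
  · intro δ hδ
    obtain ⟨η, hη, hs⟩ := ee_sep δ hδ
    refine ⟨‖a0‖ + ‖a1‖ / η + ‖a2‖ / η ^ 2, 2 * Real.pi * |(n:ℝ)|, fun z hz => ?_⟩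
    have h1 := hs (z - u) hz
    simp only [RK]
    rw [norm_mul, mul_comm]
    refine mul_le_mul ?_ ?_ (norm_nonneg _) (by positivity)
    · refine (norm_add_le _ _).trans (add_le_add ((norm_add_le _ _).trans (add_le_add le_rfl ?_)) ?_)
      · rw [norm_div]; gcongr
      · rw [norm_div, norm_pow]; gcongr
    · rw [ee_zpow, norm_ee]
      apply Real.exp_le_exp.2
      have h2 : ((n:ℂ) * (z - u)).im = n * (z - u).im := by simp
      rw [h2]
      have h3 : -(n * (z - u).im) ≤ |(n:ℝ)| * |(z - u).im| := by
        rw [← abs_mul]; exact neg_le_abs _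
      have h4 : 0 ≤ Real.pi * m * (z - u).im ^ 2 / τ.im := by
        have := Real.pi_pos
        positivity
      have := Real.pi_pos
      nlinarith
  · refine ((laurent_kernel n a0 a1 a2).comp tendsto_two_pi_I).congr fun ε => ?_
    simp only [Function.comp_apply, RK, add_sub_cancel_left]
    rw [ee_zpow]
    simp only [ee]
    rw [show 2 * (Real.pi:ℂ) * I * (n * ε) = n * (2 * (Real.pi:ℂ) * I * ε) by ring]
  · intro r w hw
    rw [hsplit]
    congr 1
    have hy : ∀ x : ℝ, ‖ee (x + (w - u))‖ < 1 := fun x => norm_ee_lt_one (by simpa using hw)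
    have key := coef_series_eq (fun k : ℕ => (-a1 + ((k:ℂ) + 1) * a2 + if k = 0 then a0 else 0))
      (fun k => n + k) (fun a b hab => by simpa using hab) (w - u)
      (fun x => RK n a0 a1 a2 (ee (x + (w - u)))) r ?_ ?_
    · unfold RKp
      split_ifs with h1 h2
      · exact key.2 fun k hk => by omega
      · rw [key.1 0 (by simp [h2])]; simp; ring
      · rw [key.1 (r - n).toNat (by simp; omega), if_neg (by omega), add_zero]
        have : (((r - n).toNat : ℕ) : ℂ) = ((r - n : ℤ) : ℂ) := by
          have : (((r - n).toNat : ℕ) : ℤ) = r - n := by omega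
          rw [← Int.cast_natCast, this]
        rw [this]
    · have := (hasSum_p a0 a1 a2 _ (hy 0)).1.mul_left ‖ee (n * (w - u))‖
      refine this.congr fun k => ?_
      rw [← norm_mul]
      congr 1
      have h1 : ee (((n + k : ℤ):ℂ) * (w - u)) = ee (n * (w - u)) * ee (w - u) ^ k := by
        rw [← zpow_natCast, ee_zpow, ← ee_add]; congr 1; push_cast; ring
      simp only [Complex.ofReal_zero, zero_add]
      rw [h1]; ring
    · intro x
      have := (hasSum_p a0 a1 a2 _ (hy x)).2.mul_left (ee (n * (x + (w - u))))
      simp only [RK]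
      rw [ee_zpow]
      refine (hasSum_congr_C fun k => ?_).1 this
      have h1 : ee (((n + k : ℤ):ℂ) * (x + (w - u))) = ee (n * (x + (w - u))) * ee (x + (w - u)) ^ k := by
        rw [← zpow_natCast, ee_zpow, ← ee_add]; congr 1; push_cast; ring
      rw [h1]; ring
  · intro r w hw
    rw [hsplit]
    congr 1
    have hy : ∀ x : ℝ, 1 < ‖ee (x + (w - u))‖ := fun x => one_lt_norm_ee (by simpa using hw)
    have key := coef_series_eq (fun k : ℕ => (a1 + ((k:ℂ) - 1) * a2 + if k = 0 then (a0 - a1 + a2) else 0))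
      (fun k => n - k) (fun a b hab => by simpa using hab) (w - u)
      (fun x => RK n a0 a1 a2 (ee (x + (w - u)))) r ?_ ?_
    · unfold RKm
      split_ifs with h1 h2
      · exact key.2 fun k hk => by omega
      · rw [key.1 0 (by simp [h2])]; simp; ring
      · rw [key.1 (n - r).toNat (by simp; omega), if_neg (by omega), add_zero]
        have : (((n - r).toNat : ℕ) : ℂ) = ((n - r : ℤ) : ℂ) := by
          have : (((n - r).toNat : ℕ) : ℤ) = n - r := by omega
          rw [← Int.cast_natCast, this]
        rw [this]
    · have := (hasSum_m a0 a1 a2 _ (hy 0)).1.mul_left ‖ee (n * (w - u))‖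
      refine this.congr fun k => ?_
      rw [← norm_mul]
      congr 1
      have h1 : ee (((n - k : ℤ):ℂ) * (w - u)) = ee (n * (w - u)) * (ee (w - u))⁻¹ ^ k := by
        rw [← ee_neg, ← zpow_natCast, ee_zpow, ← ee_add]; congr 1; push_cast; ring
      simp only [Complex.ofReal_zero, zero_add]
      rw [h1]; ring
    · intro x
      have := (hasSum_m a0 a1 a2 _ (hy x)).2.mul_left (ee (n * (x + (w - u))))
      simp only [RK]
      rw [ee_zpow]
      refine (hasSum_congr_C fun k => ?_).1 this
      have h1 : ee (((n - k : ℤ):ℂ) * (x + (w - u))) = ee (n * (x + (w - u))) * (ee (x + (w - u)))⁻¹ ^ k := by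
        rw [← ee_neg, ← zpow_natCast, ee_zpow, ← ee_add]; congr 1; push_cast; ring
      rw [h1]; ring

lemma zpt_im (s : ℚ × ℚ) (τ : ℂ) : (zpt s τ).im = s.1 * τ.im := by
  simp [zpt]

lemma chat_zero {m : ℕ} (hm : 0 < m) {τ : ℂ} (hτ : 0 < τ.im) (s : ℚ × ℚ) (cp cm : ℤ → ℂ) (r : ℤ)
    (h1 : ((-(2 * (m : ℚ) * s.1) : ℚ) : ℝ) < r → cm r = 0)
    (h2 : (r : ℝ) < ((-(2 * (m : ℚ) * s.1) : ℚ) : ℝ) → cp r = 0)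
    (h3 : (r : ℝ) = ((-(2 * (m : ℚ) * s.1) : ℚ) : ℝ) → cp r + cm r = 0) :
    chat m τ (zpt s τ) cp cm r = 0 := by
  have hm' : (0:ℝ) < m := by exact_mod_cast hm
  have he : (zpt s τ).im / τ.im + r / (2 * m) = (r - ((-(2 * (m : ℚ) * s.1) : ℚ) : ℝ)) / (2 * m) := by
    rw [zpt_im]; push_cast; field_simp; ring
  unfold chat
  rw [he]
  split_ifs with g1 g2
  · apply h1
    have := (div_pos_iff_of_pos_right (by positivity)).1 g1
    linarith
  · apply h2
    have := (div_neg_iff).1 g2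
    rcases this with h | h
    · have : 0 < 2 * (m:ℝ) := by positivity
      linarith [h.2]
    · linarith [h.1]
  · rw [h3, zero_div]
    have : (r - ((-(2 * (m : ℚ) * s.1) : ℚ) : ℝ)) / (2 * m) = 0 := le_antisymm (not_lt.1 g1) (not_lt.1 g2)
    have := (div_eq_zero_iff.1 this).resolve_right (by positivity)
    linarith

lemma lattice_y_ne {τ z u : ℂ} (hz : ∀ lam n : ℤ, (lam : ℂ) * τ + (z - u) ≠ n) (lam : ℤ) :
    ee (lam * τ + z - u) - 1 ≠ 0 := by
  intro h
  obtain ⟨n, hn⟩ := (ee_eq_one_iff _).1 (sub_eq_zero.1 h)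
  exact hz lam n (by rw [← hn]; ring)

lemma appellA_pd {m : ℕ} (hm : 0 < m) {τ : ℂ} (hτ : 0 < τ.im) (s : ℚ × ℚ) :
    ∃ X, PD m τ (zpt s τ) X 0 (ee (-(m : ℂ) * (s.1 : ℚ) * zpt s τ)) (fun _ => 0) ∧
      ∀ z, (∀ lam n : ℤ, (lam : ℂ) * τ + (z - zpt s τ) ≠ n) → AppellA m s τ z = X z := by
  set c : ℝ := ((-(2 * (m : ℚ) * s.1) : ℚ) : ℝ) with hc
  obtain ⟨a0, hRc, hlow, hhigh, hmid⟩ : ∃ a0 : ℂ, (∀ y : ℂ, y - 1 ≠ 0 → Rc c y = RK ⌈c⌉ a0 1 0 y) ∧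
      (∀ r : ℤ, (r:ℝ) < c → RKp ⌈c⌉ a0 1 0 r = 0) ∧ (∀ r : ℤ, c < r → RKm ⌈c⌉ a0 1 0 r = 0) ∧
      (∀ r : ℤ, (r : ℝ) = c → RKp ⌈c⌉ a0 1 0 r + RKm ⌈c⌉ a0 1 0 r = 0) := by
    have hlow : ∀ a0, ∀ r : ℤ, (r:ℝ) < c → RKp ⌈c⌉ a0 1 0 r = 0 := by
      intro a0 r hr
      have : r < ⌈c⌉ := Int.lt_ceil.2 hr
      simp [RKp, this]
    by_cases hci : (⌈c⌉ : ℝ) = c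
    · refine ⟨1 / 2, ?_, hlow _, ?_, ?_⟩
      · intro y hy
        rw [Rc, if_pos hci, RK]
        field_simp
        ring
      · intro r hr
        have : ⌈c⌉ < r := by
          rw [← hci] at hr; exact_mod_cast hr
        simp [RKm, this]
      · intro r hr
        have : r = ⌈c⌉ := by
          rw [← hci] at hr; exact_mod_cast hr
        simp [RKm, RKp, this]
        norm_num
    · refine ⟨0, ?_, hlow _, ?_, ?_⟩
      · intro y hy
        rw [Rc, if_neg hci, RK]
        field_simp
        ring
      · intro r hr
        have h1 : ⌈c⌉ ≤ r := Int.ceil_le.2 hr.le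
        rcases h1.lt_or_eq with h2 | h2
        · simp [RKm, h2]
        · simp [RKm, h2]
      · intro r hr
        exfalso; apply hci; rw [← hr]; simp
  have hK := (KD_RK m hτ (zpt s τ) ⌈c⌉ a0 1 0).pd hm hτ
  have hP := hK.const_mul (ee (-(m : ℂ) * (s.1 : ℚ) * zpt s τ))
  refine ⟨fun z => ee (-(m : ℂ) * (s.1 : ℚ) * zpt s τ) *
      AvT m (fun z => RK ⌈c⌉ a0 1 0 (ee (z - zpt s τ))) τ z, ?_, ?_⟩
  rotate_left
  · intro z hz
    have : AppellA m s τ z = ee (-(m : ℂ) * (s.1 : ℚ) * zpt s τ) *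
      AvT m (fun z => RK ⌈c⌉ a0 1 0 (ee (z - zpt s τ))) τ z := by
      unfold AppellA Av AvT
      congr 2; funext lam
      beta_reduce
      rw [← hc, ← ee_sub, hRc _ (lattice_y_ne hz lam)]
    exact this
  · convert hP using 1
    · ring
    · ring
    · funext l
      have : ∀ r, chat m τ (zpt s τ) (fun r => ee (-r * zpt s τ) * RKp ⌈c⌉ a0 1 0 r)
          (fun r => ee (-r * zpt s τ) * RKm ⌈c⌉ a0 1 0 r) r = 0 := by
        intro r
        apply chat_zero hm hτ
        · intro h; rw [hhigh r h, mul_zero]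
        · intro h; rw [hlow r h, mul_zero]
        · intro h; rw [← mul_add, hmid r h, mul_zero]
      simp only [this, mul_zero, tsum_zero]

lemma appellB_pd {m : ℕ} (hm : 0 < m) {τ : ℂ} (hτ : 0 < τ.im) (s : ℚ × ℚ) :
    ∃ X, PD m τ (zpt s τ) X (ee (-(m : ℂ) * (s.1 : ℚ) * zpt s τ))
      (-(2 * (m : ℂ) * (s.1 : ℚ)) * ee (-(m : ℂ) * (s.1 : ℚ) * zpt s τ)) (fun _ => 0) ∧
      ∀ z, (∀ lam n : ℤ, (lam : ℂ) * τ + (z - zpt s τ) ≠ n) → AppellB m s τ z = X z := by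
  set c : ℝ := ((-(2 * (m : ℚ) * s.1) : ℚ) : ℝ) with hc
  set n : ℤ := ⌊c⌋ + 1 with hn
  set a1 : ℂ := (c : ℂ) - (⌊c⌋ : ℂ) with ha1
  have hRc : ∀ y : ℂ, Rc2 c y = RK n 0 a1 1 y := by
    intro y
    simp only [Rc2, RK]
    rw [← hn, ← ha1]; ring
  have hlow' : ∀ r : ℤ, (r:ℝ) ≤ c → RKp n 0 a1 1 r = 0 := by
    intro r hr
    have : r ≤ ⌊c⌋ := Int.le_floor.2 hr
    have : r < n := by omega
    simp [RKp, this]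
  have hhigh : ∀ r : ℤ, c < r → RKm n 0 a1 1 r = 0 := by
    intro r hr
    have : ⌊c⌋ < r := Int.floor_lt.2 hr
    have h1 : n ≤ r := by omega
    rcases h1.lt_or_eq with h2 | h2
    · simp [RKm, h2]
    · simp [RKm, h2]
  have hmid : ∀ r : ℤ, (r : ℝ) = c → RKp n 0 a1 1 r + RKm n 0 a1 1 r = 0 := by
    intro r hr
    rw [hlow' r hr.le, zero_add]
    have h1 : ⌊c⌋ = r := by rw [← hr]; simp
    have h2 : a1 = 0 := by
      rw [ha1, h1, ← hr]; simp
    have h3 : n = r + 1 := by omega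
    rw [h2, h3]
    simp [RKm]
  have hK := (KD_RK m hτ (zpt s τ) n 0 a1 1).pd hm hτ
  have hP := hK.const_mul (ee (-(m : ℂ) * (s.1 : ℚ) * zpt s τ))
  refine ⟨fun z => ee (-(m : ℂ) * (s.1 : ℚ) * zpt s τ) *
      AvT m (fun z => RK n 0 a1 1 (ee (z - zpt s τ))) τ z, ?_, ?_⟩
  rotate_left
  · intro z hz
    have : AppellB m s τ z = ee (-(m : ℂ) * (s.1 : ℚ) * zpt s τ) *
      AvT m (fun z => RK n 0 a1 1 (ee (z - zpt s τ))) τ z := by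
      unfold AppellB Av AvT
      congr 2; funext lam
      beta_reduce
      rw [← hc, ← ee_sub, hRc _]
    exact this
  · convert hP using 1
    · ring
    · rw [ha1, hn, hc]; push_cast; ring
    · funext l
      have : ∀ r, chat m τ (zpt s τ) (fun r => ee (-r * zpt s τ) * RKp n 0 a1 1 r)
          (fun r => ee (-r * zpt s τ) * RKm n 0 a1 1 r) r = 0 := by
        intro r
        apply chat_zero hm hτ
        · intro h; rw [hhigh r h, mul_zero]
        · intro h; rw [hlow' r h.le, mul_zero]
        · intro h; rw [← mul_add, hmid r h, mul_zero]
      simp only [this, mul_zero, tsum_zero]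

lemma KD_theta (m : ℕ) {τ : ℂ} (hτ : 0 < τ.im) (u : ℂ) (l : ℤ) :
    KD m τ u (fun z => ee (l * z)) 0 0
      (fun r => if l = r then 1 else 0) (fun r => if l = r then 1 else 0) := by
  have hd : Differentiable ℂ (fun z : ℂ => ee (l * z)) :=
    differentiable_ee.comp (by fun_prop)
  have hcoef : ∀ (r : ℤ) (w : ℂ), ∫ x in (0:ℝ)..1, ee (l * (x + w)) * ee (-(r : ℂ) * (x + w)) =
      if l = r then 1 else 0 := by
    intro r w
    have key := coef_series_eq (fun k : ℕ => if k = 0 then 1 else 0)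
      (fun k => l + k) (fun a b hab => by simpa using hab) w
      (fun x => ee (l * (x + w))) r ?_ ?_
    · split_ifs with h1
      · rw [key.1 0 (by simp [h1])]; simp
      · by_cases h2 : ∃ k : ℕ, l + k = r
        · obtain ⟨k, hk⟩ := h2
          rw [key.1 k hk, if_neg]
          rintro rfl; apply h1; simpa using hk
        · push Not at h2
          exact key.2 h2
    · apply summable_of_ne_finset_zero (s := {0})
      intro k hk
      have : k ≠ 0 := by simpa using hk
      simp [this]
    · intro x
      have h1 := hasSum_single (f := fun k : ℕ => (if k = 0 then (1:ℂ) else 0) * ee (((l + k : ℤ):ℂ) * (x + w))) 0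
        (fun k hk => by simp [hk])
      simpa using h1
  refine ⟨?_, fun z _ => hd z, ?_, ?_, fun r w _ => hcoef r w, fun r w _ => hcoef r w⟩
  · intro z
    rw [show (l:ℂ) * (z + 1) = l * z + l by ring, ee_add_int]
  · intro δ hδ
    refine ⟨Real.exp (2 * Real.pi * (|(l:ℝ)| * |u.im|)), 2 * Real.pi * |(l:ℝ)|, fun z hz => ?_⟩
    rw [norm_ee, ← Real.exp_add]
    apply Real.exp_le_exp.2
    have h2 : ((l:ℂ) * z).im = l * (z - u).im + l * u.im := by simp; ring
    rw [h2]
    have h3 : -(l * (z - u).im) ≤ |(l:ℝ)| * |(z - u).im| := by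
      rw [← abs_mul]; exact neg_le_abs _
    have h5 : -(l * u.im) ≤ |(l:ℝ)| * |u.im| := by
      rw [← abs_mul]; exact neg_le_abs _
    have h4 : 0 ≤ Real.pi * m * (z - u).im ^ 2 / τ.im := by
      have := Real.pi_pos
      positivity
    have := Real.pi_pos
    nlinarith
  · have : Continuous (fun ε : ℂ => 2 * (Real.pi : ℂ) * I * ε * ee (l * (u + ε))) :=
      (by fun_prop : Continuous fun ε : ℂ => 2 * (Real.pi : ℂ) * I * ε).mul (hd.continuous.comp (by fun_prop))
    have := (this.tendsto 0).mono_left (nhdsWithin_le_nhds (s := {0}ᶜ))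
    simpa using this

lemma jTheta_eq {m : ℕ} (hm : 0 < m) (τ z : ℂ) (l : ℤ) :
    jTheta m l τ z = ee ((l : ℂ) ^ 2 / (4 * (m : ℂ)) * τ) * AvT m (fun z => ee (l * z)) τ z := by
  have hm' : (m : ℂ) ≠ 0 := by exact_mod_cast hm.ne'
  unfold jTheta AvT
  rw [← tsum_mul_left]
  congr 1; funext n
  rw [← ee_add, ← ee_add]
  congr 1; field_simp; ring

lemma jTheta_pd {m : ℕ} (hm : 0 < m) {τ : ℂ} (hτ : 0 < τ.im) (u : ℂ) (l : ℤ) :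
    PD m τ u (jTheta m l τ) 0 0 (fun r => if ∃ n : ℤ, r - 2 * m * n = l then 1 else 0) := by
  have hm' : (m : ℂ) ≠ 0 := by exact_mod_cast hm.ne'
  have hK := ((KD_theta m hτ u l).pd hm hτ).const_mul (ee ((l : ℂ) ^ 2 / (4 * (m : ℂ)) * τ))
  have h1 : jTheta m l τ = fun z => ee ((l : ℂ) ^ 2 / (4 * (m : ℂ)) * τ) * AvT m (fun z => ee (l * z)) τ z :=
    funext fun z => jTheta_eq hm τ z l
  rw [h1]
  convert hK using 1
  · ring
  · ring
  · funext r
    have hch : ∀ q, chat m τ u (fun r => if l = r then 1 else 0) (fun r => if l = r then 1 else 0) q =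
        if l = q then 1 else 0 := by
      intro q; unfold chat; beta_reduce
      by_cases h : l = q
      · simp only [if_pos h]
        split_ifs <;> norm_num
      · simp only [if_neg h]
        split_ifs <;> norm_num
    simp_rw [hch]
    split_ifs with h2
    · obtain ⟨n, hn⟩ := h2
      rw [tsum_eq_single n]
      · rw [if_pos hn.symm, mul_one, ← ee_add, hn, ← ee_zero]
        congr 1; field_simp; ring
      · intro k hk
        rw [if_neg, mul_zero]
        intro h3
        apply hk
        have h4 : 2 * (m:ℤ) * (k - n) = 0 := by linear_combination hn - h3.symm
        have : (2 * (m:ℤ)) ≠ 0 := by positivity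
        have := (mul_eq_zero.1 h4).resolve_left this
        omega
    · push Not at h2
      have : ∀ n : ℤ, ¬ (l = r - 2 * m * n) := fun n h => h2 n h.symm
      simp only [this, if_false, mul_zero, tsum_zero]

lemma jTheta_diff {m : ℕ} (hm : 0 < m) {τ : ℂ} (hτ : 0 < τ.im) (l : ℤ) :
    Differentiable ℂ (jTheta m l τ) := by
  intro z
  refine (jTheta_pd hm hτ (z + 1 / 2) l).diff z ?_
  intro lam n h
  have h1 := congrArg Complex.im h
  simp at h1
  rcases h1 with h1 | h1
  · subst h1
    have h2 := congrArg Complex.re h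
    simp at h2
    have h3 : (2 * n + 1 : ℝ) = 0 := by linarith
    have h4 : 2 * n + 1 = 0 := by exact_mod_cast h3
    omega
  · exact hτ.ne' h1

def Gk (t b : ℝ) (j : ℕ) (v : ℂ) : ℂ :=
  Complex.exp (-(Real.pi * t : ℝ) * v ^ 2) * ee (-((b : ℂ) * v)) / (2 * (Real.pi : ℂ) * I * v) ^ j

lemma gauss_line {t : ℝ} (ht : 0 < t) (b : ℝ) (w : ℂ) :
    ∫ x : ℝ, Complex.exp (-(Real.pi * t : ℝ) * (x + w) ^ 2) * ee (-((b : ℂ) * (x + w))) =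
      ((Real.sqrt t)⁻¹ * Real.exp (-(Real.pi * b ^ 2 / t)) : ℝ) := by
  have hb : (-(Real.pi * t : ℝ) : ℂ).re < 0 := by
    rw [Complex.neg_re, Complex.ofReal_re]
    have := Real.pi_pos
    nlinarith [mul_pos this ht]
  have h := integral_cexp_quadratic hb (-(2 * Real.pi * t) * w - 2 * Real.pi * I * b)
    (-(Real.pi * t) * w ^ 2 - 2 * Real.pi * I * b * w)
  have ht' : (t : ℂ) ≠ 0 := by exact_mod_cast ht.ne'
  have hpi : (Real.pi : ℂ) ≠ 0 := by exact_mod_cast Real.pi_ne_zero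
  have h1 : ∀ x : ℝ, Complex.exp (-(Real.pi * t : ℝ) * (x + w) ^ 2) * ee (-((b : ℂ) * (x + w))) =
      Complex.exp (-(Real.pi * t : ℝ) * (x : ℂ) ^ 2 + (-(2 * Real.pi * t) * w - 2 * Real.pi * I * b) * x +
        (-(Real.pi * t) * w ^ 2 - 2 * Real.pi * I * b * w)) := by
    intro x
    unfold ee
    rw [← Complex.exp_add]
    congr 1
    push_cast
    ring
  simp_rw [h1]
  rw [h]
  have h2 : ((Real.pi : ℂ) / -(-(Real.pi * t : ℝ) : ℂ)) ^ (1 / 2 : ℂ) = ((Real.sqrt t)⁻¹ : ℝ) := by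
    have e1 : ((Real.pi : ℂ) / -(-(Real.pi * t : ℝ) : ℂ)) = ((t⁻¹ : ℝ) : ℂ) := by
      push_cast; field_simp
    rw [e1, show (1 / 2 : ℂ) = ((1 / 2 : ℝ) : ℂ) by push_cast; ring,
      ← Complex.ofReal_cpow (by positivity), ← Real.sqrt_eq_rpow, Real.sqrt_inv]
  rw [h2]
  push_cast
  congr 2
  field_simp
  ring_nf
  rw [Complex.I_sq]
  ring

lemma ee_integral1 {v : ℂ} (hv : 0 < v.im) :
    IntegrableOn (fun s : ℝ => ee (s * v)) (Set.Ioi 0) ∧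
    ∫ s in Set.Ioi (0:ℝ), ee (s * v) = -1 / (2 * (Real.pi : ℂ) * I * v) := by
  have hre : (2 * (Real.pi : ℂ) * I * v).re < 0 := by
    simp
    have := Real.pi_pos
    positivity
  have hi := integrableOn_exp_mul_complex_Ioi hre 0
  have h2 := integral_exp_mul_complex_Ioi hre 0
  have e : ∀ s : ℝ, ee (s * v) = Complex.exp (2 * (Real.pi : ℂ) * I * v * s) := by
    intro s; unfold ee; congr 1; ring
  simp_rw [e]
  refine ⟨hi, ?_⟩
  rw [h2]; simp

lemma integrable_sexp (k : ℕ) (hk : k = 0 ∨ k = 1) {c : ℝ} (hc : 0 < c) :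
    IntegrableOn (fun s : ℝ => s ^ k * Real.exp (-(c * s))) (Set.Ioi 0) := by
  have h := integrableOn_rpow_mul_exp_neg_mul_rpow (p := 1) (s := k) (b := c)
    (by have : (0:ℝ) ≤ k := k.cast_nonneg
        linarith) one_pos hc
  refine h.congr_fun (fun s hs => ?_) measurableSet_Ioi
  simp

lemma ee_integrable (k : ℕ) (hk : k = 0 ∨ k = 1) {v : ℂ} (hv : 0 < v.im) :
    IntegrableOn (fun s : ℝ => (s : ℂ) ^ k * ee (s * v)) (Set.Ioi 0) := by
  have h := integrable_sexp k hk (c := 2 * Real.pi * v.im) (by have := Real.pi_pos; positivity)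
  refine Integrable.mono' h ?_ ?_
  · apply Continuous.aestronglyMeasurable
    have := continuous_ee
    fun_prop
  · refine (ae_restrict_iff' measurableSet_Ioi).2 (Eventually.of_forall fun s hs => ?_)
    have hs' : (0:ℝ) < s := hs
    rw [norm_mul, norm_pow, norm_ee, Complex.norm_real, Real.norm_of_nonneg hs'.le]
    apply le_of_eq
    congr 2
    simp
    ring

lemma ee_integral2 {v : ℂ} (hv : 0 < v.im) :
    ∫ s in Set.Ioi (0:ℝ), (s : ℂ) * ee (s * v) = 1 / (2 * (Real.pi : ℂ) * I * v) ^ 2 := by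
  set p := 2 * (Real.pi : ℂ) * I * v with hp
  have hp0 : p ≠ 0 := by
    rw [hp]; refine mul_ne_zero Complex.two_pi_I_ne_zero ?_
    rintro rfl; simp at hv
  have hi0 := ee_integrable 0 (Or.inl rfl) hv
  have hi1 := ee_integrable 1 (Or.inr rfl) hv
  simp only [pow_zero, one_mul, pow_one] at hi0 hi1
  have hd : ∀ s : ℝ, HasDerivAt (fun s : ℝ => ((s : ℂ) * (1 / p) - 1 / p ^ 2) * ee (s * v))
      ((s : ℂ) * ee (s * v)) s := by
    intro s
    have h1 : HasDerivAt (fun s : ℂ => (s * (1 / p) - 1 / p ^ 2) * Complex.exp (2 * (Real.pi : ℂ) * I * (s * v)))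
      ((1 / p) * Complex.exp (2 * (Real.pi : ℂ) * I * (s * v)) + ((s:ℂ) * (1 / p) - 1 / p ^ 2) *
        (Complex.exp (2 * (Real.pi : ℂ) * I * (s * v)) * p)) (s:ℂ) := by
      have a1 : HasDerivAt (fun s : ℂ => s * (1 / p) - 1 / p ^ 2) (1 / p) (s:ℂ) := by
        simpa using ((hasDerivAt_id (s:ℂ)).mul_const (1/p)).sub_const (1 / p ^ 2)
      have a2 : HasDerivAt (fun s : ℂ => 2 * (Real.pi : ℂ) * I * (s * v)) p (s:ℂ) := by
        have := ((hasDerivAt_id (s:ℂ)).mul_const v).const_mul (2 * (Real.pi : ℂ) * I)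
        simpa [hp] using this
      exact a1.mul a2.cexp
    have h2 := h1.comp_ofReal
    have e : (s : ℂ) * ee (s * v) = (1 / p) * Complex.exp (2 * (Real.pi : ℂ) * I * (s * v)) + ((s:ℂ) * (1 / p) - 1 / p ^ 2) *
        (Complex.exp (2 * (Real.pi : ℂ) * I * (s * v)) * p) := by
      unfold ee; field_simp; ring
    rw [e]; exact h2
  have hF : IntegrableOn (fun s : ℝ => ((s : ℂ) * (1 / p) - 1 / p ^ 2) * ee (s * v)) (Set.Ioi 0) := by
    have := (hi1.const_mul (1 / p)).sub (hi0.const_mul (1 / p ^ 2))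
    refine this.congr (Eventually.of_forall fun s => ?_)
    simp only [Pi.sub_apply]
    ring
  have hT := tendsto_zero_of_hasDerivAt_of_integrableOn_Ioi (fun s _ => hd s) hi1 hF
  rw [integral_Ioi_of_hasDerivAt_of_tendsto' (fun s _ => hd s) hi1 hT]
  simp [ee_zero]

lemma gauss_integrable {t : ℝ} (ht : 0 < t) (b : ℝ) (w : ℂ) :
    Integrable (fun x : ℝ => Complex.exp (-(Real.pi * t : ℝ) * (x + w) ^ 2) * ee (-((b : ℂ) * (x + w)))) := by
  have hb : (-(Real.pi * t : ℝ) : ℂ).re < 0 := by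
    rw [Complex.neg_re, Complex.ofReal_re]
    have := Real.pi_pos
    nlinarith [mul_pos this ht]
  have h := integrable_cexp_quadratic' hb (-(2 * Real.pi * t) * w - 2 * Real.pi * I * b)
    (-(Real.pi * t) * w ^ 2 - 2 * Real.pi * I * b * w)
  refine h.congr (Eventually.of_forall fun x => ?_)
  unfold ee
  simp only
  rw [← Complex.exp_add]
  congr 1
  push_cast
  ring

/-- Fubini step -/
lemma Gk_fubini {t : ℝ} (ht : 0 < t) (b : ℝ) {w : ℂ} (hw : 0 < w.im) (k : ℕ) (hk : k = 0 ∨ k = 1) :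
    ∫ x : ℝ, (Complex.exp (-(Real.pi * t : ℝ) * (x + w) ^ 2) * ee (-((b : ℂ) * (x + w)))) *
      ∫ s in Set.Ioi (0:ℝ), (s : ℂ) ^ k * ee (s * (x + w)) =
    ((∫ s in Set.Ioi (0:ℝ), s ^ k * ((Real.sqrt t)⁻¹ * Real.exp (-(Real.pi * (b - s) ^ 2 / t))) : ℝ) : ℂ) := by
  have h1 : ∀ x : ℝ, (Complex.exp (-(Real.pi * t : ℝ) * (x + w) ^ 2) * ee (-((b : ℂ) * (x + w)))) *
      ∫ s in Set.Ioi (0:ℝ), (s : ℂ) ^ k * ee (s * (x + w)) =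
      ∫ s in Set.Ioi (0:ℝ), (Complex.exp (-(Real.pi * t : ℝ) * (x + w) ^ 2) * ee (-((b : ℂ) * (x + w)))) * ((s : ℂ) ^ k * ee (s * (x + w))) := by
    intro x
    rw [integral_const_mul]
  simp_rw [h1]
  rw [integral_integral_swap]
  · rw [← integral_complex_ofReal]
    congr 1; funext s
    have := gauss_line ht (b - s) w
    push_cast at this ⊢
    rw [← this, ← integral_const_mul]
    congr 1; funext x
    rw [show -(((b:ℂ) - s) * (x + w)) = -(b * (x + w)) + s * (x + w) by ring, ee_add]
    ring
  · have hprod := (gauss_integrable ht b w).norm.mul_prod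
      (integrable_sexp k hk (c := 2 * Real.pi * w.im) (by have := Real.pi_pos; positivity))
    refine Integrable.mono' hprod ?_ ?_
    · apply Continuous.aestronglyMeasurable
      have := continuous_ee
      unfold Function.uncurry
      fun_prop
    · have h2 : ∀ᵐ z : ℝ × ℝ ∂((volume : Measure ℝ).prod (volume.restrict (Set.Ioi 0))), z.2 ∈ Set.Ioi (0:ℝ) :=
        Measure.quasiMeasurePreserving_snd.ae (ae_restrict_mem measurableSet_Ioi)
      filter_upwards [h2] with z hz
      have hz' : (0:ℝ) < z.2 := hz
      simp only [Function.uncurry]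
      rw [norm_mul, norm_mul (_ ^ k), norm_pow, norm_ee (_ * _), Complex.norm_real, Real.norm_of_nonneg hz'.le]
      apply le_of_eq
      congr 3
      simp
      ring

lemma gauss_real_integrable {t : ℝ} (ht : 0 < t) (b : ℝ) (k : ℕ) (hk : k = 0 ∨ k = 1) :
    Integrable (fun s : ℝ => (s - b) ^ k * Real.exp (-(Real.pi * (s - b) ^ 2 / t))) := by
  have h : Integrable (fun s : ℝ => s ^ k * Real.exp (-(Real.pi * s ^ 2 / t))) := by
    have hp : 0 < Real.pi / t := by have := Real.pi_pos; positivity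
    rcases hk with rfl | rfl
    · refine (integrable_exp_neg_mul_sq hp).congr (Eventually.of_forall fun s => ?_)
      simp only [pow_zero, one_mul]
      congr 1; ring
    · refine (integrable_mul_exp_neg_mul_sq hp).congr (Eventually.of_forall fun s => ?_)
      simp only [pow_one]
      congr 2; ring
  exact h.comp_sub_right b

lemma J0_eq {t : ℝ} (ht : 0 < t) (b : ℝ) :
    ∫ s in Set.Ioi (0:ℝ), ((Real.sqrt t)⁻¹ * Real.exp (-(Real.pi * (b - s) ^ 2 / t))) =
      1 / 2 * erfc (-(Real.sqrt (Real.pi / t) * b)) := by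
  set c := Real.sqrt (Real.pi / t) with hc
  have hpt : 0 < Real.pi / t := div_pos Real.pi_pos ht
  have hc0 : 0 < c := Real.sqrt_pos.2 hpt
  have hc2 : c ^ 2 = Real.pi / t := Real.sq_sqrt hpt.le
  have e : ∀ s : ℝ, (Real.sqrt t)⁻¹ * Real.exp (-(Real.pi * (b - s) ^ 2 / t)) =
      (Real.sqrt t)⁻¹ * (fun y => Real.exp (-(y + -(c * b)) ^ 2)) (c * s) := by
    intro s
    simp only
    congr 2
    have : (c * s + -(c * b)) ^ 2 = c ^ 2 * (b - s) ^ 2 := by ring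
    rw [this, hc2]; ring
  simp_rw [e]
  rw [integral_const_mul, integral_comp_mul_left_Ioi (fun y => Real.exp (-(y + -(c * b)) ^ 2)) _ hc0]
  have e2 : ∫ y in Set.Ioi (c * 0), Real.exp (-(y + -(c * b)) ^ 2) =
      ∫ y in Set.Ioi (-(c * b)), Real.exp (-y ^ 2) := by
    have := (measurePreserving_add_right (volume : Measure ℝ) (-(c * b))).setIntegral_preimage_emb
      (measurableEmbedding_addRight _) (fun y => Real.exp (-y ^ 2)) (Set.Ioi (-(c * b)))
    rw [← this]
    congr 2
    ext y; simp
  rw [e2, erfc]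
  have h3 : (Real.sqrt t)⁻¹ * c⁻¹ = (Real.sqrt Real.pi)⁻¹ := by
    rw [hc, Real.sqrt_div Real.pi_pos.le]
    have h1 := Real.sqrt_pos.2 ht
    have h2 := Real.sqrt_pos.2 Real.pi_pos
    field_simp
  rw [smul_eq_mul, ← mul_assoc, h3]
  ring

lemma J1_eq {t : ℝ} (ht : 0 < t) (b : ℝ) :
    ∫ s in Set.Ioi (0:ℝ), s * ((Real.sqrt t)⁻¹ * Real.exp (-(Real.pi * (b - s) ^ 2 / t))) =
      Real.sqrt t / (2 * Real.pi) * Real.exp (-(Real.pi * b ^ 2 / t)) +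
      b * (1 / 2 * erfc (-(Real.sqrt (Real.pi / t) * b))) := by
  have i0 := (gauss_real_integrable ht b 0 (Or.inl rfl)).integrableOn (s := Set.Ioi 0)
  have i1 := (gauss_real_integrable ht b 1 (Or.inr rfl)).integrableOn (s := Set.Ioi 0)
  simp only [pow_zero, one_mul, pow_one] at i0 i1
  rw [← J0_eq ht b, ← integral_const_mul]
  have hs : ∀ s : ℝ, (b - s) ^ 2 = (s - b) ^ 2 := fun s => by ring
  simp_rw [hs]
  have hd : ∀ s : ℝ, HasDerivAt (fun s : ℝ => -(t / (2 * Real.pi)) * Real.exp (-(Real.pi * (s - b) ^ 2 / t)))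
      ((s - b) * Real.exp (-(Real.pi * (s - b) ^ 2 / t))) s := by
    intro s
    have a1 : HasDerivAt (fun s : ℝ => -(Real.pi * (s - b) ^ 2 / t)) (-(Real.pi * (2 * (s - b)) / t)) s := by
      have := (((((hasDerivAt_id s).sub_const b).pow 2).const_mul Real.pi).div_const t).neg
      refine this.congr_deriv ?_
      simp
    have a2 := a1.exp.const_mul (-(t / (2 * Real.pi)))
    have hpi := Real.pi_ne_zero
    refine a2.congr_deriv ?_
    field_simp
  have hT := tendsto_zero_of_hasDerivAt_of_integrableOn_Ioi (fun s _ => hd s) i1 (i0.const_mul _)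
  have h1 := integral_Ioi_of_hasDerivAt_of_tendsto' (fun s _ => hd s) i1 hT
  have h2 : ∫ s in Set.Ioi (0:ℝ), s * ((Real.sqrt t)⁻¹ * Real.exp (-(Real.pi * (s - b) ^ 2 / t))) =
      ∫ s in Set.Ioi (0:ℝ), ((Real.sqrt t)⁻¹ * ((s - b) * Real.exp (-(Real.pi * (s - b) ^ 2 / t))) +
        b * ((Real.sqrt t)⁻¹ * Real.exp (-(Real.pi * (s - b) ^ 2 / t)))) := by
    congr 1; funext s; ring
  rw [h2, integral_add (i1.const_mul _) ((i0.const_mul _).const_mul _), integral_const_mul, h1]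
  congr 1
  have hst : Real.sqrt t * Real.sqrt t = t := Real.mul_self_sqrt ht.le
  have h1 := Real.sqrt_pos.2 ht
  have hpi := Real.pi_ne_zero
  rw [show (0 - b) ^ 2 = b ^ 2 by ring]
  field_simp
  rw [Real.sq_sqrt ht.le]; ring

def Nk (t : ℝ) (j : ℕ) (b : ℝ) : ℝ :=
  if j = 1 then -(1 / 2 * erfc (-(Real.sqrt (Real.pi / t) * b))) else
   Real.sqrt t / (2 * Real.pi) * Real.exp (-(Real.pi * b ^ 2 / t)) +
      b * (1 / 2 * erfc (-(Real.sqrt (Real.pi / t) * b)))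

lemma Gk_pos {t : ℝ} (ht : 0 < t) (b : ℝ) {w : ℂ} (hw : 0 < w.im) (j : ℕ) (hj : j = 1 ∨ j = 2) :
    ∫ x : ℝ, Gk t b j (x + w) = Nk t j b := by
  have hw' : ∀ x : ℝ, 0 < ((x:ℂ) + w).im := fun x => by simpa using hw
  rcases hj with rfl | rfl
  · have h := Gk_fubini ht b hw 0 (Or.inl rfl)
    simp only [pow_zero, one_mul] at h
    rw [J0_eq ht] at h
    rw [Nk, if_pos rfl, Complex.ofReal_neg, ← h, ← integral_neg]
    congr 1; funext x
    rw [(ee_integral1 (hw' x)).2, Gk, pow_one]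
    ring
  · have h := Gk_fubini ht b hw 1 (Or.inr rfl)
    simp only [pow_one] at h
    rw [J1_eq ht] at h
    rw [Nk, if_neg (by norm_num), ← h]
    congr 1; funext x
    rw [ee_integral2 (hw' x), Gk]
    ring

lemma Gk_neg_arg (t b : ℝ) (j : ℕ) (v : ℂ) : Gk t b j (-v) = (-1) ^ j * Gk t (-b) j v := by
  unfold Gk
  rw [mul_neg (2 * (Real.pi : ℂ) * I) v, neg_pow (2 * (Real.pi : ℂ) * I * v), neg_sq]
  have : ((-1:ℂ) ^ j) * (-1) ^ j = 1 := by rw [← mul_pow]; norm_num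
  have h0 : ((-1:ℂ) ^ j) ≠ 0 := by intro h; rw [h] at this; simp at this
  rw [show -((b:ℂ) * -v) = -(((-b : ℝ) : ℂ) * v) by push_cast; ring]
  rw [div_eq_mul_inv, div_eq_mul_inv, mul_inv, show ((-1:ℂ) ^ j)⁻¹ = (-1) ^ j by
    rw [inv_eq_iff_eq_inv]; exact eq_inv_of_mul_eq_one_left this]
  ring

lemma Gk_neg {t : ℝ} (ht : 0 < t) (b : ℝ) {w : ℂ} (hw : w.im < 0) (j : ℕ) (hj : j = 1 ∨ j = 2) :
    ∫ x : ℝ, Gk t b j (x + w) = (-1) ^ j * Nk t j (-b) := by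
  rw [← integral_neg_eq_self, ← Gk_pos ht (-b) (w := -w) (by simpa using hw) j hj, ← integral_const_mul]
  congr 1; funext x
  rw [← Gk_neg_arg]
  congr 1; push_cast; ring

lemma Gk_norm (t b : ℝ) (j : ℕ) (v : ℂ) :
    ‖Gk t b j v‖ = Real.exp (-(Real.pi * t) * (v.re ^ 2 - v.im ^ 2) + 2 * Real.pi * b * v.im) /
      (2 * Real.pi * ‖v‖) ^ j := by
  unfold Gk
  rw [norm_div, norm_mul, norm_ee, Complex.norm_exp, ← Real.exp_add, norm_pow]
  congr 2
  · simp [pow_two]; ring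
  · simp [abs_of_pos Real.pi_pos]

lemma gauss_shift {t : ℝ} (ht : 0 < t) {R x : ℝ} (hx : |x| ≤ R) (n : ℤ) :
    Real.exp (-(Real.pi * t) * (x + n) ^ 2) ≤
      Real.exp (Real.pi * t * R ^ 2) * Real.exp (-(Real.pi * t / 2) * n ^ 2) := by
  rw [← Real.exp_add]
  apply Real.exp_le_exp.2
  have h1 : x ^ 2 ≤ R ^ 2 := by rw [← sq_abs x]; exact pow_le_pow_left₀ (abs_nonneg _) hx 2
  have hp : 0 < Real.pi * t := mul_pos Real.pi_pos ht
  have h2 : (n:ℝ) ^ 2 / 2 - R ^ 2 ≤ (x + n) ^ 2 := by nlinarith [sq_nonneg (2 * x + n)]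
  nlinarith [mul_le_mul_of_nonneg_left h2 hp.le]

lemma summable_gauss0 {t : ℝ} (ht : 0 < t) :
    Summable (fun n : ℤ => Real.exp (-(Real.pi * t / 2) * n ^ 2)) := by
  have := summable_gauss (a := Real.pi * t / 2) (by have := Real.pi_pos; positivity) 0
  simpa using this

lemma Gk_le {t : ℝ} (b : ℝ) (j : ℕ) {v : ℂ} {δ : ℝ} (hδ : 0 < δ) (hv : δ ≤ ‖v‖) :
    ‖Gk t b j v‖ ≤ ((2 * Real.pi * δ) ^ j)⁻¹ * Real.exp (Real.pi * t * v.im ^ 2 + 2 * Real.pi * b * v.im) *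
      Real.exp (-(Real.pi * t) * v.re ^ 2) := by
  have hpi := Real.pi_pos
  rw [Gk_norm, mul_assoc (_ ⁻¹), ← Real.exp_add, div_eq_inv_mul]
  have e : -(Real.pi * t) * (v.re ^ 2 - v.im ^ 2) + 2 * Real.pi * b * v.im =
    Real.pi * t * v.im ^ 2 + 2 * Real.pi * b * v.im + -(Real.pi * t) * v.re ^ 2 := by ring
  rw [e]
  refine mul_le_mul_of_nonneg_right ?_ (Real.exp_pos _).le
  apply inv_anti₀ (by positivity)
  apply pow_le_pow_left₀ (by positivity)
  exact mul_le_mul_of_nonneg_left hv (by positivity)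

lemma gauss_sum_bdd {t : ℝ} (ht : 0 < t) : ∃ C : ℝ, 0 ≤ C ∧ ∀ x : ℝ,
    Summable (fun n : ℤ => Real.exp (-(Real.pi * t) * (x + n) ^ 2)) ∧
    ∑' n : ℤ, Real.exp (-(Real.pi * t) * (x + n) ^ 2) ≤ C := by
  have hs := (summable_gauss0 ht).mul_left (Real.exp (Real.pi * t * (1:ℝ) ^ 2))
  refine ⟨∑' n : ℤ, Real.exp (Real.pi * t * (1:ℝ) ^ 2) * Real.exp (-(Real.pi * t / 2) * n ^ 2),
    tsum_nonneg (fun n => by positivity), fun x => ?_⟩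
  · have h1 : |Int.fract x| ≤ 1 := by
      rw [abs_of_nonneg (Int.fract_nonneg x)]; exact (Int.fract_lt_one x).le
    have hs1 : Summable (fun n : ℤ => Real.exp (-(Real.pi * t) * (Int.fract x + n) ^ 2)) :=
      Summable.of_nonneg_of_le (fun n => (Real.exp_pos _).le) (fun n => gauss_shift ht h1 n) hs
    have e : ∀ n : ℤ, Real.exp (-(Real.pi * t) * (x + n) ^ 2) =
        (fun n : ℤ => Real.exp (-(Real.pi * t) * (Int.fract x + n) ^ 2)) ((Equiv.addRight ⌊x⌋) n) := by
      intro n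
      simp only [Equiv.coe_addRight]
      congr 3
      push_cast
      have := Int.fract_add_floor x
      linarith
    simp_rw [e]
    refine ⟨(Equiv.addRight ⌊x⌋).summable_iff.2 hs1, ?_⟩
    rw [(Equiv.addRight ⌊x⌋).tsum_eq (fun n : ℤ => Real.exp (-(Real.pi * t) * (Int.fract x + n) ^ 2))]
    exact hs1.tsum_le_tsum (fun n => gauss_shift ht h1 n) hs

lemma int_sep (v : ℂ) : ∃ δ > 0, ∀ n : ℤ, v + n ≠ 0 → δ ≤ ‖v + n‖ := by
  by_cases h : v.im = 0
  · obtain ⟨ε, hε, h1⟩ := gap v.re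
    refine ⟨ε, hε, fun n hn => ?_⟩
    have h2 : v.re - ((-n : ℤ) : ℝ) ≠ 0 := by
      intro h3; apply hn
      apply Complex.ext
      · simp at h3 ⊢; linarith
      · simp [h]
    have h3 := h1 (-n) h2
    refine h3.trans ?_
    have := Complex.abs_re_le_norm (v + n)
    simpa using this
  · refine ⟨|v.im|, abs_pos.2 h, fun n _ => ?_⟩
    have := Complex.abs_im_le_norm (v + n)
    simpa using this

lemma Gk_diffAt (t b : ℝ) (j : ℕ) {v : ℂ} (hv : v ≠ 0) : DifferentiableAt ℂ (Gk t b j) v := by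
  have h1 := differentiable_ee
  unfold Gk
  refine DifferentiableAt.div ?_ (by fun_prop) (pow_ne_zero _ (mul_ne_zero Complex.two_pi_I_ne_zero hv))
  fun_prop

lemma Gk_sum_diff {t : ℝ} (ht : 0 < t) (b : ℝ) (j : ℕ) (χ : ℤ → ℂ) (hχ : ∀ n, ‖χ n‖ ≤ 1) (v0 : ℂ)
    (h0 : ∀ n : ℤ, χ n = 0 ∨ v0 + n ≠ 0) :
    DifferentiableAt ℂ (fun v : ℂ => ∑' n : ℤ, χ n * Gk t b j (v + n)) v0 ∧
    Summable (fun n : ℤ => ‖χ n * Gk t b j (v0 + n)‖) := by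
  obtain ⟨δ, hδ, hsep⟩ := int_sep v0
  set ρ := δ / 2 with hρ
  have hρ0 : 0 < ρ := by positivity
  have hsep' : ∀ v ∈ Metric.ball v0 ρ, ∀ n : ℤ, χ n = 0 ∨ ρ ≤ ‖v + n‖ := by
    intro v hv n
    rcases h0 n with h | h
    · exact Or.inl h
    · right
      have h1 := hsep n h
      rw [Metric.mem_ball, dist_eq_norm] at hv
      have h2 : ‖v0 + n‖ ≤ ‖v + n‖ + ‖v - v0‖ := by
        have := norm_sub_le (v + n) (v - v0)
        rwa [show v + n - (v - v0) = v0 + n by ring] at this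
      linarith
  set R := |v0.re| + ρ with hR
  set Y := |v0.im| + ρ with hY
  have hpi := Real.pi_pos
  set C := ((2 * Real.pi * ρ) ^ j)⁻¹ * Real.exp (Real.pi * t * Y ^ 2 + 2 * Real.pi * |b| * Y) with hC
  have hbd : ∀ n : ℤ, ∀ v ∈ Metric.ball v0 ρ, ‖χ n * Gk t b j (v + n)‖ ≤
      C * (Real.exp (Real.pi * t * R ^ 2) * Real.exp (-(Real.pi * t / 2) * n ^ 2)) := by
    intro n v hv
    rcases hsep' v hv n with h | h
    · rw [h, zero_mul, norm_zero]; positivity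
    · have hv' := hv
      rw [Metric.mem_ball, dist_eq_norm] at hv'
      have hre : |v.re| ≤ R := by
        have a1 := Complex.abs_re_le_norm (v - v0)
        have a2 := abs_add_le v0.re (v - v0).re
        rw [show v0.re + (v - v0).re = v.re by simp] at a2
        linarith
      have him : |v.im| ≤ Y := by
        have a1 := Complex.abs_im_le_norm (v - v0)
        have a2 := abs_add_le v0.im (v - v0).im
        rw [show v0.im + (v - v0).im = v.im by simp] at a2
        linarith
      rw [norm_mul]
      have h1 := Gk_le (t := t) b j hρ0 h
      have hv1 : (v + n).im = v.im := by simp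
      have hv2 : (v + n).re = v.re + n := by simp
      rw [hv1, hv2] at h1
      have h2 := gauss_shift ht hre n
      have h3 : Real.exp (Real.pi * t * v.im ^ 2 + 2 * Real.pi * b * v.im) ≤
          Real.exp (Real.pi * t * Y ^ 2 + 2 * Real.pi * |b| * Y) := by
        apply Real.exp_le_exp.2
        have a1 : v.im ^ 2 ≤ Y ^ 2 := by rw [← sq_abs v.im]; exact pow_le_pow_left₀ (abs_nonneg _) him 2
        have a2 : b * v.im ≤ |b| * Y := by
          calc b * v.im ≤ |b * v.im| := le_abs_self _
            _ = |b| * |v.im| := abs_mul _ _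
            _ ≤ _ := mul_le_mul_of_nonneg_left him (abs_nonneg _)
        have a3 := mul_le_mul_of_nonneg_left a1 (mul_pos hpi ht).le
        have a4 := mul_le_mul_of_nonneg_left a2 hpi.le
        linarith
      calc ‖χ n‖ * ‖Gk t b j (v + n)‖ ≤ 1 * ‖Gk t b j (v + n)‖ :=
            mul_le_mul_of_nonneg_right (hχ n) (norm_nonneg _)
        _ = ‖Gk t b j (v + n)‖ := one_mul _
        _ ≤ _ := h1
        _ ≤ _ := by
          apply mul_le_mul _ h2 (Real.exp_pos _).le (by positivity)
          exact mul_le_mul_of_nonneg_left h3 (by positivity)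
  have hsum : Summable (fun n : ℤ => C * (Real.exp (Real.pi * t * R ^ 2) * Real.exp (-(Real.pi * t / 2) * n ^ 2))) :=
    ((summable_gauss0 ht).mul_left _).mul_left _
  constructor
  · have hD : DifferentiableOn ℂ (fun v : ℂ => ∑' n : ℤ, χ n * Gk t b j (v + n)) (Metric.ball v0 ρ) := by
      refine Complex.differentiableOn_tsum_of_summable_norm hsum ?_ Metric.isOpen_ball hbd
      intro n v hv
      apply DifferentiableAt.differentiableWithinAt
      rcases hsep' v hv n with h | h
      · simp only [h, zero_mul]; exact differentiableAt_const _
      · have : v + n ≠ 0 := by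
          intro h1; rw [h1, norm_zero] at h; linarith
        have h2 : DifferentiableAt ℂ (fun v : ℂ => Gk t b j (v + n)) v :=
          DifferentiableAt.comp v (Gk_diffAt t b j this) (by fun_prop)
        exact h2.const_mul _
    exact hD.differentiableAt (Metric.ball_mem_nhds v0 hρ0)
  · exact Summable.of_nonneg_of_le (fun _ => norm_nonneg _)
      (fun n => hbd n v0 (Metric.mem_ball_self hρ0)) hsum

lemma Gk_laurent (t a : ℝ) (j : ℕ) (hj : j = 1 ∨ j = 2) :
    Tendsto (fun ε : ℂ => 2 * (Real.pi : ℂ) * I * ε *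
      (Gk t a j ε - (if j = 1 then 0 else 1) / (2 * (Real.pi : ℂ) * I * ε) ^ 2)) (𝓝[≠] 0)
      (𝓝 (if j = 1 then 1 else -(a : ℂ))) := by
  set P : ℂ → ℂ := fun v => Complex.exp (-(Real.pi * t : ℝ) * v ^ 2) * ee (-((a : ℂ) * v)) with hP
  have hP0 : P 0 = 1 := by simp [hP, ee_zero]
  have hd : HasDerivAt P (-(2 * (Real.pi : ℂ) * I * a)) 0 := by
    have a1 : HasDerivAt (fun v : ℂ => -((Real.pi * t : ℝ) : ℂ) * v ^ 2 + 2 * (Real.pi : ℂ) * I * (-((a : ℂ) * v)))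
        (-(2 * (Real.pi : ℂ) * I * a)) 0 := by
      have h1 := ((hasDerivAt_id (0:ℂ)).pow 2).const_mul (-((Real.pi * t : ℝ) : ℂ))
      have h2 := (((hasDerivAt_id (0:ℂ)).const_mul (a:ℂ)).neg).const_mul (2 * (Real.pi : ℂ) * I)
      refine (h1.add h2).congr_deriv ?_
      simp
    have a2 := a1.cexp
    have e : P = fun v : ℂ => Complex.exp (-((Real.pi * t : ℝ) : ℂ) * v ^ 2 + 2 * (Real.pi : ℂ) * I * (-((a : ℂ) * v))) := by
      funext v; rw [Complex.exp_add]; rfl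
    rw [e]
    refine a2.congr_deriv ?_
    simp
  have hpi := Complex.two_pi_I_ne_zero
  rcases hj with rfl | rfl
  · simp only [if_true]
    have h1 : Tendsto P (𝓝[≠] 0) (𝓝 1) := by
      have := hd.continuousAt.tendsto
      rw [hP0] at this
      exact this.mono_left nhdsWithin_le_nhds
    refine h1.congr' ?_
    filter_upwards [self_mem_nhdsWithin] with ε hε
    have hε' : ε ≠ 0 := hε
    rw [show Gk t a 1 ε = P ε / (2 * (Real.pi : ℂ) * I * ε) ^ 1 from rfl]
    have : 2 * (Real.pi : ℂ) * I * ε ≠ 0 := mul_ne_zero hpi hε'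
    rw [pow_one, zero_div, sub_zero, mul_div_cancel₀ _ this]
  · simp only [show ¬ ((2:ℕ) = 1) by norm_num, if_false]
    have h1 := hd
    rw [hasDerivAt_iff_tendsto_slope] at h1
    have h2 := h1.const_mul (1 / (2 * (Real.pi : ℂ) * I))
    have e : 1 / (2 * (Real.pi : ℂ) * I) * -(2 * (Real.pi : ℂ) * I * a) = -(a:ℂ) := by
      rw [mul_neg, ← mul_assoc, one_div_mul_cancel hpi, one_mul]
    rw [e] at h2
    refine h2.congr' ?_
    filter_upwards [self_mem_nhdsWithin] with ε hε
    have hε' : ε ≠ 0 := hε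
    rw [show Gk t a 2 ε = P ε / (2 * (Real.pi : ℂ) * I * ε) ^ 2 from rfl, slope_def_field, hP0, sub_zero]
    field_simp

lemma Gk_line_integrable {t : ℝ} (ht : 0 < t) (b : ℝ) (j : ℕ) {w : ℂ} (hw : w.im ≠ 0) :
    Integrable (fun x : ℝ => Gk t b j (x + w)) := by
  have h := (gauss_integrable ht b w).norm.const_mul (((2 * Real.pi * |w.im|) ^ j)⁻¹)
  have hne : ∀ x : ℝ, (x : ℂ) + w ≠ 0 := by
    intro x hx; have := congrArg Complex.im hx; simp at this; exact hw this
  refine Integrable.mono' h ?_ ?_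
  · apply Continuous.aestronglyMeasurable
    rw [continuous_iff_continuousAt]
    intro x
    exact ContinuousAt.comp (f := fun x : ℝ => (x : ℂ) + w) (Gk_diffAt t b j (hne x)).continuousAt
      (by fun_prop)
  · refine Eventually.of_forall fun x => ?_
    unfold Gk
    have hpi := Real.pi_pos
    rw [norm_div, div_eq_inv_mul]
    refine mul_le_mul_of_nonneg_right ?_ (norm_nonneg _)
    have := abs_pos.2 hw
    apply inv_anti₀ (by positivity)
    rw [norm_pow]
    apply pow_le_pow_left₀ (by positivity)
    rw [norm_mul]
    have h1 : ‖2 * (Real.pi : ℂ) * I‖ = 2 * Real.pi := by simp [abs_of_pos hpi]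
    rw [h1]
    apply mul_le_mul_of_nonneg_left _ (by positivity)
    have := Complex.abs_im_le_norm ((x:ℂ) + w)
    simpa using this

lemma Gk_mul_ee (t a : ℝ) (j : ℕ) (r : ℤ) (v : ℂ) :
    Gk t a j v * ee (-(r : ℂ) * v) = Gk t (a + r) j v := by
  unfold Gk
  rw [show -((((a + r : ℝ)) : ℂ) * v) = -((a:ℂ) * v) + -(r:ℂ) * v by push_cast; ring, ee_add]
  ring

def fG (t a : ℝ) (j : ℕ) (u z : ℂ) : ℂ := ∑' n : ℤ, Gk t a j (z - u + n)

lemma fG_coef {t : ℝ} (ht : 0 < t) (a : ℝ) (j : ℕ) (u : ℂ) (r : ℤ) {w : ℂ} (hw : (w - u).im ≠ 0) :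
    ∫ x in (0:ℝ)..1, fG t a j u (x + w) * ee (-(r : ℂ) * (x + w)) =
      ee (-(r:ℂ) * u) * ∫ x : ℝ, Gk t (a + r) j (x + (w - u)) := by
  set w' := w - u with hw'
  have hterm : ∀ (n : ℤ) (x : ℝ), Gk t a j (x + w - u + n) * ee (-(r : ℂ) * (x + w)) =
      ee (-(r:ℂ) * u) * Gk t (a + r) j (((x + n : ℝ) : ℂ) + w') := by
    intro n x
    rw [← Gk_mul_ee, show (x:ℂ) + w - u + n = ((x + n : ℝ) : ℂ) + w' by rw [hw']; push_cast; ring]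
    have : ee (-(r : ℂ) * (x + w)) = ee (-(r:ℂ) * u) * ee (-(r:ℂ) * (((x + n : ℝ) : ℂ) + w')) := by
      rw [← ee_add, show -(r:ℂ) * u + -(r:ℂ) * (((x + n : ℝ) : ℂ) + w') = -(r : ℂ) * (x + w) + ((-r * n : ℤ) : ℂ) by
        rw [hw']; push_cast; ring, ee_add_int]
    rw [this]; ring
  have h1 := (Gk_line_integrable ht (a + r) j hw).hasSum_intervalIntegral_comp_add_int.mul_left (ee (-(r:ℂ) * u))
  have hpos := abs_pos.2 hw
  have hle : ∀ (n : ℤ) (x : ℝ), x ∈ Set.uIoc (0:ℝ) 1 →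
      ‖Gk t a j (x + w - u + n) * ee (-(r : ℂ) * (x + w))‖ ≤
      ‖ee (-(r:ℂ) * u)‖ * ((((2 * Real.pi * |w'.im|) ^ j)⁻¹ * Real.exp (Real.pi * t * w'.im ^ 2 + 2 * Real.pi * (a + r) * w'.im)) *
        (Real.exp (Real.pi * t * (|w'.re| + 1) ^ 2) * Real.exp (-(Real.pi * t / 2) * n ^ 2))) := by
    intro n x hx
    rw [Set.uIoc_of_le zero_le_one] at hx
    rw [hterm, norm_mul]
    refine mul_le_mul_of_nonneg_left ?_ (norm_nonneg _)
    have hv : |w'.im| ≤ ‖((x + n : ℝ) : ℂ) + w'‖ := by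
      have := Complex.abs_im_le_norm (((x + n : ℝ) : ℂ) + w')
      simpa using this
    refine (Gk_le (t := t) (a + r) j hpos hv).trans ?_
    have e1 : (((x + n : ℝ) : ℂ) + w').im = w'.im := by simp
    have e2 : (((x + n : ℝ) : ℂ) + w').re = (x + w'.re) + n := by simp; ring
    rw [e1, e2]
    have hpi := Real.pi_pos
    refine mul_le_mul_of_nonneg_left (gauss_shift ht ?_ n) (by positivity)
    have := abs_add_le x w'.re
    rw [abs_of_pos hx.1] at this
    linarith [hx.2]
  have hne : ∀ (n : ℤ) (x : ℝ), (x:ℂ) + w - u + n ≠ 0 := by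
    intro n x h
    have := congrArg Complex.im h
    apply hw
    rw [hw']
    simpa using this
  have hsummable := (((summable_gauss0 ht).mul_left (Real.exp (Real.pi * t * (|w'.re| + 1) ^ 2))).mul_left
    (((2 * Real.pi * |w'.im|) ^ j)⁻¹ * Real.exp (Real.pi * t * w'.im ^ 2 + 2 * Real.pi * (a + r) * w'.im))).mul_left
    ‖ee (-(r:ℂ) * u)‖
  have h2 := intervalIntegral.hasSum_integral_of_dominated_convergence (μ := volume) (a := 0) (b := 1)
    (F := fun (n : ℤ) (x : ℝ) => Gk t a j (x + w - u + n) * ee (-(r : ℂ) * (x + w)))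
    (f := fun x : ℝ => fG t a j u (x + w) * ee (-(r : ℂ) * (x + w)))
    (fun n x => ‖ee (-(r:ℂ) * u)‖ * ((((2 * Real.pi * |w'.im|) ^ j)⁻¹ * Real.exp (Real.pi * t * w'.im ^ 2 + 2 * Real.pi * (a + r) * w'.im)) *
        (Real.exp (Real.pi * t * (|w'.re| + 1) ^ 2) * Real.exp (-(Real.pi * t / 2) * n ^ 2))))
    (fun n => ?_) (fun n => Eventually.of_forall fun x hx => hle n x hx)
    (Eventually.of_forall fun x hx => hsummable) ?_ (Eventually.of_forall fun x hx => ?_)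
  · refine h2.unique ?_
    refine (hasSum_congr_C ?_).2 h1
    intro n
    rw [← intervalIntegral.integral_const_mul]
    congr 1; funext x
    exact hterm n x
  · apply Continuous.aestronglyMeasurable
    rw [continuous_iff_continuousAt]
    intro x
    refine ContinuousAt.mul ?_ ?_
    · exact ContinuousAt.comp (f := fun x : ℝ => (x : ℂ) + w - u + n) (Gk_diffAt t a j (hne n x)).continuousAt
        (by fun_prop)
    · have := continuous_ee
      fun_prop
  · exact intervalIntegrable_const
  · have := (Gk_sum_diff ht a j (fun _ => 1) (by simp) ((x:ℂ) + w - u) (fun n => Or.inr (hne n x))).2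
    simp only [one_mul] at this
    exact this.of_norm.hasSum.mul_right _

lemma KD_G {m : ℕ} (hm : 0 < m) {τ : ℂ} (hτ : 0 < τ.im) (u : ℂ) (a : ℝ) (j : ℕ) (hj : j = 1 ∨ j = 2) :
    KD m τ u (fG (m / τ.im) a j u) (if j = 1 then 0 else 1) (if j = 1 then 1 else -(a:ℂ))
      (fun r => ee (-(r:ℂ) * u) * (Nk (m / τ.im) j (a + r) : ℝ))
      (fun r => ee (-(r:ℂ) * u) * ((-1) ^ j * (Nk (m / τ.im) j (-(a + r)) : ℝ))) := by
  have hm' : (0:ℝ) < m := by exact_mod_cast hm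
  set t : ℝ := m / τ.im with ht0
  have ht : 0 < t := div_pos hm' hτ
  have hpi := Real.pi_pos
  refine ⟨?_, ?_, ?_, ?_, ?_, ?_⟩
  · intro z
    unfold fG
    rw [← (Equiv.addRight (1:ℤ)).tsum_eq (fun n : ℤ => Gk t a j (z - u + n))]
    congr 1; funext n
    simp only [Equiv.coe_addRight]
    congr 1; push_cast; ring
  · intro z hz
    have h1 := (Gk_sum_diff ht a j (fun _ => 1) (by simp) (z - u) (fun n => Or.inr (by
      intro h; apply hz (-n); push_cast; linear_combination h))).1
    simp only [one_mul] at h1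
    exact DifferentiableAt.comp (f := fun z => z - u) z h1 (by fun_prop)
  · intro δ hδ
    obtain ⟨C, hC, hsum⟩ := gauss_sum_bdd ht
    refine ⟨((2 * Real.pi * δ) ^ j)⁻¹ * C, 2 * Real.pi * |a|, fun z hz => ?_⟩
    set v := z - u with hv
    obtain ⟨hs, hle⟩ := hsum v.re
    have hz' : ∀ n : ℤ, δ ≤ ‖v + n‖ := by
      intro n; have := hz (-n); push_cast at this; rwa [sub_neg_eq_add] at this
    have hb : ∀ n : ℤ, ‖Gk t a j (v + n)‖ ≤ ((2 * Real.pi * δ) ^ j)⁻¹ *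
        Real.exp (Real.pi * t * v.im ^ 2 + 2 * Real.pi * a * v.im) * Real.exp (-(Real.pi * t) * (v.re + n) ^ 2) := by
      intro n
      have := Gk_le (t := t) a j hδ (hz' n)
      rwa [show (v + n).im = v.im by simp, show (v + n).re = v.re + n by simp] at this
    have hs2 := hs.mul_left (((2 * Real.pi * δ) ^ j)⁻¹ *
        Real.exp (Real.pi * t * v.im ^ 2 + 2 * Real.pi * a * v.im))
    have h1 : ‖fG t a j u z‖ ≤ ((2 * Real.pi * δ) ^ j)⁻¹ *
        Real.exp (Real.pi * t * v.im ^ 2 + 2 * Real.pi * a * v.im) * C := by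
      refine (tsum_of_norm_bounded hs2.hasSum hb).trans ?_
      rw [tsum_mul_left]
      exact mul_le_mul_of_nonneg_left hle (by positivity)
    refine h1.trans ?_
    rw [mul_right_comm]
    refine mul_le_mul_of_nonneg_left ?_ (by positivity)
    apply Real.exp_le_exp.2
    have h2 : a * v.im ≤ |a| * |v.im| := by rw [← abs_mul]; exact le_abs_self _
    have h3 : Real.pi * t * v.im ^ 2 = Real.pi * m * v.im ^ 2 / τ.im := by rw [ht0]; ring
    rw [h3]
    nlinarith [mul_le_mul_of_nonneg_left h2 hpi.le]
  · have hL := Gk_laurent t a j hj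
    have h1 := Gk_sum_diff ht a j (fun n => if n = 0 then 0 else 1)
      (fun n => by split_ifs <;> simp) 0 (fun n => by
        by_cases h : n = 0
        · left; simp [h]
        · right; simpa using h)
    have h2 : Tendsto (fun ε : ℂ => 2 * (Real.pi : ℂ) * I * ε *
        ∑' n : ℤ, (if n = 0 then 0 else 1) * Gk t a j (ε + n)) (𝓝[≠] 0) (𝓝 0) := by
      have a1 : Tendsto (fun ε : ℂ => ∑' n : ℤ, (if n = 0 then 0 else 1) * Gk t a j (ε + n)) (𝓝[≠] 0)
        (𝓝 (∑' n : ℤ, (if n = 0 then 0 else 1) * Gk t a j (0 + n))) :=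
        h1.1.continuousAt.tendsto.mono_left nhdsWithin_le_nhds
      have a2 := (tendsto_two_pi_I.mono_right nhdsWithin_le_nhds).mul a1
      rwa [zero_mul] at a2
    have h3 := hL.add h2
    rw [add_zero] at h3
    refine h3.congr' ?_
    filter_upwards [self_mem_nhdsWithin, nhdsWithin_le_nhds (Metric.ball_mem_nhds (0:ℂ) one_pos)] with ε hε hε1
    have hε' : ε ≠ 0 := hε
    rw [Metric.mem_ball, dist_zero_right] at hε1
    have hne : ∀ n : ℤ, ε + n ≠ 0 := by
      intro n hn
      have hn0 : n ≠ 0 := by rintro rfl; apply hε'; simpa using hn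
      have e : ε = -(n:ℂ) := by linear_combination hn
      rw [e, norm_neg, Complex.norm_intCast] at hε1
      have : (1:ℝ) ≤ |(n:ℝ)| := by exact_mod_cast Int.one_le_abs hn0
      linarith
    have hsm := (Gk_sum_diff ht a j (fun _ => 1) (by simp) ε (fun n => Or.inr (hne n))).2.of_norm
    simp only [one_mul] at hsm
    have e2 : fG t a j u (u + ε) = Gk t a j ε + ∑' n : ℤ, (if n = 0 then 0 else 1) * Gk t a j (ε + n) := by
      unfold fG
      rw [show u + ε - u = ε by ring, hsm.tsum_eq_add_tsum_ite 0]
      congr 1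
      · simp
      · congr 1; funext n
        split_ifs <;> simp
    rw [e2]; ring
  · intro r w hw
    have hw' : 0 < (w - u).im := by rw [Complex.sub_im]; linarith
    rw [fG_coef ht a j u r hw'.ne', Gk_pos ht _ hw' j hj]
  · intro r w hw
    have hw' : (w - u).im < 0 := by rw [Complex.sub_im]; linarith
    rw [fG_coef ht a j u r hw'.ne, Gk_neg ht _ hw' j hj]

lemma chat_G1 {m : ℕ} (hm : 0 < m) {τ : ℂ} (hτ : 0 < τ.im) (u : ℂ) (a η : ℝ) (r : ℤ)
    (hη : u.im / τ.im + r / (2 * m) = η) (ha : a + r = 2 * m * η) :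
    chat m τ u (fun r => ee (-(r:ℂ) * u) * (Nk (m / τ.im) 1 (a + r) : ℝ))
      (fun r => ee (-(r:ℂ) * u) * ((-1) ^ 1 * (Nk (m / τ.im) 1 (-(a + r)) : ℝ))) r =
    ee (-(r:ℂ) * u) * ((Real.sign η : ℂ) * (erfc (2 * |η| * Real.sqrt (Real.pi * (m : ℝ) * τ.im)) : ℂ) / 2) := by
  have hm' : (0:ℝ) < m := by exact_mod_cast hm
  have hsq : Real.sqrt (Real.pi / (m / τ.im)) * (2 * m) = 2 * Real.sqrt (Real.pi * (m : ℝ) * τ.im) := by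
    have : Real.pi * (m : ℝ) * τ.im = Real.pi / (m / τ.im) * (m:ℝ) ^ 2 := by field_simp
    rw [this, Real.sqrt_mul (by have := Real.pi_pos; positivity), Real.sqrt_sq hm'.le]; ring
  have e : ∀ b, Nk (m / τ.im) 1 b = -(1 / 2 * erfc (-(Real.sqrt (Real.pi / (m / τ.im)) * b))) := fun b => by
    rw [Nk, if_pos rfl]
  unfold chat
  simp only [hη, ha, e]
  have h1 : Real.sqrt (Real.pi / (m / τ.im)) * (2 * m * η) = 2 * η * Real.sqrt (Real.pi * (m : ℝ) * τ.im) := by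
    rw [← mul_assoc, hsq]; ring
  rw [mul_neg, h1]
  rcases lt_trichotomy η 0 with h | h | h
  · rw [if_neg (not_lt.2 h.le), if_pos h, Real.sign_of_neg h, abs_of_neg h]
    push_cast
    rw [show -(2 * η * Real.sqrt (Real.pi * (m : ℝ) * τ.im)) = 2 * -η * Real.sqrt (Real.pi * (m : ℝ) * τ.im) by ring]
    ring
  · rw [h]; simp
  · rw [if_pos h, Real.sign_of_pos h, abs_of_pos h]
    push_cast
    rw [neg_neg]
    ring

lemma chat_G2 {m : ℕ} (hm : 0 < m) {τ : ℂ} (hτ : 0 < τ.im) (u : ℂ) (a η : ℝ) (r : ℤ)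
    (hη : u.im / τ.im + r / (2 * m) = η) (ha : a + r = 2 * m * η) :
    chat m τ u (fun r => ee (-(r:ℂ) * u) * (Nk (m / τ.im) 2 (a + r) : ℝ))
      (fun r => ee (-(r:ℂ) * u) * ((-1) ^ 2 * (Nk (m / τ.im) 2 (-(a + r)) : ℝ))) r =
    ee (-(r:ℂ) * u) * ((m:ℂ) * ((Real.exp (-(4 * Real.pi * m * η ^ 2 * τ.im)) : ℝ) /
      ((2 * Real.pi * Real.sqrt ((m : ℝ) * τ.im) : ℝ) : ℂ) -
      (|η| : ℝ) * (erfc (2 * |η| * Real.sqrt (Real.pi * (m : ℝ) * τ.im)) : ℂ))) := by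
  have hm' : (0:ℝ) < m := by exact_mod_cast hm
  have hpi := Real.pi_pos
  have hsq : Real.sqrt (Real.pi / (m / τ.im)) * (2 * m) = 2 * Real.sqrt (Real.pi * (m : ℝ) * τ.im) := by
    have : Real.pi * (m : ℝ) * τ.im = Real.pi / (m / τ.im) * (m:ℝ) ^ 2 := by field_simp
    rw [this, Real.sqrt_mul (by have := Real.pi_pos; positivity), Real.sqrt_sq hm'.le]; ring
  have hst : Real.sqrt (m / τ.im) / (2 * Real.pi) = m * (2 * Real.pi * Real.sqrt ((m : ℝ) * τ.im))⁻¹ := by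
    have h1 : Real.sqrt (m / τ.im) * Real.sqrt ((m : ℝ) * τ.im) = m := by
      rw [← Real.sqrt_mul (by positivity), show (m:ℝ) / τ.im * (m * τ.im) = (m:ℝ) ^ 2 by field_simp,
        Real.sqrt_sq hm'.le]
    have h2 : 0 < Real.sqrt ((m : ℝ) * τ.im) := Real.sqrt_pos.2 (by positivity)
    field_simp
    exact h1
  have e : ∀ b, Nk (m / τ.im) 2 b = m * (2 * Real.pi * Real.sqrt ((m : ℝ) * τ.im))⁻¹ * Real.exp (-(Real.pi * b ^ 2 / (m / τ.im))) +
      b * (1 / 2 * erfc (-(Real.sqrt (Real.pi / (m / τ.im)) * b))) := fun b => by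
    rw [Nk, if_neg (by norm_num), hst]
  have hex : Real.pi * (2 * m * η) ^ 2 / (m / τ.im) = 4 * Real.pi * m * η ^ 2 * τ.im := by
    field_simp; ring
  have h1 : Real.sqrt (Real.pi / (m / τ.im)) * (2 * m * η) = 2 * η * Real.sqrt (Real.pi * (m : ℝ) * τ.im) := by
    rw [← mul_assoc, hsq]; ring
  unfold chat
  simp only [hη, ha, e]
  simp only [mul_neg, h1, neg_sq, hex]
  rcases lt_trichotomy η 0 with h | h | h
  · rw [if_neg (not_lt.2 h.le), if_pos h, abs_of_neg h]
    push_cast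
    rw [show -(2 * η * Real.sqrt (Real.pi * (m : ℝ) * τ.im)) = 2 * -η * Real.sqrt (Real.pi * (m : ℝ) * τ.im) by ring]
    ring
  · rw [h]; simp
  · rw [if_pos h, abs_of_pos h]
    push_cast
    rw [neg_neg]
    ring

lemma expo_id {m : ℕ} (hm : 0 < m) (s : ℚ × ℚ) (τ : ℂ) (l n : ℤ) :
    ee (-(m : ℂ) * (s.1 : ℚ) * zpt s τ) * (ee (-((l - 2 * m * n : ℤ) : ℂ) ^ 2 / (4 * (m : ℂ)) * τ) *
      ee (-((l - 2 * m * n : ℤ):ℂ) * zpt s τ)) =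
    ee ((m : ℂ) * (s.1 : ℚ) * (s.2 : ℚ)) * (ee (-(2 * (m : ℂ) * (s.2 : ℚ) * (lamVal m s l (-n) : ℝ))) *
      ee (-(m : ℂ) * (lamVal m s l (-n) : ℝ) ^ 2 * τ)) := by
  have hm' : (m:ℂ) ≠ 0 := by exact_mod_cast hm.ne'
  rw [← ee_add, ← ee_add, ← ee_add, ← ee_add]
  congr 1
  unfold zpt lamVal
  push_cast
  field_simp
  ring

lemma gaussP1 {m : ℕ} (hm : 0 < m) {τ : ℂ} (hτ : 0 < τ.im) (s : ℚ × ℚ) :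
    PD m τ (zpt s τ) (fun z => ee (-(m : ℂ) * (s.1 : ℚ) * zpt s τ) *
      AvT m (fG (m / τ.im) (2 * m * (s.1 : ℚ)) 1 (zpt s τ)) τ z) 0 (ee (-(m : ℂ) * (s.1 : ℚ) * zpt s τ))
      (fun l => ThStar m s l τ) := by
  have hm' : (0:ℝ) < m := by exact_mod_cast hm
  have hK := ((KD_G hm hτ (zpt s τ) (2 * m * (s.1 : ℚ)) 1 (Or.inl rfl)).pd hm hτ).const_mul
    (ee (-(m : ℂ) * (s.1 : ℚ) * zpt s τ))
  convert hK using 1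
  · simp
  · simp
  · funext l
    unfold ThStar
    rw [← tsum_mul_left, ← tsum_mul_left, ← (Equiv.neg ℤ).tsum_eq]
    congr 1; funext n
    simp only [Equiv.neg_apply]
    rw [chat_G1 hm hτ _ _ (lamVal m s l (-n))]
    · have := expo_id hm s τ l n
      linear_combination (-(Real.sign (lamVal m s l (-n)) : ℂ) * (erfc (2 * |lamVal m s l (-n)| * Real.sqrt (Real.pi * (m : ℝ) * τ.im)) : ℂ) / 2) * this
    · rw [zpt_im]; unfold lamVal; push_cast; field_simp; ring
    · unfold lamVal; push_cast; field_simp; ring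

lemma conj_ee (x : ℂ) : (starRingEnd ℂ) (ee x) = ee (-(starRingEnd ℂ) x) := by
  unfold ee
  rw [← Complex.exp_conj]
  congr 1
  simp only [map_mul, Complex.conj_I, Complex.conj_ofReal, map_ofNat]
  ring

lemma gaussP2 {m : ℕ} (hm : 0 < m) {τ : ℂ} (hτ : 0 < τ.im) (s : ℚ × ℚ) :
    PD m τ (zpt s τ) (fun z => ee (-(m : ℂ) * (s.1 : ℚ) * zpt s τ) *
      AvT m (fG (m / τ.im) (2 * m * (s.1 : ℚ)) 2 (zpt s τ)) τ z) (ee (-(m : ℂ) * (s.1 : ℚ) * zpt s τ))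
      (-(2 * (m : ℂ) * (s.1 : ℚ)) * ee (-(m : ℂ) * (s.1 : ℚ) * zpt s τ))
      (fun l => (m : ℂ) * thSstar m s l τ) := by
  have hm' : (0:ℝ) < m := by exact_mod_cast hm
  have hK0 := KD_G hm hτ (zpt s τ) (2 * m * (s.1 : ℚ)) 2 (Or.inr rfl)
  have hK := (hK0.pd hm hτ).const_mul (ee (-(m : ℂ) * (s.1 : ℚ) * zpt s τ))
  convert hK using 1
  · simp
  · simp; ring
  · funext l
    have hsm := ((hK0.canon hm hτ).1 l).mul_left (ee (-(m : ℂ) * (s.1 : ℚ) * zpt s τ))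
    rw [← tsum_mul_left]
    set F : ℤ → ℂ := fun n => ee (-(2 * (m : ℂ) * (s.2 : ℚ) * (lamVal m s l n : ℝ))) *
      ee (-(m : ℂ) * (lamVal m s l n : ℝ) ^ 2 * (starRingEnd ℂ) τ) with hF
    set G : ℤ → ℂ := fun n => (|lamVal m s l n| : ℝ) *
        ee (-(2 * (m : ℂ) * (s.2 : ℚ) * (lamVal m s l n : ℝ))) *
        (erfc (2 * |lamVal m s l n| * Real.sqrt (Real.pi * (m : ℝ) * τ.im)) : ℂ) *
        ee (-(m : ℂ) * (lamVal m s l n : ℝ) ^ 2 * τ) with hG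
    set c := ((2 * Real.pi * Real.sqrt ((m : ℝ) * τ.im) : ℝ) : ℂ) with hc
    set K := ee ((m : ℂ) * (s.1 : ℚ) * (s.2 : ℚ)) with hK
    have hterm : ∀ n : ℤ, ee (-(m : ℂ) * (s.1 : ℚ) * zpt s τ) *
        (ee (-((l - 2 * m * n : ℤ) : ℂ) ^ 2 / (4 * (m : ℂ)) * τ) *
        chat m τ (zpt s τ) (fun r => ee (-(r:ℂ) * zpt s τ) * (Nk (m / τ.im) 2 (2 * m * (s.1 : ℚ) + r) : ℝ))
      (fun r => ee (-(r:ℂ) * zpt s τ) * ((-1) ^ 2 * (Nk (m / τ.im) 2 (-(2 * m * (s.1 : ℚ) + r)) : ℝ))) (l - 2 * m * n)) =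
        (m : ℂ) * K * (F (-n) / c - G (-n)) := by
      intro n
      rw [chat_G2 hm hτ _ _ (lamVal m s l (-n))]
      · have h1 := expo_id hm s τ l n
        have h2 : ee (-(m : ℂ) * (lamVal m s l (-n) : ℝ) ^ 2 * (starRingEnd ℂ) τ) =
          ee (-(m : ℂ) * (lamVal m s l (-n) : ℝ) ^ 2 * τ) * (Real.exp (-(4 * Real.pi * m * (lamVal m s l (-n)) ^ 2 * τ.im)) : ℝ) := by
          rw [Complex.ofReal_exp]
          unfold ee
          rw [← Complex.exp_add]
          congr 1
          have : (starRingEnd ℂ) τ = τ - 2 * I * τ.im := by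
            apply Complex.ext <;> simp; ring
          rw [this]
          push_cast
          linear_combination (4 * (Real.pi:ℂ) * m * (lamVal m s l (-n)) ^ 2 * τ.im) * Complex.I_sq
        simp only [hF, hG]
        rw [h2]
        linear_combination ((m:ℂ) * ((Real.exp (-(4 * Real.pi * m * (lamVal m s l (-n)) ^ 2 * τ.im)) : ℝ) / c -
      (|lamVal m s l (-n)| : ℝ) * (erfc (2 * |lamVal m s l (-n)| * Real.sqrt (Real.pi * (m : ℝ) * τ.im)) : ℂ))) * h1
      · rw [zpt_im]; unfold lamVal; push_cast; field_simp; ring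
      · unfold lamVal; push_cast; field_simp; ring
    simp_rw [hterm] at hsm ⊢
    have hmK : (m : ℂ) * K ≠ 0 := mul_ne_zero (by exact_mod_cast hm.ne') (ee_ne_zero _)
    have hs1 : Summable (fun n : ℤ => F (-n) / c - G (-n)) := (summable_mul_left_iff hmK).1 hsm
    have hs2 : Summable (fun n : ℤ => F n / c - G n) :=
      (Equiv.neg ℤ).summable_iff.1 hs1
    have hsF : Summable F := by
      obtain ⟨C, _, hC⟩ := gauss_sum_bdd (t := 2 * m * τ.im) (by positivity)
      refine Summable.of_norm ?_
      refine (hC ((s.1 : ℝ) + l / (2 * m))).1.congr fun n => ?_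
      simp only [hF]
      rw [norm_mul, norm_ee, norm_ee, ← Real.exp_add]
      congr 1
      have e1 : (-(2 * (m : ℂ) * (s.2 : ℚ) * (lamVal m s l n : ℝ))).im = 0 := by
        rw [show -(2 * (m : ℂ) * (s.2 : ℚ) * (lamVal m s l n : ℝ)) = ((-(2 * m * (s.2:ℚ) * lamVal m s l n) : ℝ) : ℂ) by
          push_cast; ring, Complex.ofReal_im]
      have e2 : (-(m : ℂ) * (lamVal m s l n : ℝ) ^ 2 * (starRingEnd ℂ) τ).im = m * (lamVal m s l n) ^ 2 * τ.im := by
        rw [show -(m : ℂ) * (lamVal m s l n : ℝ) ^ 2 = ((-(m * (lamVal m s l n) ^ 2) : ℝ) : ℂ) by push_cast; ring,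
          Complex.im_ofReal_mul, Complex.conj_im]
        ring
      rw [e1, e2]
      unfold lamVal
      ring
    have hsG : Summable G := by
      have := (hsF.div_const c).sub hs2
      refine this.congr fun n => ?_
      ring
    have hng := (Equiv.neg ℤ).tsum_eq (fun n => F n / c - G n)
    simp only [Equiv.neg_apply] at hng
    rw [tsum_mul_left, hng, (hsF.div_const c).tsum_sub hsG, tsum_div_const]
    unfold thSstar thS
    rw [map_mul, conj_ee, Complex.conj_tsum]
    have e3 : ee (-(starRingEnd ℂ) (-(m : ℂ) * (s.1 : ℚ) * (s.2 : ℚ))) = K := by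
      rw [hK]; congr 1; simp
    have e4 : ∀ n : ℤ, (starRingEnd ℂ) (ee (2 * (m : ℂ) * (s.2 : ℚ) * (lamVal m s l n : ℝ)) *
      ee ((m : ℂ) * (lamVal m s l n : ℝ) ^ 2 * τ)) = F n := by
      intro n
      rw [map_mul, conj_ee, conj_ee]
      simp only [hF]
      congr 2
      · simp [map_ofNat (starRingEnd ℂ) 2]
      · simp
    rw [e3]
    simp_rw [e4]
    ring

lemma zpt_add (s : ℚ × ℚ) (lam mu : ℤ) (τ : ℂ) :
    zpt (s.1 + (lam : ℚ), s.2 + (mu : ℚ)) τ = zpt s τ + lam * τ + mu := by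
  unfold zpt; push_cast; ring

lemma zpt_inj {τ : ℂ} (hτ : 0 < τ.im) {s s' : ℚ × ℚ} (h : zpt s τ = zpt s' τ) : s = s' := by
  have h1 := congrArg Complex.im h
  rw [zpt_im, zpt_im] at h1
  have h2 : s.1 = s'.1 := by exact_mod_cast mul_right_cancel₀ hτ.ne' h1
  have h3 : s.2 = s'.2 := by
    unfold zpt at h
    rw [h2] at h
    exact_mod_cast add_left_cancel h
  exact Prod.ext h2 h3

lemma rep_zpt {S : Set (ℚ × ℚ)} {T : Finset (ℚ × ℚ)} (hT : IsRepSet S T) (τ : ℂ) {s : ℚ × ℚ} (hs : s ∈ S) :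
    ∃ t ∈ T, ∃ lam mu : ℤ, zpt s τ = zpt t τ + lam * τ + mu := by
  obtain ⟨t, ⟨ht, lam, mu, h1, h2⟩, _⟩ := hT.2 s hs
  refine ⟨t, ht, lam, mu, ?_⟩
  rw [← zpt_add, ← h1, ← h2]

lemma off_lattice {k : ℤ} {m : ℕ} {S : Set (ℚ × ℚ)} (Φ : MeroJacobiForm k m S) {τ z : ℂ}
    (hz : ∀ s ∈ S, z ≠ zpt s τ) {t : ℚ × ℚ} (ht : t ∈ S) (lam n : ℤ) :
    (lam : ℂ) * τ + (z - zpt t τ) ≠ n := by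
  intro h
  apply hz _ (Φ.lattice_inv t ht (-lam) n)
  rw [zpt_add, ← h]; push_cast; ring

lemma rep_sep {S : Set (ℚ × ℚ)} {T : Finset (ℚ × ℚ)} (hT : IsRepSet S T) {τ : ℂ} (hτ : 0 < τ.im) {t t' : ℚ × ℚ}
    (ht : t ∈ T) (ht' : t' ∈ T) (hne : t' ≠ t) (lam n : ℤ) :
    (lam : ℂ) * τ + (zpt t τ - zpt t' τ) ≠ n := by
  intro h
  apply hne
  have h1 : t = (t'.1 + ((-lam : ℤ) : ℚ), t'.2 + (n : ℚ)) := by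
    apply zpt_inj hτ
    rw [zpt_add, ← h]; push_cast; ring
  refine (hT.2 t (hT.1 ht)).unique ⟨ht', -lam, n, ?_, ?_⟩ ⟨ht, 0, 0, by simp, by simp⟩
  · exact congrArg Prod.fst h1
  · exact congrArg Prod.snd h1

lemma lattice_disc {τ : ℂ} (hτ : 0 < τ.im) (w : ℂ) :
    ∀ᶠ z in 𝓝[≠] w, ∀ lam n : ℤ, (lam : ℂ) * τ + z ≠ n := by
  by_cases h : ∀ lam n : ℤ, (lam : ℂ) * τ + w ≠ n
  · obtain ⟨δ, hδ, hs⟩ := lattice_sep hτ h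
    have : ∀ᶠ z in 𝓝 w, z ∈ Metric.ball w δ := Metric.ball_mem_nhds w hδ
    filter_upwards [this.filter_mono nhdsWithin_le_nhds] with z hz lam n hl
    have h1 := hs lam n
    rw [← hl] at h1
    rw [Metric.mem_ball, dist_eq_norm, norm_sub_rev] at hz
    rw [show (lam : ℂ) * τ + w - (lam * τ + z) = w - z by ring] at h1
    linarith
  · push Not at h
    obtain ⟨l0, n0, h0⟩ := h
    have : ∀ᶠ z in 𝓝 w, z ∈ Metric.ball w (min τ.im 1) := Metric.ball_mem_nhds w (lt_min hτ one_pos)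
    filter_upwards [this.filter_mono nhdsWithin_le_nhds, self_mem_nhdsWithin] with z hz hne lam n hl
    apply hne
    rw [Metric.mem_ball, dist_eq_norm] at hz
    have e : z - w = ((l0 - lam : ℤ) : ℂ) * τ + ((n - n0 : ℤ) : ℂ) := by
      push_cast
      linear_combination hl - h0
    have h1 : |(z - w).im| < τ.im := lt_of_le_of_lt (Complex.abs_im_le_norm _) (lt_of_lt_of_le hz (min_le_left _ _))
    have h2 : ‖z - w‖ < 1 := lt_of_lt_of_le hz (min_le_right _ _)
    have h3 : (z - w).im = ((l0 - lam : ℤ) : ℝ) * τ.im := by rw [e]; simp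
    rw [h3, abs_mul, abs_of_pos hτ] at h1
    have h4 : |((l0 - lam : ℤ) : ℝ)| < 1 := by
      by_contra hc
      push Not at hc
      nlinarith
    have h5 : l0 - lam = 0 := Int.abs_lt_one_iff.1 (by exact_mod_cast h4)
    rw [h5] at e
    have h6 : z - w = ((n - n0 : ℤ) : ℂ) := by rw [e]; simp
    rw [h6, Complex.norm_intCast] at h2
    have h7 : n - n0 = 0 := Int.abs_lt_one_iff.1 (by exact_mod_cast h2)
    rw [h7] at h6
    simpa [sub_eq_zero] using h6

lemma poles_disc {k : ℤ} {m : ℕ} {S : Set (ℚ × ℚ)} (Φ : MeroJacobiForm k m S) {T : Finset (ℚ × ℚ)}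
    (hT : IsRepSet S T) {τ : ℂ} (hτ : 0 < τ.im) (z : ℂ) :
    ∀ᶠ z' in 𝓝[≠] z, z' ∉ (fun s => zpt s τ) '' S := by
  have h : ∀ᶠ z' in 𝓝[≠] z, ∀ t ∈ T, ∀ lam n : ℤ, (lam : ℂ) * τ + (z' - zpt t τ) ≠ n := by
    rw [Filter.eventually_all_finset]
    intro t _
    have h1 := lattice_disc hτ (z - zpt t τ)
    have h2 : Tendsto (fun z' => z' - zpt t τ) (𝓝[≠] z) (𝓝[≠] (z - zpt t τ)) := by
      apply tendsto_nhdsWithin_of_tendsto_nhds_of_eventually_within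
      · exact ((continuous_id.sub continuous_const).tendsto z).mono_left nhdsWithin_le_nhds
      · filter_upwards [self_mem_nhdsWithin] with x hx h3
        exact hx (sub_left_injective h3)
    exact h2.eventually h1
  filter_upwards [h] with z' hz'
  rintro ⟨s, hs, rfl⟩
  obtain ⟨t, ht, lam, mu, e⟩ := rep_zpt hT τ hs
  refine hz' t ht (-lam) mu ?_
  simp only
  rw [e]; push_cast; ring

lemma phi_diff {k : ℤ} {m : ℕ} {S : Set (ℚ × ℚ)} (Φ : MeroJacobiForm k m S) {τ : ℂ} (hτ : 0 < τ.im) {z : ℂ}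
    (hz : ∀ s ∈ S, z ≠ zpt s τ) : DifferentiableAt ℂ (Φ.toFun τ) z := by
  have h := Φ.holo τ hτ z hz
  exact DifferentiableAt.comp (f := fun z : ℂ => (τ, z)) z h
    ((differentiableAt_const τ).prodMk differentiableAt_id)

lemma phi_canon {k : ℤ} {m : ℕ} (hm : 0 < m) {S : Set (ℚ × ℚ)} (Φ : MeroJacobiForm k m S) {T : Finset (ℚ × ℚ)}
    (hT : IsRepSet S T) {h : ℤ → ℂ → ℂ} (hh : IsCanonCoeff m Φ.toFun h) {τ : ℂ} (hτ : 0 < τ.im) :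
    Canon m τ (Φ.toFun τ) (fun l => h l τ) := by
  intro l
  refine ⟨?_, ?_⟩
  · have key : ∀ᶠ ε : ℝ in 𝓝[>] (0:ℝ), ∀ t ∈ T, ∀ n : ℤ, ε < |((t.1:ℝ) + l / (2 * m) - n) * τ.im| ∨
        ((t.1:ℝ) + l / (2 * m) - n) * τ.im = 0 := by
      rw [Filter.eventually_all_finset]
      intro t _
      obtain ⟨g, hg, hgap⟩ := gap ((t.1:ℝ) + l / (2 * m))
      have : ∀ᶠ ε : ℝ in 𝓝 (0:ℝ), ε < g * τ.im := eventually_lt_nhds (by positivity)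
      filter_upwards [this.filter_mono nhdsWithin_le_nhds] with ε hε n
      by_cases h0 : (t.1:ℝ) + l / (2 * m) - n = 0
      · right; rw [h0, zero_mul]
      · left
        rw [abs_mul, abs_of_pos hτ]
        have := mul_le_mul_of_nonneg_right (hgap n h0) hτ.le
        linarith
    have main : ∀ ε : ℝ, 0 < |ε| → (∀ t ∈ T, ∀ n : ℤ, |ε| < |((t.1:ℝ) + l / (2 * m) - n) * τ.im| ∨
        ((t.1:ℝ) + l / (2 * m) - n) * τ.im = 0) → 
        IntervalIntegrable (CanonI m τ (Φ.toFun τ) l (ε * I)) volume 0 1 := by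
      intro ε hε hk
      apply Continuous.intervalIntegrable
      unfold CanonI
      have hc : Continuous fun x : ℝ => Φ.toFun τ (x + ε * I - l * τ / (2 * m)) := by
        rw [continuous_iff_continuousAt]
        intro x
        refine ContinuousAt.comp (f := fun x : ℝ => (x : ℂ) + ε * I - l * τ / (2 * m)) (g := Φ.toFun τ)
          (phi_diff Φ hτ ?_).continuousAt (by fun_prop)
        intro s hs he
        obtain ⟨t, ht, lam, mu, e⟩ := rep_zpt hT τ hs
        rw [e] at he
        have h1 := congrArg Complex.im he
        have h2 : ((x : ℂ) + ε * I - l * τ / (2 * m)).im = ε - l / (2 * m) * τ.im := by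
          rw [show (l:ℂ) * τ / (2 * m) = ((l / (2 * m) : ℝ) : ℂ) * τ by push_cast; ring]
          rw [Complex.sub_im, Complex.im_ofReal_mul]; simp
        have h3 : (zpt t τ + lam * τ + mu).im = t.1 * τ.im + lam * τ.im := by
          simp [zpt_im]
        rw [h2, h3] at h1
        have h4 : ε = ((t.1:ℝ) + l / (2 * m) - (-lam : ℤ)) * τ.im := by push_cast; linarith
        rcases hk t ht (-lam) with h5 | h5
        · rw [← h4] at h5; exact lt_irrefl _ h5
        · rw [← h4] at h5; rw [h5] at hε; simp at hε
      exact hc.mul (continuous_ee.comp (by fun_prop))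
    filter_upwards [key, self_mem_nhdsWithin] with ε hk hε
    have hε' : 0 < ε := hε
    refine ⟨main ε (abs_pos.2 hε'.ne') (by rwa [abs_of_pos hε']), ?_⟩
    have := main (-ε) (by rw [abs_neg]; exact abs_pos.2 hε'.ne') (by rwa [abs_neg, abs_of_pos hε'])
    rwa [show ((-ε : ℝ) : ℂ) * I = -(ε * I) by push_cast; ring] at this
  · have := hh l τ hτ
    simpa only [CanonI, sub_eq_add_neg, ← add_assoc] using this

lemma canon_theta {m : ℕ} (hm : 0 < m) {τ : ℂ} (hτ : 0 < τ.im) {F : ℂ → ℂ} {g : ℤ → ℂ} (hE : Ell m τ F)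
    (hF : Canon m τ F g) :
    Canon m τ (fun z => F z + ∑ l ∈ Finset.range (2 * m), (-g (l:ℤ)) * jTheta m (l:ℤ) τ z) (fun _ => 0) := by
  have hper := fun l => Canon.periodic hm hE hF l
  have h := hF.add (Canon.sum (Finset.range (2 * m)) fun l _ =>
    (jTheta_pd hm hτ 0 (l : ℤ)).canon.const_mul (-g (l : ℤ)))
  convert h using 1
  funext r
  have hm2 : (0:ℤ) < 2 * m := by positivity
  have hP : Function.Periodic g (2 * (m:ℤ)) := hper
  set q := r % (2 * m) with hq
  have hq0 : 0 ≤ q := Int.emod_nonneg _ hm2.ne'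
  have hq1 : q < 2 * m := Int.emod_lt_of_pos _ hm2
  have hr : r = q + (r / (2 * m)) * (2 * m) := by
    rw [hq]; have := Int.emod_add_mul_ediv r (2 * m); linarith
  have hgq : g r = g q := by
    conv_lhs => rw [hr]
    exact hP.int_mul _ _
  rw [Finset.sum_eq_single q.toNat]
  · rw [if_pos ⟨r / (2 * m), by rw [Int.toNat_of_nonneg hq0]; linarith⟩, Int.toNat_of_nonneg hq0, hgq]; ring
  · intro b hb hne
    rw [if_neg, mul_zero]
    rintro ⟨n, hn⟩
    apply hne
    rw [Finset.mem_range] at hb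
    have hb' : (b:ℤ) < 2 * m := by exact_mod_cast hb
    have : q = b := by
      rw [hq, show r = b + 2 * m * n by linarith, Int.add_mul_emod_self_left]
      exact Int.emod_eq_of_lt (by positivity) hb'
    rw [this]; simp
  · intro hn
    exfalso; apply hn
    rw [Finset.mem_range]
    have : ((q.toNat : ℕ) : ℤ) < 2 * m := by rwa [Int.toNat_of_nonneg hq0]
    exact_mod_cast this

lemma ell_theta {m : ℕ} (hm : 0 < m) {τ : ℂ} (hτ : 0 < τ.im) (l : ℤ) : Ell m τ (jTheta m l τ) :=
  (jTheta_pd hm hτ 0 l).ell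

lemma decomp {k : ℤ} {m : ℕ} (hm : 0 < m) {S : Set (ℚ × ℚ)} (Φ : MeroJacobiForm k m S) {T : Finset (ℚ × ℚ)}
    (hT : IsRepSet S T) {h : ℤ → ℂ → ℂ} (hh : IsCanonCoeff m Φ.toFun h)
    {E D : ℚ × ℚ → ℂ → ℂ} (hED : IsLaurentData m S Φ.toFun E D) {τ : ℂ} (hτ : 0 < τ.im)
    (X1 X2 : ℚ × ℚ → ℂ → ℂ) (C1 C2 : ℚ × ℚ → ℤ → ℂ)
    (h1 : ∀ t, PD m τ (zpt t τ) (X1 t) 0 (ee (-(m : ℂ) * (t.1 : ℚ) * zpt t τ)) (C1 t))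
    (h2 : ∀ t, PD m τ (zpt t τ) (X2 t) (ee (-(m : ℂ) * (t.1 : ℚ) * zpt t τ))
      (-(2 * (m : ℂ) * (t.1 : ℚ)) * ee (-(m : ℂ) * (t.1 : ℚ) * zpt t τ)) (C2 t))
    {z : ℂ} (hz : ∀ s ∈ S, z ≠ zpt s τ) :
    Φ.toFun τ z = (∑ l ∈ Finset.range (2 * m), (h (l:ℤ) τ - ∑ t ∈ T, (D t τ * C1 t l + E t τ * C2 t l)) *
      jTheta m (l:ℤ) τ z) + ∑ t ∈ T, (D t τ * X1 t z + E t τ * X2 t z) := by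
  set g : ℤ → ℂ := fun l => h l τ + ∑ t ∈ T, (-D t τ * C1 t l + -E t τ * C2 t l) with hg
  set F : ℂ → ℂ := fun z => Φ.toFun τ z + ∑ t ∈ T, (-D t τ * X1 t z + -E t τ * X2 t z) with hF
  have hEF : Ell m τ F := by
    intro z lam mu
    simp only [hF]
    rw [Φ.elliptic τ hτ z lam mu, mul_add (ee _), Finset.mul_sum]
    congr 1
    refine Finset.sum_congr rfl fun t _ => ?_
    rw [(h1 t).ell z lam mu, (h2 t).ell z lam mu]; ring
  have hCF : Canon m τ F g := (phi_canon hm Φ hT hh hτ).add (Canon.sum T fun t _ =>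
    ((h1 t).canon.const_mul (-D t τ)).add ((h2 t).canon.const_mul (-E t τ)))
  set H : ℂ → ℂ := fun z => F z + ∑ l ∈ Finset.range (2 * m), (-g (l:ℤ)) * jTheta m (l:ℤ) τ z with hH
  have hCH : Canon m τ H (fun _ => 0) := canon_theta hm hτ hEF hCF
  have hEH : Ell m τ H := by
    intro z lam mu
    simp only [hH]
    rw [hEF z lam mu, mul_add (ee _) (F z), Finset.mul_sum (Finset.range (2 * m))]
    congr 1
    refine Finset.sum_congr rfl fun l _ => ?_
    rw [ell_theta hm hτ l z lam mu]; ring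
  set Z : Set ℂ := (fun s => zpt s τ) '' S with hZ
  have hZ' : ∀ z, z ∉ Z → ∀ s ∈ S, z ≠ zpt s τ := fun z hz s hs he => hz ⟨s, hs, he.symm⟩
  have hTh : Differentiable ℂ (fun z => ∑ l ∈ Finset.range (2 * m), (-g (l:ℤ)) * jTheta m (l:ℤ) τ z) := by
    refine Differentiable.fun_sum fun l _ => (jTheta_diff hm hτ l).const_mul _
  have hzero : H z = 0 := by
    refine uniq m τ H Z ((Set.to_countable S).image _) (poles_disc Φ hT hτ) ?_ ?_ hEH.per hCH z ?_
    · intro w hw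
      refine DifferentiableAt.add (DifferentiableAt.add (phi_diff Φ hτ (hZ' w hw)) ?_) (hTh w)
      refine DifferentiableAt.fun_sum fun t ht => ?_
      have ho := off_lattice Φ (hZ' w hw) (hT.1 ht)
      exact (((h1 t).diff w ho).const_mul _).add (((h2 t).diff w ho).const_mul _)
    · have main : ∀ t ∈ T, Tendsto (fun ε : ℂ => ε * H (zpt t τ + ε)) (𝓝[≠] 0) (𝓝 0) := by
        intro t ht
        obtain ⟨_, hL⟩ := hED t (hT.1 ht) τ hτ
        have l1 := (h1 t).laurent.const_mul (D t τ)
        have l2 := (h2 t).laurent.const_mul (E t τ)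
        have l0 := hL.const_mul (ee (-(m : ℂ) * (t.1 : ℚ) * zpt t τ))
        set R : ℂ → ℂ := fun z => (∑ t' ∈ T.erase t, (-D t' τ * X1 t' z + -E t' τ * X2 t' z)) +
          ∑ l ∈ Finset.range (2 * m), (-g (l:ℤ)) * jTheta m (l:ℤ) τ z with hR
        have hRd : DifferentiableAt ℂ R (zpt t τ) := by
          refine DifferentiableAt.add ?_ (hTh _)
          refine DifferentiableAt.fun_sum fun t' ht' => ?_
          have ho := rep_sep hT hτ ht (Finset.mem_of_mem_erase ht') (Finset.ne_of_mem_erase ht')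
          exact (((h1 t').diff _ ho).const_mul _).add (((h2 t').diff _ ho).const_mul _)
        have hRc : Tendsto (fun ε : ℂ => 2 * (Real.pi : ℂ) * I * ε * R (zpt t τ + ε)) (𝓝[≠] 0) (𝓝 0) := by
          have a1 : ContinuousAt (fun ε : ℂ => R (zpt t τ + ε)) 0 :=
            ContinuousAt.comp (f := fun ε : ℂ => zpt t τ + ε) (g := R) (by simpa using hRd.continuousAt) (by fun_prop)
          have a2 : ContinuousAt (fun ε : ℂ => 2 * (Real.pi : ℂ) * I * ε * R (zpt t τ + ε)) 0 :=
            ContinuousAt.mul (by fun_prop) a1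
          have := a2.tendsto.mono_left (nhdsWithin_le_nhds (s := {0}ᶜ))
          simpa using this
        have hsum := (((l0.sub l1).sub l2).add hRc).const_mul (2 * (Real.pi : ℂ) * I)⁻¹
        refine (hsum.congr fun ε => ?_).trans (le_of_eq ?_)
        · have e1 : ee (-(m : ℂ) * (t.1 : ℚ) * zpt t τ) * ee ((m : ℂ) * (t.1 : ℚ) * zpt t τ) = 1 := by
            rw [← ee_add, show -(m : ℂ) * (t.1 : ℚ) * zpt t τ + (m : ℂ) * (t.1 : ℚ) * zpt t τ = 0 by ring, ee_zero]
          have e2 : H (zpt t τ + ε) = Φ.toFun τ (zpt t τ + ε) - D t τ * X1 t (zpt t τ + ε) - E t τ * X2 t (zpt t τ + ε) +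
              R (zpt t τ + ε) := by
            simp only [hH, hF, hR]
            rw [← Finset.add_sum_erase T _ ht]; ring
          have e3 : (2 * (Real.pi : ℂ) * I)⁻¹ * (2 * (Real.pi : ℂ) * I) = 1 := inv_mul_cancel₀ Complex.two_pi_I_ne_zero
          rw [e2]
          linear_combination (ε * (Φ.toFun τ (zpt t τ + ε) - D t τ * X1 t (zpt t τ + ε) - E t τ * X2 t (zpt t τ + ε) +
              R (zpt t τ + ε))) * e3 + ((2 * (Real.pi : ℂ) * I)⁻¹ * (2 * (Real.pi : ℂ) * I) * ε * Φ.toFun τ (zpt t τ + ε)) * e1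
        · congr 1; ring
      rintro p ⟨s, hs, rfl⟩
      obtain ⟨t, ht, lam, mu, e⟩ := rep_zpt hT τ hs
      have hk : Tendsto (fun ε : ℂ => ee (-(m : ℂ) * ((lam : ℂ) ^ 2 * τ + 2 * (lam : ℂ) * (zpt t τ + ε))))
          (𝓝[≠] 0) (𝓝 (ee (-(m : ℂ) * ((lam : ℂ) ^ 2 * τ + 2 * (lam : ℂ) * (zpt t τ + 0))))) := by
        have : Continuous (fun ε : ℂ => ee (-(m : ℂ) * ((lam : ℂ) ^ 2 * τ + 2 * (lam : ℂ) * (zpt t τ + ε)))) :=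
          continuous_ee.comp (by fun_prop)
        exact (this.tendsto 0).mono_left nhdsWithin_le_nhds
      have := hk.mul (main t ht)
      rw [mul_zero] at this
      refine this.congr fun ε => ?_
      simp only
      rw [e, show zpt t τ + lam * τ + mu + ε = zpt t τ + ε + lam * τ + mu by ring, hEH]; ring
    · rintro ⟨s, hs, he⟩
      exact hz s hs he.symm
  simp only [hH, hF, hg] at hzero
  have e1 : ∑ l ∈ Finset.range (2 * m), (-(h (l:ℤ) τ + ∑ t ∈ T, (-D t τ * C1 t l + -E t τ * C2 t l))) * jTheta m (l:ℤ) τ z =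
      -∑ l ∈ Finset.range (2 * m), (h (l:ℤ) τ - ∑ t ∈ T, (D t τ * C1 t l + E t τ * C2 t l)) * jTheta m (l:ℤ) τ z := by
    rw [← Finset.sum_neg_distrib]
    refine Finset.sum_congr rfl fun l _ => ?_
    have : ∑ t ∈ T, (-D t τ * C1 t l + -E t τ * C2 t l) = -∑ t ∈ T, (D t τ * C1 t l + E t τ * C2 t l) := by
      rw [← Finset.sum_neg_distrib]
      exact Finset.sum_congr rfl fun t _ => by ring
    rw [this]; ring
  have e2 : ∑ t ∈ T, (-D t τ * X1 t z + -E t τ * X2 t z) = -∑ t ∈ T, (D t τ * X1 t z + E t τ * X2 t z) := by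
    rw [← Finset.sum_neg_distrib]
    exact Finset.sum_congr rfl fun t _ => by ring
  rw [e1, e2] at hzero
  linear_combination hzero

lemma part_one {k : ℤ} {m : ℕ} (hm : 0 < m) {S : Set (ℚ × ℚ)} (Φ : MeroJacobiForm k m S) {T : Finset (ℚ × ℚ)}
    (hT : IsRepSet S T) {h : ℤ → ℂ → ℂ} (hh : IsCanonCoeff m Φ.toFun h)
    {E D : ℚ × ℚ → ℂ → ℂ} (hED : IsLaurentData m S Φ.toFun E D) {τ : ℂ} (hτ : 0 < τ.im)
    {z : ℂ} (hz : ∀ s ∈ S, z ≠ zpt s τ) : Φ.toFun τ z = finitePart m h τ z +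
          ∑ t ∈ T, (D t τ * AppellA m t τ z + E t τ * AppellB m t τ z) := by
  choose X1 hX1 hA using fun t => appellA_pd hm hτ t
  choose X2 hX2 hB using fun t => appellB_pd hm hτ t
  have := decomp hm Φ hT hh hED hτ X1 X2 (fun _ _ => 0) (fun _ _ => 0) hX1 hX2 hz
  rw [this]
  unfold finitePart
  congr 1
  · simp
  · refine Finset.sum_congr rfl fun t ht => ?_
    have ho := off_lattice Φ hz (hT.1 ht)
    rw [hA t z ho, hB t z ho]

def Lsum (m : ℕ) (T : Finset (ℚ × ℚ)) (E D : ℚ × ℚ → ℂ → ℂ) (τ z : ℂ) : ℂ :=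
  ∑ t ∈ T, (D t τ * (ee (-(m : ℂ) * (t.1 : ℚ) * zpt t τ) *
      AvT m (fG (m / τ.im) (2 * m * (t.1 : ℚ)) 1 (zpt t τ)) τ z) +
    E t τ * (ee (-(m : ℂ) * (t.1 : ℚ) * zpt t τ) *
      AvT m (fG (m / τ.im) (2 * m * (t.1 : ℚ)) 2 (zpt t τ)) τ z))

def hatF (m : ℕ) (T : Finset (ℚ × ℚ)) (h : ℤ → ℂ → ℂ) (E D : ℚ × ℚ → ℂ → ℂ) (τ z : ℂ) : ℂ :=
  ∑ l ∈ Finset.range (2 * m),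
          (h (l : ℤ) τ -
              ∑ t ∈ T, (D t τ * ThStar m t (l : ℤ) τ + (m : ℂ) * E t τ * thSstar m t (l : ℤ) τ)) *
            jTheta m (l : ℤ) τ z

lemma hat_eq {k : ℤ} {m : ℕ} (hm : 0 < m) {S : Set (ℚ × ℚ)} (Φ : MeroJacobiForm k m S) {T : Finset (ℚ × ℚ)}
    (hT : IsRepSet S T) {h : ℤ → ℂ → ℂ} (hh : IsCanonCoeff m Φ.toFun h)
    {E D : ℚ × ℚ → ℂ → ℂ} (hED : IsLaurentData m S Φ.toFun E D) {τ : ℂ} (hτ : 0 < τ.im)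
    {z : ℂ} (hz : ∀ s ∈ S, z ≠ zpt s τ) : hatF m T h E D τ z = Φ.toFun τ z - Lsum m T E D τ z := by
  have := decomp hm Φ hT hh hED hτ _ _ _ _ (gaussP1 hm hτ) (gaussP2 hm hτ) hz
  rw [this]
  unfold hatF Lsum
  rw [add_sub_cancel_right]
  refine Finset.sum_congr rfl fun l _ => ?_
  congr 2
  refine Finset.sum_congr rfl fun t _ => ?_
  ring

lemma hat_diff {m : ℕ} (hm : 0 < m) (T : Finset (ℚ × ℚ)) (h : ℤ → ℂ → ℂ)
    (E D : ℚ × ℚ → ℂ → ℂ) {τ : ℂ} (hτ : 0 < τ.im) : Differentiable ℂ (hatF m T h E D τ) := by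
  refine Differentiable.fun_sum fun l _ => (jTheta_diff hm hτ l).const_mul _

def Wf (m : ℕ) (s : ℚ × ℚ) (τ v : ℂ) : ℂ :=
  ee (-(m : ℂ) * (s.1 : ℚ) * zpt s τ - 2 * m * (s.1 : ℚ) * v + I * m / (2 * (τ.im : ℂ)) * v ^ 2)

lemma Wf_Gk (m : ℕ) (s : ℚ × ℚ) (τ v : ℂ) (j : ℕ) :
    ee (-(m : ℂ) * (s.1 : ℚ) * zpt s τ) * Gk (m / τ.im) (2 * m * (s.1 : ℚ)) j v =
      Wf m s τ v / (2 * (Real.pi : ℂ) * I * v) ^ j := by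
  unfold Gk Wf
  have h1 : Complex.exp (-(Real.pi * (m / τ.im) : ℝ) * v ^ 2) = ee (I * m / (2 * (τ.im : ℂ)) * v ^ 2) := by
    unfold ee
    congr 1
    push_cast
    linear_combination (-(Real.pi : ℂ) * (m / τ.im) * v ^ 2) * Complex.I_sq
  rw [h1, ee_add, ee_sub]
  rw [show -(((2 * m * (s.1 : ℚ) : ℝ) : ℂ) * v) = -(2 * m * (s.1 : ℚ) * v) by push_cast; ring, ee_neg (2 * m * (s.1 : ℚ) * v)]
  ring

def Lf (m : ℕ) (E D : ℚ × ℚ → ℂ → ℂ) (s : ℚ × ℚ) (τ z : ℂ) : ℂ :=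
  Wf m s τ (z - zpt s τ) * (D s τ / (2 * (Real.pi : ℂ) * I * (z - zpt s τ)) +
    E s τ / (2 * (Real.pi : ℂ) * I * (z - zpt s τ)) ^ 2)

lemma Wf_ne (m : ℕ) (s : ℚ × ℚ) (τ v : ℂ) : Wf m s τ v ≠ 0 := ee_ne_zero _

/-- Laurent data in terms of the Gaussian weight -/
lemma laurent_W {m : ℕ} {S : Set (ℚ × ℚ)} {φ : ℂ → ℂ → ℂ} {E D : ℚ × ℚ → ℂ → ℂ}
    (hED : IsLaurentData m S φ E D) {s : ℚ × ℚ} (hs : s ∈ S) {τ : ℂ} (hτ : 0 < τ.im) :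
    Tendsto (fun v : ℂ => (2 * (Real.pi : ℂ) * I * v) ^ 2 * (φ τ (zpt s τ + v) / Wf m s τ v))
      (𝓝[≠] 0) (𝓝 (E s τ)) ∧
    Tendsto (fun v : ℂ => 2 * (Real.pi : ℂ) * I * v * (φ τ (zpt s τ + v) / Wf m s τ v -
      E s τ / (2 * (Real.pi : ℂ) * I * v) ^ 2)) (𝓝[≠] 0) (𝓝 (D s τ)) := by
  obtain ⟨hE, hD⟩ := hED s hs τ hτ
  set a : ℂ := 2 * m * (s.1 : ℚ) with ha
  set b : ℂ := I * m / (2 * (τ.im : ℂ)) with hb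
  set P : ℂ → ℂ := fun v => ee (a * v - b * v ^ 2) with hP
  have hW : ∀ v, (Wf m s τ v)⁻¹ = ee ((m : ℂ) * (s.1 : ℚ) * zpt s τ) * P v := by
    intro v
    simp only [hP, Wf]
    rw [← ee_neg, ← ee_add]; congr 1; ring
  have hP0 : P 0 = 1 := by simp [hP, ee_zero]
  have hd : HasDerivAt P (2 * (Real.pi : ℂ) * I * a) 0 := by
    have h1 : HasDerivAt (fun v : ℂ => 2 * (Real.pi : ℂ) * I * (a * v - b * v ^ 2)) (2 * (Real.pi : ℂ) * I * a) 0 := by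
      have h2 := (((hasDerivAt_id (0:ℂ)).const_mul a).sub (((hasDerivAt_id (0:ℂ)).pow 2).const_mul b)).const_mul
        (2 * (Real.pi : ℂ) * I)
      refine h2.congr_deriv ?_
      simp
    have h3 := h1.cexp
    refine h3.congr_deriv ?_
    simp
  have hPc : Tendsto P (𝓝[≠] 0) (𝓝 1) := by
    have := hd.continuousAt.tendsto.mono_left (nhdsWithin_le_nhds (s := {0}ᶜ))
    rwa [hP0] at this
  refine ⟨?_, ?_⟩
  · have := hE.mul hPc
    rw [mul_one] at this
    refine this.congr fun v => ?_
    rw [div_eq_mul_inv, hW]; ring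
  · have hs1 := (hasDerivAt_iff_tendsto_slope_zero.1 hd).const_mul (E s τ * (2 * (Real.pi : ℂ) * I)⁻¹)
    have hs2 := (hPc.mul hD).add hs1
    refine ((hs2.congr' ?_)).trans (le_of_eq ?_)
    · filter_upwards [self_mem_nhdsWithin] with v hv
      have hv' : v ≠ 0 := hv
      have hc := Complex.two_pi_I_ne_zero
      have hpi : (Real.pi : ℂ) ≠ 0 := by exact_mod_cast Real.pi_ne_zero
      rw [div_eq_mul_inv (φ τ _), hW, zero_add, hP0, smul_eq_mul]
      field_simp
      ring
    · congr 1
      rw [← mul_assoc, mul_assoc (E s τ), inv_mul_cancel₀ Complex.two_pi_I_ne_zero]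
      ring

lemma laurent_scale {m : ℕ} {S : Set (ℚ × ℚ)} {φ : ℂ → ℂ → ℂ} {E D : ℚ × ℚ → ℂ → ℂ}
    (hED : IsLaurentData m S φ E D) {s s' : ℚ × ℚ} (hs : s ∈ S) (hs' : s' ∈ S) {τ τ' : ℂ} (hτ : 0 < τ.im)
    (hτ' : 0 < τ'.im) (j c : ℂ) (hj : j ≠ 0)
    (hφ : ∀ v, φ τ' (zpt s' τ' + v / j) * Wf m s τ v = c * Wf m s' τ' (v / j) * φ τ (zpt s τ + v)) :
    E s' τ' * j ^ 2 = c * E s τ ∧ D s' τ' * j = c * D s τ := by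
  obtain ⟨e, d⟩ := laurent_W hED hs hτ
  obtain ⟨e', d'⟩ := laurent_W hED hs' hτ'
  have hψ : ∀ v, φ τ' (zpt s' τ' + v / j) / Wf m s' τ' (v / j) = c * (φ τ (zpt s τ + v) / Wf m s τ v) := by
    intro v
    have h1 := Wf_ne m s τ v
    have h2 := Wf_ne m s' τ' (v / j)
    rw [← mul_div_assoc, div_eq_div_iff h2 h1, hφ]; ring
  have hlim : Tendsto (fun v : ℂ => v / j) (𝓝[≠] 0) (𝓝[≠] 0) := by
    apply tendsto_nhdsWithin_of_tendsto_nhds_of_eventually_within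
    · have : Continuous (fun v : ℂ => v / j) := by fun_prop
      have := this.tendsto 0
      rw [zero_div] at this
      exact this.mono_left nhdsWithin_le_nhds
    · filter_upwards [self_mem_nhdsWithin] with v hv
      exact div_ne_zero hv hj
  have hE : E s' τ' * j ^ 2 = c * E s τ := by
    refine tendsto_nhds_unique (((e'.comp hlim).mul_const (j ^ 2)).congr fun v => ?_) (e.const_mul c)
    simp only [Function.comp]
    rw [hψ]; field_simp
  refine ⟨hE, ?_⟩
  have hE' : E s' τ' = c * E s τ / j ^ 2 := by rw [← hE]; field_simp
  refine tendsto_nhds_unique (((d'.comp hlim).mul_const j).congr' ?_) (d.const_mul c)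
  filter_upwards [self_mem_nhdsWithin] with v hv
  have hv' : v ≠ 0 := hv
  have hpi : (Real.pi : ℂ) ≠ 0 := by exact_mod_cast Real.pi_ne_zero
  simp only [Function.comp]
  rw [hψ, hE']
  field_simp

lemma Lf_scale {m : ℕ} {S : Set (ℚ × ℚ)} {φ : ℂ → ℂ → ℂ} {E D : ℚ × ℚ → ℂ → ℂ}
    (hED : IsLaurentData m S φ E D) {s s' : ℚ × ℚ} (hs : s ∈ S) (hs' : s' ∈ S) {τ τ' : ℂ} (hτ : 0 < τ.im)
    (hτ' : 0 < τ'.im) (j c : ℂ) (hj : j ≠ 0)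
    (hφ : ∀ v, φ τ' (zpt s' τ' + v / j) * Wf m s τ v = c * Wf m s' τ' (v / j) * φ τ (zpt s τ + v))
    (z z' : ℂ) (hz : z' - zpt s' τ' = (z - zpt s τ) / j) :
    Lf m E D s' τ' z' * Wf m s τ (z - zpt s τ) = c * Wf m s' τ' ((z - zpt s τ) / j) * Lf m E D s τ z := by
  obtain ⟨hE, hD⟩ := laurent_scale hED hs hs' hτ hτ' j c hj hφ
  unfold Lf
  rw [hz]
  set v := z - zpt s τ
  have e1 : D s' τ' / (2 * (Real.pi : ℂ) * I * (v / j)) = c * (D s τ / (2 * (Real.pi : ℂ) * I * v)) := by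
    rw [← mul_div_assoc c, ← hD, ← mul_div_assoc, div_div_eq_mul_div]
  have e2 : E s' τ' / (2 * (Real.pi : ℂ) * I * (v / j)) ^ 2 = c * (E s τ / (2 * (Real.pi : ℂ) * I * v) ^ 2) := by
    rw [← mul_div_assoc c, ← hE, ← mul_div_assoc, div_pow, div_div_eq_mul_div]
  rw [e1, e2]; ring

lemma Lf_trans {k : ℤ} {m : ℕ} {S : Set (ℚ × ℚ)} (Φ : MeroJacobiForm k m S) 
    {E D : ℚ × ℚ → ℂ → ℂ} (hED : IsLaurentData m S Φ.toFun E D) {τ : ℂ} (hτ : 0 < τ.im)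
    {t : ℚ × ℚ} (ht : t ∈ S) (lam n : ℤ) (z : ℂ) :
    Lf m E D (t.1 + ((-lam : ℤ) : ℚ), t.2 + ((-n : ℤ) : ℚ)) τ z =
      ee ((m : ℂ) * (lam : ℂ) ^ 2 * τ + 2 * (m : ℂ) * (lam : ℂ) * z) * Lf m E D t τ (z + lam * τ + n) := by
  set s' : ℚ × ℚ := (t.1 + ((-lam : ℤ) : ℚ), t.2 + ((-n : ℤ) : ℚ)) with hs'
  have hz' : zpt s' τ = zpt t τ + ((-lam : ℤ) : ℂ) * τ + ((-n : ℤ) : ℂ) := zpt_add t (-lam) (-n) τ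
  set κ : ℂ := ee (-(m : ℂ) * ((t.1 : ℚ) * (-n) - (-lam) * (t.2 : ℚ) + lam * n)) with hκ
  have hτ0 : (τ.im : ℂ) ≠ 0 := by exact_mod_cast hτ.ne'
  have hW : ∀ v, Wf m s' τ v = κ * ee (-(m : ℂ) * (((-lam : ℤ) : ℂ) ^ 2 * τ + 2 * ((-lam : ℤ) : ℂ) * (zpt t τ + v))) * Wf m t τ v := by
    intro v
    unfold Wf
    rw [hκ, ← ee_add, ← ee_add, hz']
    have : ((s'.1 : ℚ) : ℂ) = t.1 - lam := by rw [hs']; push_cast; ring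
    rw [this]
    congr 1
    unfold zpt
    push_cast
    ring
  have h := Lf_scale hED ht (Φ.lattice_inv t ht (-lam) (-n)) hτ hτ 1 κ⁻¹ one_ne_zero (fun v => ?_)
    (z + lam * τ + n) z (by rw [← hs', hz']; push_cast; ring)
  · rw [← hs', div_one, hW] at h
    apply mul_right_cancel₀ (Wf_ne m t τ (z + lam * τ + n - zpt t τ))
    rw [h]
    have hk : κ⁻¹ * κ = 1 := inv_mul_cancel₀ (ee_ne_zero _)
    have e1 : ee (-(m : ℂ) * (((-lam : ℤ) : ℂ) ^ 2 * τ + 2 * ((-lam : ℤ) : ℂ) * (zpt t τ + (z + lam * τ + n - zpt t τ)))) =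
        ee ((m : ℂ) * (lam : ℂ) ^ 2 * τ + 2 * (m : ℂ) * (lam : ℂ) * z) := by
      rw [← ee_add_int ((m : ℂ) * (lam : ℂ) ^ 2 * τ + 2 * (m : ℂ) * (lam : ℂ) * z) (2 * m * lam * n)]
      congr 1; push_cast; ring
    rw [e1]
    linear_combination (ee ((m : ℂ) * (lam : ℂ) ^ 2 * τ + 2 * (m : ℂ) * (lam : ℂ) * z) * Wf m t τ (z + lam * τ + n - zpt t τ) *
      Lf m E D t τ (z + lam * τ + n)) * hk
  · rw [← hs', div_one, hW, hz', show zpt t τ + ((-lam : ℤ) : ℂ) * τ + ((-n : ℤ) : ℂ) + v =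
      zpt t τ + v + ((-lam : ℤ) : ℂ) * τ + ((-n : ℤ) : ℂ) by ring, Φ.elliptic τ hτ]
    have hk : κ⁻¹ * κ = 1 := inv_mul_cancel₀ (ee_ne_zero _)
    linear_combination (-(ee (-(m : ℂ) * (((-lam : ℤ) : ℂ) ^ 2 * τ + 2 * ((-lam : ℤ) : ℂ) * (zpt t τ + v))) * Wf m t τ v *
      Φ.toFun τ (zpt t τ + v))) * hk

lemma Lf_modular {k : ℤ} {m : ℕ} {S : Set (ℚ × ℚ)} (Φ : MeroJacobiForm k m S) 
    {E D : ℚ × ℚ → ℂ → ℂ} (hED : IsLaurentData m S Φ.toFun E D) {τ τ' j : ℂ} (hτ : 0 < τ.im) (hτ' : 0 < τ'.im)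
    {a b c d : ℤ} (hdet : a * d - b * c = 1) (hj0 : j ≠ 0) (hj : j = c * τ + d) (ht : τ' = (a * τ + b) / j)
    {s : ℚ × ℚ} (hs : s ∈ S) (z : ℂ) :
    Lf m E D s τ' (z / j) = j ^ k * ee ((m : ℂ) * (c : ℂ) * z ^ 2 / j) *
      Lf m E D (s.1 * (a : ℚ) + s.2 * (c : ℚ), s.1 * (b : ℚ) + s.2 * (d : ℚ)) τ z := by
  set s' : ℚ × ℚ := (s.1 * (a : ℚ) + s.2 * (c : ℚ), s.1 * (b : ℚ) + s.2 * (d : ℚ)) with hs'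
  have hs'S : s' ∈ S := Φ.sl_inv s hs a b c d hdet
  have hdet' : (a : ℂ) * d - b * c = 1 := by exact_mod_cast hdet
  have hτ0 : (τ.im : ℂ) ≠ 0 := by exact_mod_cast hτ.ne'
  have hτ0' : (τ'.im : ℂ) ≠ 0 := by exact_mod_cast hτ'.ne'
  have hu : zpt s τ' = zpt s' τ / j := by
    have h1 : τ' * j = a * τ + b := by rw [ht]; field_simp
    rw [eq_div_iff hj0, hs']; unfold zpt; push_cast
    linear_combination (s.1 : ℂ) * h1 + (s.2 : ℂ) * hj
  have him : τ'.im * Complex.normSq j = τ.im := by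
    have h1 : τ' * j = a * τ + b := by rw [ht]; field_simp
    have h2 : (τ' * Complex.normSq j : ℂ) = (a * τ + b) * (starRingEnd ℂ) j := by
      rw [← Complex.mul_conj, ← h1]; ring
    have h3 := congrArg Complex.im h2
    rw [Complex.im_mul_ofReal] at h3
    rw [h3, hj]
    have hd : (a : ℝ) * d - b * c = 1 := by exact_mod_cast hdet
    simp
    linear_combination τ.im * hd
  have hI : I * m / (2 * (τ'.im : ℂ)) / j ^ 2 = I * m / (2 * (τ.im : ℂ)) + m * c / j := by
    have h1 : (τ.im : ℂ) = τ'.im * (j * (starRingEnd ℂ) j) := by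
      rw [Complex.mul_conj, ← him]; push_cast; ring
    have h2 : (starRingEnd ℂ) j = j - 2 * I * (c * τ.im) := by
      rw [hj]; apply Complex.ext <;> simp; ring
    have h3 : (τ'.im : ℂ) * (j * (j - 2 * I * (c * τ.im))) = τ.im := by rw [← h2, ← h1]
    field_simp
    linear_combination (-I * m) * h3 + (-2 * m * (τ'.im : ℂ) * j * c * τ.im) * Complex.I_sq
  have hW : ∀ v, Wf m s τ' (v / j) = ee ((m : ℂ) * c * (zpt s' τ + v) ^ 2 / j) * Wf m s' τ v := by
    intro v
    unfold Wf
    rw [← ee_add, hu]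
    congr 1
    have h1 : I * m / (2 * (τ'.im : ℂ)) * (v / j) ^ 2 = (I * m / (2 * (τ.im : ℂ)) + m * c / j) * v ^ 2 := by
      rw [← hI]; ring
    rw [h1]
    have h2 : (c : ℂ) * zpt s' τ - (s'.1 : ℚ) * j = -(s.1 : ℚ) := by
      rw [hj, hs']; unfold zpt; push_cast
      linear_combination (-(s.1 : ℚ) : ℂ) * hdet'
    have h3 : ((s.1 : ℚ) : ℂ) = (s'.1 : ℚ) * j - c * zpt s' τ := by linear_combination h2
    rw [h3]
    field_simp
    ring
  have h := Lf_scale hED hs'S hs hτ hτ' j (j ^ k) hj0 (fun v => ?_) z (z / j) (by rw [hu]; ring)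
  · rw [hW, show zpt s' τ + (z - zpt s' τ) = z by ring] at h
    apply mul_right_cancel₀ (Wf_ne m s' τ (z - zpt s' τ))
    rw [h]; ring
  · rw [hW, hu, ← add_div]
    have := Φ.modular τ hτ (zpt s' τ + v) a b c d hdet
    rw [← hj, ← ht] at this
    rw [this]; ring

lemma Wf_norm {m : ℕ} {τ : ℂ} (hτ : 0 < τ.im) (t : ℚ × ℚ) (lam n : ℤ) (z : ℂ) :
    ‖ee ((m : ℂ) * (lam : ℂ) ^ 2 * τ + 2 * (m : ℂ) * (lam : ℂ) * z) * Wf m t τ (z + lam * τ + n - zpt t τ)‖ =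
      Real.exp (2 * Real.pi * m * z.im ^ 2 / τ.im) *
        (Real.exp (-(Real.pi * (m * τ.im)) * ((z - zpt t τ).im / τ.im + lam) ^ 2) *
        Real.exp (-(Real.pi * (m / τ.im)) * (((z - zpt t τ).re + lam * τ.re) + n) ^ 2)) := by
  unfold Wf
  rw [← ee_add, norm_ee, ← Real.exp_add, ← Real.exp_add]
  congr 1
  set v := z + lam * τ + n - zpt t τ with hv
  have hu : (zpt t τ).im = t.1 * τ.im := zpt_im t τ
  have hv2 : v.im = z.im + lam * τ.im - t.1 * τ.im := by rw [hv]; simp [hu]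
  have hv1 : v.re = (z - zpt t τ).re + lam * τ.re + n := by rw [hv]; simp; ring
  have e1 : ((m : ℂ) * (lam : ℂ) ^ 2 * τ + 2 * (m : ℂ) * (lam : ℂ) * z + (-(m : ℂ) * (t.1 : ℚ) * zpt t τ -
      2 * m * (t.1 : ℚ) * v + I * m / (2 * (τ.im : ℂ)) * v ^ 2)).im =
      m * lam ^ 2 * τ.im + 2 * m * lam * z.im - m * t.1 * (t.1 * τ.im) - 2 * m * t.1 * v.im +
        m / (2 * τ.im) * (v.re ^ 2 - v.im ^ 2) := by
    have : (m : ℂ) * (lam : ℂ) ^ 2 * τ + 2 * (m : ℂ) * (lam : ℂ) * z + (-(m : ℂ) * (t.1 : ℚ) * zpt t τ -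
      2 * m * (t.1 : ℚ) * v + I * m / (2 * (τ.im : ℂ)) * v ^ 2) =
      ((m * lam ^ 2 : ℝ) : ℂ) * τ + ((2 * m * lam : ℝ) : ℂ) * z - ((m * t.1 : ℝ) : ℂ) * zpt t τ -
      ((2 * m * t.1 : ℝ) : ℂ) * v + ((m / (2 * τ.im) : ℝ) : ℂ) * (I * v ^ 2) := by push_cast; ring
    rw [this]
    simp only [Complex.add_im, Complex.sub_im, Complex.im_ofReal_mul, hu]
    have : (I * v ^ 2).im = v.re ^ 2 - v.im ^ 2 := by simp [pow_two]
    rw [this]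
  rw [e1, ← hv1, hv2, Complex.sub_im, hu]
  field_simp
  ring

lemma lattice_gauss_summable {m : ℕ} (hm : 0 < m) {τ : ℂ} (hτ : 0 < τ.im) (w : ℂ) :
    Summable (fun p : ℤ × ℤ => Real.exp (-(Real.pi * (m * τ.im)) * (w.im / τ.im + p.1) ^ 2) *
        Real.exp (-(Real.pi * (m / τ.im)) * ((w.re + p.1 * τ.re) + p.2) ^ 2)) := by
  have hm' : (0:ℝ) < m := by exact_mod_cast hm
  obtain ⟨C1, _, h1⟩ := gauss_sum_bdd (t := m * τ.im) (by positivity)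
  obtain ⟨C2, hC2, h2⟩ := gauss_sum_bdd (t := m / τ.im) (by positivity)
  have hnn : ∀ p : ℤ × ℤ, 0 ≤ Real.exp (-(Real.pi * (m * τ.im)) * (w.im / τ.im + p.1) ^ 2) *
        Real.exp (-(Real.pi * (m / τ.im)) * ((w.re + p.1 * τ.re) + p.2) ^ 2) :=
    fun p => (mul_pos (Real.exp_pos _) (Real.exp_pos _)).le
  refine (summable_prod_of_nonneg (Pi.le_def.2 hnn)).2 ⟨?_, ?_⟩
  · intro x
    exact (h2 (w.re + x * τ.re)).1.mul_left (Real.exp (-(Real.pi * (m * τ.im)) * (w.im / τ.im + x) ^ 2))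
  · refine Summable.of_nonneg_of_le (fun x => tsum_nonneg fun y => hnn (x, y)) (fun x => ?_)
      ((h1 (w.im / τ.im)).1.mul_right C2)
    dsimp only
    rw [tsum_mul_left]
    exact mul_le_mul_of_nonneg_left (h2 (w.re + x * τ.re)).2 (Real.exp_pos _).le

lemma Lf_summable {m : ℕ} (hm : 0 < m) {τ : ℂ} (hτ : 0 < τ.im) (E D : ℚ × ℚ → ℂ → ℂ) (t : ℚ × ℚ) (z : ℂ)
    (hz : ∀ lam n : ℤ, (lam : ℂ) * τ + (z - zpt t τ) ≠ n) :
    Summable (fun p : ℤ × ℤ => ee ((m : ℂ) * (p.1 : ℂ) ^ 2 * τ + 2 * (m : ℂ) * (p.1 : ℂ) * z) *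
      Lf m E D t τ (z + p.1 * τ + p.2)) := by
  obtain ⟨δ, hδ, hsep⟩ := lattice_sep hτ hz
  have hpi := Real.pi_pos
  set M : ℝ := ‖D t τ‖ / (2 * Real.pi * δ) + ‖E t τ‖ / (2 * Real.pi * δ) ^ 2 with hM
  refine Summable.of_norm_bounded (g := fun p : ℤ × ℤ => Real.exp (2 * Real.pi * m * z.im ^ 2 / τ.im) *
        (Real.exp (-(Real.pi * (m * τ.im)) * ((z - zpt t τ).im / τ.im + p.1) ^ 2) *
        Real.exp (-(Real.pi * (m / τ.im)) * (((z - zpt t τ).re + p.1 * τ.re) + p.2) ^ 2)) * M)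
    (((lattice_gauss_summable hm hτ (z - zpt t τ)).mul_left _).mul_right M) fun p => ?_
  unfold Lf
  rw [← mul_assoc, norm_mul, Wf_norm hτ]
  refine mul_le_mul_of_nonneg_left ?_ (by positivity)
  have hv : δ ≤ ‖z + p.1 * τ + p.2 - zpt t τ‖ := by
    have := hsep p.1 (-p.2)
    rw [show (p.1 : ℂ) * τ + (z - zpt t τ) - ((-p.2 : ℤ) : ℂ) = z + p.1 * τ + p.2 - zpt t τ by push_cast; ring] at this
    exact this
  have hn : ‖2 * (Real.pi : ℂ) * I * (z + p.1 * τ + p.2 - zpt t τ)‖ = 2 * Real.pi * ‖z + p.1 * τ + p.2 - zpt t τ‖ := by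
    simp [abs_of_pos hpi]
  have hle : 2 * Real.pi * δ ≤ 2 * Real.pi * ‖z + p.1 * τ + p.2 - zpt t τ‖ := by
    exact mul_le_mul_of_nonneg_left hv (by positivity)
  refine (norm_add_le _ _).trans (add_le_add ?_ ?_)
  · rw [norm_div, hn]
    exact div_le_div_of_nonneg_left (norm_nonneg _) (by positivity) hle
  · rw [norm_div, norm_pow, hn]
    exact div_le_div_of_nonneg_left (norm_nonneg _) (by positivity) (pow_le_pow_left₀ (by positivity) hle 2)

lemma Lf_class_sum {m : ℕ} (hm : 0 < m) {τ : ℂ} (hτ : 0 < τ.im) (E D : ℚ × ℚ → ℂ → ℂ) (t : ℚ × ℚ) (z : ℂ)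
    (hz : ∀ lam n : ℤ, (lam : ℂ) * τ + (z - zpt t τ) ≠ n) :
    HasSum (fun p : ℤ × ℤ => ee ((m : ℂ) * (p.1 : ℂ) ^ 2 * τ + 2 * (m : ℂ) * (p.1 : ℂ) * z) *
      Lf m E D t τ (z + p.1 * τ + p.2))
      (D t τ * (ee (-(m : ℂ) * (t.1 : ℚ) * zpt t τ) *
      AvT m (fG (m / τ.im) (2 * m * (t.1 : ℚ)) 1 (zpt t τ)) τ z) +
    E t τ * (ee (-(m : ℂ) * (t.1 : ℚ) * zpt t τ) *
      AvT m (fG (m / τ.im) (2 * m * (t.1 : ℚ)) 2 (zpt t τ)) τ z)) := by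
  have hm' : (0:ℝ) < m := by exact_mod_cast hm
  have hs := Lf_summable hm hτ E D t z hz
  set K := ee (-(m : ℂ) * (t.1 : ℚ) * zpt t τ) with hK
  have hinner : ∀ j, ∀ lam : ℤ, HasSum (fun n : ℤ => Gk (m / τ.im) (2 * m * (t.1 : ℚ)) j (lam * τ + z - zpt t τ + n))
      (fG (m / τ.im) (2 * m * (t.1 : ℚ)) j (zpt t τ) (lam * τ + z)) := by
    intro j lam
    have := (Gk_sum_diff (t := m / τ.im) (by positivity) (2 * m * (t.1 : ℚ)) j (fun _ => 1) (by simp)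
      (lam * τ + z - zpt t τ) (fun n => Or.inr ?_)).2.of_norm
    · simp only [one_mul] at this
      exact this.hasSum
    · intro h0
      apply hz lam (-n)
      push_cast
      linear_combination h0
  have hL : ∀ lam n : ℤ, Lf m E D t τ (z + lam * τ + n) =
      D t τ * (K * Gk (m / τ.im) (2 * m * (t.1 : ℚ)) 1 (lam * τ + z - zpt t τ + n)) +
      E t τ * (K * Gk (m / τ.im) (2 * m * (t.1 : ℚ)) 2 (lam * τ + z - zpt t τ + n)) := by
    intro lam n
    rw [hK, Wf_Gk, Wf_Gk]
    unfold Lf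
    rw [show (lam:ℂ) * τ + z - zpt t τ + n = z + lam * τ + n - zpt t τ by ring]
    ring
  have h1 : ∀ lam : ℤ, HasSum (fun n : ℤ => ee ((m : ℂ) * (lam : ℂ) ^ 2 * τ + 2 * (m : ℂ) * (lam : ℂ) * z) *
      Lf m E D t τ (z + lam * τ + n)) (ee ((m : ℂ) * (lam : ℂ) ^ 2 * τ + 2 * (m : ℂ) * (lam : ℂ) * z) *
      (D t τ * (K * fG (m / τ.im) (2 * m * (t.1 : ℚ)) 1 (zpt t τ) (lam * τ + z)) +
      E t τ * (K * fG (m / τ.im) (2 * m * (t.1 : ℚ)) 2 (zpt t τ) (lam * τ + z)))) := by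
    intro lam
    simp_rw [hL]
    exact ((((hinner 1 lam).mul_left K).mul_left (D t τ)).add (((hinner 2 lam).mul_left K).mul_left (E t τ))).mul_left _
  have h2 := hs.hasSum.prod_fiberwise h1
  have k1 := ((KD_G hm hτ (zpt t τ) (2 * m * (t.1 : ℚ)) 1 (Or.inl rfl)).summable hm hτ z hz).hasSum
  have k2 := ((KD_G hm hτ (zpt t τ) (2 * m * (t.1 : ℚ)) 2 (Or.inr rfl)).summable hm hτ z hz).hasSum
  have k3 := ((k1.mul_left K).mul_left (D t τ)).add ((k2.mul_left K).mul_left (E t τ))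
  have k4 := (hasSum_congr_C (fun lam => by ring)).1 k3 |>.unique h2
  have : D t τ * (K * AvT m (fG (m / τ.im) (2 * m * (t.1 : ℚ)) 1 (zpt t τ)) τ z) +
    E t τ * (K * AvT m (fG (m / τ.im) (2 * m * (t.1 : ℚ)) 2 (zpt t τ)) τ z) = _ := k4
  rw [this]
  exact hs.hasSum

def latE (t : ℚ × ℚ) (p : ℤ × ℤ) : ℚ × ℚ := (t.1 + ((-p.1 : ℤ) : ℚ), t.2 + ((-p.2 : ℤ) : ℚ))

lemma latE_inj (t : ℚ × ℚ) : Function.Injective (latE t) := by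
  intro p q h
  unfold latE at h
  have h1 := congrArg Prod.fst h
  have h2 := congrArg Prod.snd h
  simp only [add_right_inj, Int.cast_inj, neg_inj] at h1 h2
  exact Prod.ext h1 h2

lemma Lf_hasSum {k : ℤ} {m : ℕ} (hm : 0 < m) {S : Set (ℚ × ℚ)} (Φ : MeroJacobiForm k m S) {T : Finset (ℚ × ℚ)}
    (hT : IsRepSet S T) {E D : ℚ × ℚ → ℂ → ℂ} (hED : IsLaurentData m S Φ.toFun E D) {τ : ℂ} (hτ : 0 < τ.im)
    {z : ℂ} (hz : ∀ s ∈ S, z ≠ zpt s τ) :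
    HasSum ((fun s => Lf m E D s τ z) ∘ (Subtype.val : S → ℚ × ℚ)) (Lsum m T E D τ z) := by
  have hU : S = ⋃ t ∈ T, Set.range (latE t) := by
    ext s
    simp only [Set.mem_iUnion, Set.mem_range]
    constructor
    · intro hs
      obtain ⟨t, ⟨ht, lam, mu, h1, h2⟩, _⟩ := hT.2 s hs
      refine ⟨t, ht, (-lam, -mu), ?_⟩
      unfold latE
      simp only [neg_neg]
      rw [← h1, ← h2]
    · rintro ⟨t, ht, p, rfl⟩
      exact Φ.lattice_inv t (hT.1 ht) (-p.1) (-p.2)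
  have hdis : (T : Set (ℚ × ℚ)).Pairwise (Function.onFun Disjoint fun t => Set.range (latE t)) := by
    intro t ht t' ht' hne
    rw [Function.onFun, Set.disjoint_left]
    rintro s ⟨p, hp⟩ ⟨q, hq⟩
    apply hne
    have hs : s ∈ S := by rw [← hp]; exact Φ.lattice_inv t (hT.1 ht) (-p.1) (-p.2)
    exact (hT.2 s hs).unique ⟨ht, -p.1, -p.2, by rw [← hp]; rfl, by rw [← hp]; rfl⟩
      ⟨ht', -q.1, -q.2, by rw [← hq]; rfl, by rw [← hq]; rfl⟩
  have key := hasSum_sum_disjoint (f := fun s => Lf m E D s τ z) T (t := fun t => Set.range (latE t))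
    (a := fun t => D t τ * (ee (-(m : ℂ) * (t.1 : ℚ) * zpt t τ) *
      AvT m (fG (m / τ.im) (2 * m * (t.1 : ℚ)) 1 (zpt t τ)) τ z) +
    E t τ * (ee (-(m : ℂ) * (t.1 : ℚ) * zpt t τ) *
      AvT m (fG (m / τ.im) (2 * m * (t.1 : ℚ)) 2 (zpt t τ)) τ z)) hdis (fun t ht => by
        refine ((latE_inj t).hasSum_range_iff (f := fun s => Lf m E D s τ z)).2 ?_
        refine (hasSum_congr_C fun p => ?_).2
          (Lf_class_sum hm hτ E D t z (off_lattice Φ hz (hT.1 ht)))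
        exact Lf_trans Φ hED hτ (hT.1 ht) p.1 p.2 z)
  rw [← hU] at key
  exact key

lemma zpt_modular {τ τ' j : ℂ} {a b c d : ℤ} (hj0 : j ≠ 0) (hj : j = c * τ + d)
    (ht : τ' = (a * τ + b) / j) (s : ℚ × ℚ) :
    zpt s τ' = zpt (s.1 * (a : ℚ) + s.2 * (c : ℚ), s.1 * (b : ℚ) + s.2 * (d : ℚ)) τ / j := by
  have h1 : τ' * j = a * τ + b := by rw [ht]; field_simp
  rw [eq_div_iff hj0]; unfold zpt; push_cast
  linear_combination (s.1 : ℂ) * h1 + (s.2 : ℂ) * hj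

def slEquiv {k : ℤ} {m : ℕ} {S : Set (ℚ × ℚ)} (Φ : MeroJacobiForm k m S) {a b c d : ℤ}
    (hdet : a * d - b * c = 1) : S ≃ S where
  toFun s := ⟨(s.1.1 * (a : ℚ) + s.1.2 * (c : ℚ), s.1.1 * (b : ℚ) + s.1.2 * (d : ℚ)), Φ.sl_inv s.1 s.2 a b c d hdet⟩
  invFun s := ⟨(s.1.1 * ((d : ℤ) : ℚ) + s.1.2 * ((-c : ℤ) : ℚ), s.1.1 * ((-b : ℤ) : ℚ) + s.1.2 * (a : ℚ)),
    Φ.sl_inv s.1 s.2 d (-b) (-c) a (by linear_combination hdet)⟩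
  left_inv s := by
    have hd : (a : ℚ) * d - b * c = 1 := by exact_mod_cast hdet
    apply Subtype.ext
    apply Prod.ext
    · push_cast; linear_combination s.1.1 * hd
    · push_cast; linear_combination s.1.2 * hd
  right_inv s := by
    have hd : (a : ℚ) * d - b * c = 1 := by exact_mod_cast hdet
    apply Subtype.ext
    apply Prod.ext
    · push_cast; linear_combination s.1.1 * hd
    · push_cast; linear_combination s.1.2 * hd

lemma Lsum_modular {k : ℤ} {m : ℕ} (hm : 0 < m) {S : Set (ℚ × ℚ)} (Φ : MeroJacobiForm k m S) {T : Finset (ℚ × ℚ)}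
    (hT : IsRepSet S T) {E D : ℚ × ℚ → ℂ → ℂ} (hED : IsLaurentData m S Φ.toFun E D) {τ τ' j : ℂ} (hτ : 0 < τ.im)
    (hτ' : 0 < τ'.im) {a b c d : ℤ} (hdet : a * d - b * c = 1) (hj0 : j ≠ 0) (hj : j = c * τ + d)
    (ht : τ' = (a * τ + b) / j) {z : ℂ} (hz : ∀ s ∈ S, z ≠ zpt s τ) (hz' : ∀ s ∈ S, z / j ≠ zpt s τ') :
    Lsum m T E D τ' (z / j) = j ^ k * ee ((m : ℂ) * (c : ℂ) * z ^ 2 / j) * Lsum m T E D τ z := by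
  have h1 := Lf_hasSum hm Φ hT hED hτ' hz'
  have h2 := ((slEquiv Φ hdet).hasSum_iff.2 (Lf_hasSum hm Φ hT hED hτ hz)).mul_left
    (j ^ k * ee ((m : ℂ) * (c : ℂ) * z ^ 2 / j))
  refine h1.unique ((hasSum_congr_C fun s => ?_).2 h2)
  exact Lf_modular Φ hED hτ hτ' hdet hj0 hj ht s.2 z

lemma hat_modular {k : ℤ} {m : ℕ} (hm : 0 < m) {S : Set (ℚ × ℚ)} (Φ : MeroJacobiForm k m S) {T : Finset (ℚ × ℚ)}
    (hT : IsRepSet S T) {h : ℤ → ℂ → ℂ} (hh : IsCanonCoeff m Φ.toFun h)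
    {E D : ℚ × ℚ → ℂ → ℂ} (hED : IsLaurentData m S Φ.toFun E D) : ModularLaw k m (hatF m T h E D) := by
  intro τ hτ z a b c d hdet
  set j : ℂ := (c : ℂ) * τ + d with hj
  set τ' : ℂ := ((a : ℂ) * τ + b) / j with ht
  have hj0 : j ≠ 0 := by
    intro h0
    have hi := congrArg Complex.im h0
    have hr := congrArg Complex.re h0
    rw [hj] at hi hr
    simp at hi hr
    rcases hi with hc | hc
    · rw [hc] at hr
      simp at hr
      rw [hc, hr] at hdet
      simp at hdet
    · exact hτ.ne' hc
  have hτ' : 0 < τ'.im := by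
    have h1 : τ' * j = a * τ + b := by rw [ht]; field_simp
    have h2 : (τ' * Complex.normSq j : ℂ) = (a * τ + b) * (starRingEnd ℂ) j := by
      rw [← Complex.mul_conj, ← h1]; ring
    have h3 := congrArg Complex.im h2
    rw [Complex.im_mul_ofReal, hj] at h3
    have hd : (a : ℝ) * d - b * c = 1 := by exact_mod_cast hdet
    have h4 : τ'.im * Complex.normSq j = τ.im := by
      rw [hj, h3]
      simp
      linear_combination τ.im * hd
    have h5 : 0 < Complex.normSq j := Complex.normSq_pos.2 hj0
    rw [← h4] at hτ
    exact pos_of_mul_pos_left hτ h5.le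
  have hdense : Dense {z : ℂ | ∀ s ∈ S, z ≠ zpt s τ} := by
    have : {z : ℂ | ∀ s ∈ S, z ≠ zpt s τ} = ((fun s => zpt s τ) '' S)ᶜ := by
      ext z
      simp only [Set.mem_ofPred_eq, Set.mem_compl_iff, Set.mem_image, not_exists, not_and]
      exact forall₂_congr fun s _ => ⟨fun h h' => h h'.symm, fun h h' => h h'.symm⟩
    rw [this]
    exact (S.to_countable.image _).dense_compl ℝ
  have hcont : Continuous fun w : ℂ => ee ((m : ℂ) * (c : ℂ) * w ^ 2 / j) := by
    unfold ee; fun_prop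
  have hc1 : Continuous fun w : ℂ => hatF m T h E D τ' (w / j) :=
    (hat_diff hm T h E D hτ').continuous.comp (continuous_id.div_const j)
  have hc2 : Continuous fun w : ℂ => j ^ k * ee ((m : ℂ) * (c : ℂ) * w ^ 2 / j) * hatF m T h E D τ w :=
    (continuous_const.mul hcont).mul (hat_diff hm T h E D hτ).continuous
  refine congrFun (hc1.ext_on hdense hc2 fun w hw => ?_) z
  have hw' : ∀ s ∈ S, w / j ≠ zpt s τ' := by
    intro s hs h0
    rw [zpt_modular hj0 hj ht, div_left_inj' hj0] at h0
    exact hw _ (Φ.sl_inv s hs a b c d hdet) h0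
  dsimp only
  rw [hat_eq hm Φ hT hh hED hτ' hw', hat_eq hm Φ hT hh hED hτ hw,
    Lsum_modular hm Φ hT hED hτ hτ' hdet hj0 hj ht hw hw']
  have := Φ.modular τ hτ w a b c d hdet
  rw [← hj, ← ht] at this
  rw [this]; ring

lemma exists_rep {k : ℤ} {m : ℕ} {S : Set (ℚ × ℚ)} (Φ : MeroJacobiForm k m S) :
    ∃ T : Finset (ℚ × ℚ), IsRepSet S T := by
  refine ⟨Φ.finite_classes.toFinset, ?_, ?_⟩
  · intro s hs
    rw [Finset.mem_coe, Set.Finite.mem_toFinset] at hs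
    exact hs.1
  · intro s hs
    refine ⟨(s.1 + ((-⌊s.1⌋ : ℤ) : ℚ), s.2 + ((-⌊s.2⌋ : ℤ) : ℚ)), ⟨?_, ⌊s.1⌋, ⌊s.2⌋, by simp, by simp⟩, ?_⟩
    · rw [Set.Finite.mem_toFinset]
      refine ⟨Φ.lattice_inv s hs _ _, ?_, ?_, ?_, ?_⟩
      · push_cast; linarith [Int.floor_le s.1]
      · push_cast; linarith [Int.lt_floor_add_one s.1]
      · push_cast; linarith [Int.floor_le s.2]
      · push_cast; linarith [Int.lt_floor_add_one s.2]
    · rintro t ⟨ht, lam, mu, h1, h2⟩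
      rw [Set.Finite.mem_toFinset] at ht
      obtain ⟨_, p1, p2, p3, p4⟩ := ht
      have f1 : ⌊s.1⌋ = lam := by
        rw [Int.floor_eq_iff]; constructor <;> linarith
      have f2 : ⌊s.2⌋ = mu := by
        rw [Int.floor_eq_iff]; constructor <;> linarith
      apply Prod.ext
      · rw [f1]; push_cast; linarith
      · rw [f2]; push_cast; linarith

/-- Theorem (canonical decomposition and mock modularity, double poles): for a meromorphic
Jacobi form of weight `k` and index `m` with poles of order at most 2 supported on `S`:
(1) the canonical Fourier coefficients are `2m`-periodic and `φ` equals its finite part plus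
`∑_{s ∈ S/ℤ²} (D_s·A^s_m + E_s·B^s_m)` away from the poles; (2) the completed finite part
`φ̂^F = ∑_ℓ ĥ_ℓ·θ_{m,ℓ}` with `ĥ_ℓ = h_ℓ - ∑_s (D_s·Θ^{s,*}_{m,ℓ} + m·E_s·ϑ^{s,*}_{m,ℓ})`
transforms like a Jacobi form of weight `k` and index `m` as well as satisfying the
index-`m` elliptic law. -/
theorem meromorphic_jacobi_decomposition_double_poles (k : ℤ) (m : ℕ) (hm : 0 < m)
    (S : Set (ℚ × ℚ)) (Φ : MeroJacobiForm k m S) (hpoles : HasAtMostDoublePoles Φ)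
    (h : ℤ → ℂ → ℂ) (hh : IsCanonCoeff m Φ.toFun h)
    (E D : ℚ × ℚ → ℂ → ℂ) (hED : IsLaurentData m S Φ.toFun E D) :
    ((∀ l : ℤ, ∀ τ : ℂ, 0 < τ.im → h (l + 2 * (m : ℤ)) τ = h l τ) ∧
     (∀ T : Finset (ℚ × ℚ), IsRepSet S T → ∀ τ : ℂ, 0 < τ.im → ∀ z : ℂ,
        (∀ s ∈ S, z ≠ zpt s τ) →
        Φ.toFun τ z = finitePart m h τ z +
          ∑ t ∈ T, (D t τ * AppellA m t τ z + E t τ * AppellB m t τ z))) ∧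
    (∀ T : Finset (ℚ × ℚ), IsRepSet S T →
      ModularLaw k m (fun τ z =>
        ∑ l ∈ Finset.range (2 * m),
          (h (l : ℤ) τ -
              ∑ t ∈ T, (D t τ * ThStar m t (l : ℤ) τ + (m : ℂ) * E t τ * thSstar m t (l : ℤ) τ)) *
            jTheta m (l : ℤ) τ z)) := by
  refine ⟨⟨?_, ?_⟩, ?_⟩
  · intro l τ hτ
    obtain ⟨T, hT⟩ := exists_rep Φ
    exact Canon.periodic hm (fun z lam mu => Φ.elliptic τ hτ z lam mu) (phi_canon hm Φ hT hh hτ) l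
  · intro T hT τ hτ z hz
    exact part_one hm Φ hT hh hED hτ hz
  · intro T hT
    exact hat_modular hm Φ hT hh hED
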